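/- arXiv:0805.2140 — 12 statements merged into one kernel-verified Lean document; each statement's English description precedes it below -/
import Mathlib

section
/- Let A be a commutative ring and K its total quotient ring, i.e. the localization of A at the multiplicative set of nonzerodivisors. Let n ≥ 1 and let φ : Aⁿ → Aⁿ be an A-linear map with cokernel F. Then F ⊗_A K = 0 if and only if φ is injective. -/
/-- Let `A` be a commutative ring and `K = Localization (nonZeroDivisors A)`
its total quotient ring.  For `n ≥ 1` and an `A`-linear map `φ : Aⁿ → Aⁿ` with cokernel
`F = Aⁿ ⧸ range φ`, we have `F ⊗[A] K = 0` if and only if `φ` is injective. -/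
theorem statement1 {A : Type*} [CommRing A] (n : ℕ) (hn : 1 ≤ n)
    (φ : (Fin n → A) →ₗ[A] (Fin n → A)) :
    Subsingleton (TensorProduct A ((Fin n → A) ⧸ LinearMap.range φ)
        (Localization (nonZeroDivisors A))) ↔ Function.Injective φ := by
  set M := LinearMap.toMatrix' φ with hM
  have hφ : ∀ v, φ v = M.mulVec v := fun v => by
    rw [hM, LinearMap.toMatrix'_mulVec]
  have hinj : Function.Injective φ ↔ M.det ∈ nonZeroDivisors A := by
    rw [← Matrix.nonsingular_iff_det_mem_nonZeroDivisors, ← Matrix.linearIndependent_col_iff,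
      ← Matrix.mulVec_injective_iff]
    have : (φ : (Fin n → A) → (Fin n → A)) = M.mulVec := funext hφ
    rw [this]
  have hloc : IsLocalizedModule (nonZeroDivisors A)
      (TensorProduct.mk A (Localization (nonZeroDivisors A))
        ((Fin n → A) ⧸ LinearMap.range φ) 1) :=
    (isLocalizedModule_iff_isBaseChange (nonZeroDivisors A)
      (Localization (nonZeroDivisors A)) _).mpr (TensorProduct.isBaseChange _ _ _)
  rw [(TensorProduct.comm A _ _).toEquiv.subsingleton_congr,
    IsLocalizedModule.subsingleton_iff (nonZeroDivisors A)
      (TensorProduct.mk A (Localization (nonZeroDivisors A))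
        ((Fin n → A) ⧸ LinearMap.range φ) 1), hinj]
  constructor
  · intro h
    have h1 : ∀ i : Fin n, ∃ r ∈ nonZeroDivisors A, ∃ w, φ w = r • (Pi.single i 1 : Fin n → A) := by
      intro i
      obtain ⟨r, hr, h2⟩ := h (Submodule.Quotient.mk (Pi.single i 1))
      rw [← Submodule.Quotient.mk_smul, Submodule.Quotient.mk_eq_zero] at h2
      exact ⟨r, hr, h2⟩
    choose r hr w hw using h1
    have hmul : M * (Matrix.of w).transpose = Matrix.diagonal r := by
      ext j i
      have := congrFun (hw i) j
      rw [hφ] at this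
      simp only [Matrix.mulVec, dotProduct] at this
      simp only [Matrix.mul_apply, Matrix.transpose_apply, Matrix.of_apply, this]
      by_cases hij : j = i
      · subst hij; simp
      · simp [hij]
    have hd := congrArg Matrix.det hmul
    rw [Matrix.det_mul, Matrix.det_diagonal] at hd
    have : M.det * (Matrix.of w).transpose.det ∈ nonZeroDivisors A := by
      rw [hd]; exact prod_mem fun i _ => hr i
    exact (mul_mem_nonZeroDivisors.mp this).1
  · intro h m
    obtain ⟨v, rfl⟩ := Submodule.Quotient.mk_surjective _ m
    refine ⟨M.det, h, ?_⟩
    rw [← Submodule.Quotient.mk_smul, Submodule.Quotient.mk_eq_zero]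
    refine ⟨M.adjugate.mulVec v, ?_⟩
    rw [hφ, Matrix.mulVec_mulVec, Matrix.mul_adjugate, Matrix.smul_mulVec, Matrix.one_mulVec]
end

section
/- Let A be a commutative ring with total quotient ring K (the localization of A at the nonzerodivisors), and let K/A denote the quotient of K by the image of the canonical map A → K, viewed as an A-module. Let n ≥ 1 and let φ : Aⁿ → Aⁿ be an injective A-linear map with cokernel F (so F is a torsion module with few relations). Define the Pontryagin dual of an A-module M as M† = Hom_A(M, K/A). Then the canonical evaluation map F → (F†)†, sending x to the homomorphism u ↦ u(x), is an isomorphism of A-modules. -/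
/-- The total quotient ring of a commutative ring `A`: the localization of `A` at the
multiplicative set of nonzerodivisors. -/
abbrev TotalQuotientRing (A : Type*) [CommRing A] : Type _ :=
  Localization (nonZeroDivisors A)

/-- The `A`-module `K/A`, the quotient of the total quotient ring `K` by the image of the
canonical map `A → K`. -/
abbrev KModA (A : Type*) [CommRing A] : Type _ :=
  TotalQuotientRing A ⧸ LinearMap.range (Algebra.linearMap A (TotalQuotientRing A))

open Matrix in
lemma mccoy_step {A : Type*} [CommRing A] {n : ℕ} (M : Matrix (Fin n) (Fin n) A)
    (hM : ∀ v, M *ᵥ v = 0 → v = 0) (a : A) (k : ℕ) (hk : k < n)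
    (H : ∀ r c : Fin (k+1) → Fin n, a * (M.submatrix r c).det = 0)
    (r c : Fin k → Fin n) : a * (M.submatrix r c).det = 0 := by
  obtain ⟨j, hj⟩ : ∃ j, ∀ l, c l ≠ j := by
    by_contra! h
    have := Fintype.card_le_of_surjective c h
    simp at this
    omega
  let c' : Fin (k+1) → Fin n := Fin.cons j c
  let w : Fin (k+1) → A := fun l => (-1)^(l : ℕ) * (M.submatrix r (c' ∘ l.succAbove)).det
  let v : Fin n → A := ∑ l, Pi.single (c' l) (a * w l)
  have hv : v = 0 := by
    apply hM
    ext i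
    have h1 := H (Fin.cons i r) c'
    rw [Matrix.det_succ_row_zero, Finset.mul_sum] at h1
    simp only [v, Matrix.mulVec_sum, Finset.sum_apply, Matrix.mulVec_single, Pi.zero_apply]
    rw [← h1]
    refine Finset.sum_congr rfl fun l _ => ?_
    have : (M.submatrix (Fin.cons i r : Fin (k+1) → Fin n) c').submatrix Fin.succ l.succAbove
      = M.submatrix r (c' ∘ l.succAbove) := by
      ext x y; simp
    rw [this]
    simp [w]
    ring
  have h2 := congrFun hv j
  simp only [v, Finset.sum_apply, Pi.zero_apply] at h2
  rw [Fin.sum_univ_succ] at h2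
  rw [Finset.sum_eq_zero] at h2
  · have : c' ∘ Fin.succ = c := by ext x; simp [c']
    simpa [c', w, Fin.succAbove_zero, this] using h2
  · intro l _
    simp only [c', Fin.cons_succ]
    rw [Pi.single_eq_of_ne (hj l).symm]

open Matrix in
lemma mccoy {A : Type*} [CommRing A] {n : ℕ} (M : Matrix (Fin n) (Fin n) A)
    (hM : ∀ v, M *ᵥ v = 0 → v = 0) : M.det ∈ nonZeroDivisors A := by
  rw [mem_nonZeroDivisors_iff_right]
  intro a ha
  have H : ∀ m k, k + m = n → ∀ r c : Fin k → Fin n, a * (M.submatrix r c).det = 0 := by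
    intro m
    induction m with
    | zero =>
      rintro k rfl r c
      by_cases hr : Function.Injective r
      · by_cases hc : Function.Injective c
        · let er := Equiv.ofBijective r (Finite.injective_iff_bijective.mp hr)
          let ec := Equiv.ofBijective c (Finite.injective_iff_bijective.mp hc)
          have : M.submatrix r c = ((M.submatrix id ec).submatrix er id) := by
            ext; simp [er, ec]
          rw [this, Matrix.det_permute, Matrix.det_permute']
          linear_combination ((Equiv.Perm.sign er : ℤ) : A) * ((Equiv.Perm.sign ec : ℤ) : A) * ha
        · simp only [Function.Injective, not_forall] at hc
          obtain ⟨x, y, h, hne⟩ := hc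
          rw [Matrix.det_zero_of_column_eq hne (fun i => by simp [h]), mul_zero]
      · simp only [Function.Injective, not_forall] at hr
        obtain ⟨x, y, h, hne⟩ := hr
        rw [Matrix.det_zero_of_row_eq hne (by ext i; simp [h]), mul_zero]
    | succ m ih =>
      intro k hk r c
      exact mccoy_step M hM a k (by omega) (ih (k+1) (by omega)) r c
  simpa using H n 0 (by simp) Fin.elim0 Fin.elim0

/-- The class of `1/d` in `K/A`. -/
noncomputable def kap {A : Type*} [CommRing A] (d : nonZeroDivisors A) : KModA A :=
  Submodule.Quotient.mk (IsLocalization.mk' (TotalQuotientRing A) (1 : A) d)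

lemma kap_smul_eq_zero {A : Type*} [CommRing A] (d : nonZeroDivisors A) (a : A) :
    a • kap d = 0 ↔ ∃ b, a = d * b := by
  unfold kap
  rw [← Submodule.Quotient.mk_smul, Submodule.Quotient.mk_eq_zero]
  have h : a • (IsLocalization.mk' (TotalQuotientRing A) (1 : A) d)
      = IsLocalization.mk' (TotalQuotientRing A) a d := by
    rw [Algebra.smul_def, IsLocalization.mul_mk'_eq_mk'_of_mul, mul_one]
  rw [h]
  simp only [LinearMap.mem_range, Algebra.linearMap_apply]
  refine exists_congr fun b => ?_
  rw [eq_comm, IsLocalization.mk'_eq_iff_eq_mul, ← map_mul,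
    (IsLocalization.injective (TotalQuotientRing A) le_rfl).eq_iff, mul_comm]

open Matrix in
lemma lift_sol {A : Type*} [CommRing A] {n : ℕ} (M : Matrix (Fin n) (Fin n) A)
    (hd : M.det ∈ nonZeroDivisors A) (c : Fin n → KModA A)
    (hc : ∀ j, ∑ i, M j i • c i = 0) :
    ∃ x : Fin n → A, ∀ i, c i = (M.adjugate *ᵥ x) i • kap ⟨M.det, hd⟩ := by
  choose k hk using fun i => Submodule.Quotient.mk_surjective _ (c i)
  have h1 : ∀ j, ∃ x : A, algebraMap A (TotalQuotientRing A) x = ∑ i, M j i • k i := by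
    intro j
    have := hc j
    simp only [← hk, ← Submodule.Quotient.mk_smul] at this
    simp only [← Submodule.mkQ_apply] at this
    rw [← map_sum, Submodule.mkQ_apply, Submodule.Quotient.mk_eq_zero] at this
    simpa using this
  choose x hx using h1
  refine ⟨x, fun i => ?_⟩
  rw [← hk i]
  unfold kap
  rw [← Submodule.Quotient.mk_smul]
  congr 1
  rw [Algebra.smul_def, IsLocalization.mul_mk'_eq_mk'_of_mul, mul_one, eq_comm,
    IsLocalization.mk'_eq_iff_eq_mul]
  simp only [Matrix.mulVec, dotProduct, map_sum, map_mul, hx, Finset.mul_sum]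
  rw [Finset.sum_comm]
  have h2 : ∀ l, ∑ j, M.adjugate i j * M j l = if i = l then M.det else 0 := by
    intro l
    have := congrFun (congrFun (Matrix.adjugate_mul M) i) l
    simpa [Matrix.mul_apply, Matrix.one_apply] using this
  have h3 : ∀ l, ∑ j, algebraMap A (TotalQuotientRing A) (M.adjugate i j) * M j l • k l
      = (if i = l then algebraMap A (TotalQuotientRing A) M.det * k i else 0) := by
    intro l
    simp only [Algebra.smul_def, ← mul_assoc, ← map_mul]
    rw [← Finset.sum_mul, ← map_sum, h2]
    split_ifs with h <;> simp [h]
  simp only [h3, Finset.sum_ite_eq, Finset.mem_univ, if_true]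
  ring

open Matrix in
/-- Let `A` be a commutative ring, `K` its total quotient ring and
`K/A` the quotient `A`-module.  Let `φ : Aⁿ → Aⁿ` (`n ≥ 1`) be an injective `A`-linear
map with cokernel `F` (a torsion module with few relations).  Writing `M† = Hom_A(M, K/A)`
for the Pontryagin dual, the canonical evaluation map `F → (F†)†`, `x ↦ (u ↦ u x)`,
is an isomorphism of `A`-modules. -/
theorem statement2 {A : Type*} [CommRing A] (n : ℕ) (hn : 1 ≤ n)
    (φ : (Fin n → A) →ₗ[A] (Fin n → A)) (hφ : Function.Injective φ) :
    ∃ e : ((Fin n → A) ⧸ LinearMap.range φ) →ₗ[A]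
        ((((Fin n → A) ⧸ LinearMap.range φ) →ₗ[A] KModA A) →ₗ[A] KModA A),
      (∀ (x : (Fin n → A) ⧸ LinearMap.range φ)
          (u : ((Fin n → A) ⧸ LinearMap.range φ) →ₗ[A] KModA A), e x u = u x) ∧
      Function.Bijective e := by
  refine ⟨LinearMap.flip LinearMap.id, fun x u => rfl, ?_⟩
  obtain ⟨M, hM⟩ : ∃ M : Matrix (Fin n) (Fin n) A, ∀ v, φ v = M *ᵥ v :=
    ⟨LinearMap.toMatrix' φ, fun v => by simp⟩
  have hd : M.det ∈ nonZeroDivisors A := mccoy M fun v hv => hφ (by rw [hM, hv, map_zero])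
  let κ := kap ⟨M.det, hd⟩
  have hκ : ∀ a : A, M.det • (a • κ) = 0 := fun a => by
    rw [smul_smul]; exact (kap_smul_eq_zero _ _).2 ⟨a, rfl⟩
  let u : Fin n → (((Fin n → A) ⧸ LinearMap.range φ) →ₗ[A] KModA A) := fun i =>
    (LinearMap.range φ).liftQ
      (((LinearMap.proj i).comp M.adjugate.mulVecLin).smulRight κ) (by
        rintro _ ⟨y, rfl⟩
        rw [LinearMap.mem_ker, hM]
        simp only [LinearMap.smulRight_apply, LinearMap.comp_apply, Matrix.mulVecLin_apply,
          LinearMap.proj_apply, Matrix.mulVec_mulVec, Matrix.adjugate_mul, Matrix.smul_mulVec,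
          Matrix.one_mulVec, Pi.smul_apply, smul_eq_mul]
        exact (kap_smul_eq_zero _ _).2 ⟨y i, rfl⟩)
  have hu : ∀ i x, u i (Submodule.Quotient.mk x) = (M.adjugate *ᵥ x) i • κ := fun i x => rfl
  constructor
  · rw [injective_iff_map_eq_zero]
    intro x hx
    obtain ⟨x, rfl⟩ := Submodule.Quotient.mk_surjective _ x
    have h1 : ∀ i, ∃ b, (M.adjugate *ᵥ x) i = M.det * b := fun i => by
      rw [← kap_smul_eq_zero ⟨M.det, hd⟩]
      exact LinearMap.congr_fun hx (u i)
    choose y hy using h1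
    rw [Submodule.Quotient.mk_eq_zero]
    refine ⟨y, ?_⟩
    have h2 : M *ᵥ (M.adjugate *ᵥ x) = M *ᵥ (M.det • y) := by
      congr 1; ext i; exact hy i
    rw [Matrix.mulVec_mulVec, Matrix.mul_adjugate, Matrix.smul_mulVec, Matrix.one_mulVec,
      Matrix.mulVec_smul] at h2
    rw [hM]
    ext i
    have h3 := congrFun h2 i
    simp only [Pi.smul_apply, smul_eq_mul] at h3
    exact ((mul_cancel_left_mem_nonZeroDivisors hd).1 h3).symm
  · intro g
    have hgen : ∀ f : ((Fin n → A) ⧸ LinearMap.range φ) →ₗ[A] KModA A,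
        ∃ a : Fin n → A, f = ∑ i, a i • u i := by
      intro f
      obtain ⟨a, ha⟩ := lift_sol Mᵀ (by rwa [Matrix.det_transpose])
        (fun j => f (Submodule.Quotient.mk (Pi.single j 1))) (by
          intro i
          have h : f (Submodule.Quotient.mk (φ (Pi.single i 1))) = 0 := by
            rw [(Submodule.Quotient.mk_eq_zero _).2 (LinearMap.mem_range_self φ _), map_zero]
          rw [← h]
          simp only [← Submodule.mkQ_apply, ← map_smul, ← map_sum]
          congr 2
          rw [hM]
          ext l
          simp [Pi.single_apply, Finset.sum_apply])
      refine ⟨a, ?_⟩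
      apply Submodule.linearMap_qext
      apply LinearMap.pi_ext'
      intro j
      ext
      simp only [LinearMap.comp_apply, Submodule.mkQ_apply, LinearMap.single_apply]
      rw [ha j]
      simp only [LinearMap.sum_apply, LinearMap.smul_apply, hu, Matrix.det_transpose, smul_smul]
      rw [← Finset.sum_smul]
      congr 1
      rw [← Matrix.adjugate_transpose]
      simp [Matrix.mulVec, dotProduct, mul_comm, Pi.single_apply]
    obtain ⟨x, hx⟩ := lift_sol M hd (fun i => g (u i)) (by
      intro j
      suffices hz : ∑ i, M j i • u i = 0 by
        have h := congrArg g hz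
        rw [map_sum, map_zero] at h
        rw [← h]
        exact Finset.sum_congr rfl fun i _ => (map_smul g _ _).symm
      apply Submodule.linearMap_qext
      refine LinearMap.ext fun x => ?_
      simp only [LinearMap.comp_apply, Submodule.mkQ_apply, LinearMap.sum_apply,
        LinearMap.smul_apply, hu, smul_smul, LinearMap.zero_apply]
      rw [← Finset.sum_smul]
      refine (kap_smul_eq_zero _ _).2 ⟨x j, ?_⟩
      have h : (M *ᵥ (M.adjugate *ᵥ x)) j = M.det * x j := by
        rw [Matrix.mulVec_mulVec, Matrix.mul_adjugate, Matrix.smul_mulVec, Matrix.one_mulVec]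
        rfl
      exact h)
    refine ⟨Submodule.Quotient.mk x, ?_⟩
    ext f
    obtain ⟨a, rfl⟩ := hgen f
    show (∑ i, a i • u i) (Submodule.Quotient.mk x) = _
    simp only [LinearMap.sum_apply, LinearMap.smul_apply, map_sum, map_smul, hu, hx]
    rfl
end

section
/- Let A be a commutative ring with total quotient ring K (localization of A at the nonzerodivisors), and set K/A = coker(A → K) as an A-module. Let n ≥ 1 and let φ : Aⁿ → Aⁿ be an injective A-linear map with cokernel F and quotient map π : Aⁿ → F. Define Φ : Hom_A(Aⁿ, A) → Hom_A(F, K/A) as follows: for a linear form g on the source copy of Aⁿ and x ∈ F, choose a lift x̃ ∈ Aⁿ of x, a nonzerodivisor a ∈ A, and y ∈ Aⁿ with φ(y) = a·x̃, and set Φ(g)(x) = class of g(y)/a in K/A. Then Φ is a well-defined surjective A-linear map, the transpose map φᵀ : Hom_A(Aⁿ, A) → Hom_A(Aⁿ, A) (precomposition with φ) is injective, and the kernel of Φ equals the image of φᵀ; i.e. the sequence 0 → (Aⁿ)∨ → (Aⁿ)∨ → Hom_A(F, K/A) → 0 is exact. -/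
theorem exists_adj_aux {A : Type*} [CommRing A] (n : ℕ)
    (φ : (Fin n → A) →ₗ[A] (Fin n → A)) (hφ : Function.Injective φ) :
    ∃ (d : A) (ψ : (Fin n → A) →ₗ[A] (Fin n → A)), d ∈ nonZeroDivisors A ∧
      (∀ x, φ (ψ x) = d • x) ∧ (∀ x, ψ (φ x) = d • x) := by
  have hM : ∀ x, φ x = (LinearMap.toMatrix' φ).mulVec x := fun x => by
    rw [LinearMap.toMatrix'_mulVec]
  refine ⟨(LinearMap.toMatrix' φ).det, Matrix.toLin' (LinearMap.toMatrix' φ).adjugate, ?_, ?_, ?_⟩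
  · rw [← Matrix.nonsingular_iff_det_mem_nonZeroDivisors]
    apply Matrix.Nonsingular.of_linearIndependent_col
    rw [← Matrix.mulVec_injective_iff]
    intro x y h
    apply hφ
    rw [hM, hM]
    exact h
  · intro x
    rw [hM, Matrix.toLin'_apply, Matrix.mulVec_mulVec, Matrix.mul_adjugate, Matrix.smul_mulVec,
      Matrix.one_mulVec]
  · intro x
    rw [hM, Matrix.toLin'_apply, Matrix.mulVec_mulVec, Matrix.adjugate_mul, Matrix.smul_mulVec,
      Matrix.one_mulVec]

/-- Let `A` be a commutative ring with total quotient ring `K`, and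
`K/A = coker (A → K)`.  Let `φ : Aⁿ → Aⁿ` (`n ≥ 1`) be an injective `A`-linear map with
cokernel `F`.  There is a (well-defined) `A`-linear map `Φ : (Aⁿ)∨ → Hom_A(F, K/A)`
with `Φ g (π xt) = class of g(y)/a` whenever `a` is a nonzerodivisor and `φ y = a • xt`;
moreover `Φ` is surjective, the transpose `φᵀ : (Aⁿ)∨ → (Aⁿ)∨` is injective, and
`ker Φ = range φᵀ`, i.e. `0 → (Aⁿ)∨ → (Aⁿ)∨ → Hom_A(F, K/A) → 0` is exact. -/
theorem statement3 {A : Type*} [CommRing A] (n : ℕ) (hn : 1 ≤ n)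
    (φ : (Fin n → A) →ₗ[A] (Fin n → A)) (hφ : Function.Injective φ) :
    ∃ Φ : ((Fin n → A) →ₗ[A] A) →ₗ[A]
        (((Fin n → A) ⧸ LinearMap.range φ) →ₗ[A] KModA A),
      (∀ (g : (Fin n → A) →ₗ[A] A) (xt : Fin n → A) (a : A) (ha : a ∈ nonZeroDivisors A)
          (y : Fin n → A), φ y = a • xt →
          Φ g (Submodule.Quotient.mk xt) =
            Submodule.Quotient.mk
              (IsLocalization.mk' (TotalQuotientRing A) (g y) (⟨a, ha⟩ : nonZeroDivisors A))) ∧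
      Function.Surjective Φ ∧
      Function.Injective (Module.Dual.transpose (R := A) φ) ∧
      LinearMap.ker Φ = LinearMap.range (Module.Dual.transpose (R := A) φ) := by
  obtain ⟨d, ψ, hd, h1, h2⟩ := exists_adj_aux n φ hφ
  let K := TotalQuotientRing A
  let D : nonZeroDivisors A := ⟨d, hd⟩
  let c : K := IsLocalization.mk' K 1 D
  have hc : ∀ r : A, r • c = IsLocalization.mk' K r D := fun r => by
    rw [Algebra.smul_def, IsLocalization.mul_mk'_eq_mk'_of_mul, mul_one]
  have hcd : ∀ r : A, (d * r) • c = algebraMap A K r := fun r => by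
    rw [hc, IsLocalization.mk'_eq_iff_eq_mul, ← map_mul, mul_comm]
  have hinj : Function.Injective (algebraMap A K) := IsLocalization.injective K le_rfl
  have hcancel : ∀ r s : A, d * r = d * s → r = s := fun r s h => by
    apply hinj
    rw [← hcd, ← hcd, h]
  let N := LinearMap.range (Algebra.linearMap A K)
  let L : A →ₗ[A] KModA A := N.mkQ ∘ₗ LinearMap.toSpanSingleton A K c
  have hL : ∀ r, L r = Submodule.Quotient.mk (r • c) := fun r => rfl
  have hL0 : ∀ r, L r = 0 ↔ ∃ s, r = d * s := fun r => by
    rw [hL, Submodule.Quotient.mk_eq_zero]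
    constructor
    · rintro ⟨s, hs⟩
      refine ⟨s, hinj ?_⟩
      rw [Algebra.linearMap_apply, hc, eq_comm, IsLocalization.mk'_eq_iff_eq_mul, ← map_mul] at hs
      rw [hs, mul_comm]
    · rintro ⟨s, rfl⟩
      exact ⟨s, by rw [hcd]; rfl⟩
  let Φ : ((Fin n → A) →ₗ[A] A) →ₗ[A] (((Fin n → A) ⧸ LinearMap.range φ) →ₗ[A] KModA A) :=
    { toFun := fun g => (LinearMap.range φ).liftQ (L ∘ₗ g ∘ₗ ψ) (by
        rintro _ ⟨z, rfl⟩
        change L (g (ψ (φ z))) = 0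
        rw [h2, map_smul, hL0]
        exact ⟨g z, rfl⟩)
      map_add' := fun g h => by
        apply Submodule.linearMap_qext
        refine LinearMap.ext fun x => ?_
        exact map_add L _ _
      map_smul' := fun r g => by
        apply Submodule.linearMap_qext
        refine LinearMap.ext fun x => ?_
        exact map_smul L r _ }
  have hΦ : ∀ g x, Φ g (Submodule.Quotient.mk x) = L (g (ψ x)) := fun g x => rfl
  refine ⟨Φ, ?_, ?_, ?_, ?_⟩
  · intro g x a ha y hy
    rw [hΦ, hL, hc]
    congr 1
    rw [IsLocalization.mk'_eq_iff_eq]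
    congr 1
    have : d • y = a • ψ x := by rw [← h2, hy, map_smul]
    have := congrArg g this
    rw [map_smul, map_smul] at this
    exact this.symm
  · intro f
    obtain ⟨k, hk⟩ := Module.projective_lifting_property N.mkQ (f ∘ₗ (LinearMap.range φ).mkQ)
      N.mkQ_surjective
    have hk' : ∀ x, Submodule.Quotient.mk (p := N) (k x) = f (Submodule.Quotient.mk x) :=
      fun x => LinearMap.congr_fun hk x
    have hr : ∀ x, ∃ r, algebraMap A K r = k (φ x) := fun x => by
      have : k (φ x) ∈ N := by
        rw [← Submodule.Quotient.mk_eq_zero, hk',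
          (Submodule.Quotient.mk_eq_zero _).2 (LinearMap.mem_range_self φ x), map_zero]
      exact this
    choose g hg using hr
    let G : (Fin n → A) →ₗ[A] A :=
      { toFun := g
        map_add' := fun x y => hinj (by rw [map_add, hg, hg, hg, map_add, map_add])
        map_smul' := fun r x => hinj (by
          rw [hg, RingHom.id_apply, smul_eq_mul, map_mul, hg, map_smul, map_smul,
            Algebra.smul_def]) }
    refine ⟨G, ?_⟩
    apply Submodule.linearMap_qext
    refine LinearMap.ext fun x => ?_
    change Φ G (Submodule.Quotient.mk x) = f (Submodule.Quotient.mk x)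
    rw [hΦ, hL, ← hk', hc]
    congr 1
    rw [IsLocalization.mk'_eq_iff_eq_mul]
    change algebraMap A K (g (ψ x)) = _
    rw [hg, h1, map_smul, Algebra.smul_def, mul_comm]
  · intro g h hgh
    refine LinearMap.ext fun x => ?_
    apply hcancel
    have := LinearMap.congr_fun hgh (ψ x)
    rw [Module.Dual.transpose_apply, Module.Dual.transpose_apply, LinearMap.comp_apply,
      LinearMap.comp_apply, h1, map_smul, map_smul] at this
    exact this
  · ext g
    rw [LinearMap.mem_ker]
    constructor
    · intro hg
      have hr : ∀ x, ∃ s, g (ψ x) = d * s := fun x => by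
        rw [← hL0, ← hΦ, hg, LinearMap.zero_apply]
      choose h hh using hr
      let H : (Fin n → A) →ₗ[A] A :=
        { toFun := h
          map_add' := fun x y => hcancel _ _ (by
            rw [← hh, mul_add, ← hh, ← hh, map_add, map_add])
          map_smul' := fun r x => hcancel _ _ (by
            rw [← hh, RingHom.id_apply, smul_eq_mul, mul_left_comm, ← hh, map_smul, map_smul,
              smul_eq_mul]) }
      refine ⟨H, ?_⟩
      refine LinearMap.ext fun x => ?_
      apply hcancel
      change d * h (φ x) = _
      rw [← hh, h2, map_smul, smul_eq_mul]
    · rintro ⟨h, rfl⟩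
      apply Submodule.linearMap_qext
      refine LinearMap.ext fun x => ?_
      change Φ _ (Submodule.Quotient.mk x) = 0
      rw [hΦ, hL0]
      refine ⟨h x, ?_⟩
      rw [Module.Dual.transpose_apply, LinearMap.comp_apply, h1, map_smul, smul_eq_mul]
end

section
/- Let k be a field, A = k[x,y] the polynomial ring in two variables, K = Frac(A) its field of fractions, and M = A/(x,y) the residue field of the origin viewed as an A-module. Then Hom_A(M, K/A) = 0, where K/A is the quotient of K by A as an A-module. -/
/-- Let `k` be a field, `A = k[x,y]`, `K = Frac(A)` and
`M = A/(x,y)`.  Then `Hom_A(M, K/A) = 0`, where `K/A` is the quotient of `K` by (the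
image of) `A` as an `A`-module. -/
theorem statement4 (k : Type*) [Field k] :
    Subsingleton
      ((MvPolynomial (Fin 2) k ⧸
          Ideal.span {(MvPolynomial.X 0 : MvPolynomial (Fin 2) k), MvPolynomial.X 1})
        →ₗ[MvPolynomial (Fin 2) k]
        (FractionRing (MvPolynomial (Fin 2) k) ⧸
          LinearMap.range (Algebra.linearMap (MvPolynomial (Fin 2) k)
            (FractionRing (MvPolynomial (Fin 2) k))))) := by
  have key : ∀ z : FractionRing (MvPolynomial (Fin 2) k),
      (∃ a, algebraMap (MvPolynomial (Fin 2) k) (FractionRing (MvPolynomial (Fin 2) k)) a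
        = algebraMap (MvPolynomial (Fin 2) k) _ (MvPolynomial.X 0) * z) →
      (∃ b, algebraMap (MvPolynomial (Fin 2) k) (FractionRing (MvPolynomial (Fin 2) k)) b
        = algebraMap (MvPolynomial (Fin 2) k) _ (MvPolynomial.X 1) * z) →
      ∃ c, algebraMap (MvPolynomial (Fin 2) k) (FractionRing (MvPolynomial (Fin 2) k)) c = z := by
    rintro z ⟨a, ha⟩ ⟨b, hb⟩
    have hinj := IsFractionRing.injective (MvPolynomial (Fin 2) k)
      (FractionRing (MvPolynomial (Fin 2) k))
    have h : MvPolynomial.X 1 * a = MvPolynomial.X 0 * b := by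
      apply hinj
      rw [map_mul, map_mul, ha, hb]
      ring
    have hd : (MvPolynomial.X 0 : MvPolynomial (Fin 2) k) ∣ MvPolynomial.X 1 * a := ⟨b, h⟩
    rcases MvPolynomial.X_dvd_mul_iff.mp hd with h1 | ⟨c, rfl⟩
    · exact absurd (MvPolynomial.X_dvd_X.mp h1) (by decide)
    · refine ⟨c, ?_⟩
      rw [map_mul] at ha
      refine mul_left_cancel₀ ?_ ha
      intro h0
      exact MvPolynomial.X_ne_zero (R := k) (0 : Fin 2) (hinj (h0.trans (map_zero _).symm))
  refine subsingleton_of_forall_eq 0 fun f => ?_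
  have hx : ∀ p ∈ Ideal.span {(MvPolynomial.X 0 : MvPolynomial (Fin 2) k), MvPolynomial.X 1},
      p • f (Submodule.Quotient.mk 1) = 0 := by
    intro p hp
    rw [← map_smul, ← Submodule.Quotient.mk_smul, smul_eq_mul, mul_one,
      (Submodule.Quotient.mk_eq_zero _).mpr hp, map_zero]
  have h1 : f (Submodule.Quotient.mk 1) = 0 := by
    obtain ⟨z, hz⟩ := Submodule.Quotient.mk_surjective _ (f (Submodule.Quotient.mk 1))
    have hm : ∀ p ∈ Ideal.span {(MvPolynomial.X 0 : MvPolynomial (Fin 2) k), MvPolynomial.X 1},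
        ∃ a, algebraMap (MvPolynomial (Fin 2) k) (FractionRing (MvPolynomial (Fin 2) k)) a
          = algebraMap _ _ p * z := by
      intro p hp
      have := hx p hp
      rw [← hz, ← Submodule.Quotient.mk_smul, Submodule.Quotient.mk_eq_zero] at this
      obtain ⟨a, ha⟩ := this
      exact ⟨a, by rw [← Algebra.smul_def]; exact ha⟩
    rw [← hz, Submodule.Quotient.mk_eq_zero]
    obtain ⟨c, hc⟩ := key z (hm _ (Ideal.subset_span (by simp)))
      (hm _ (Ideal.subset_span (by simp)))
    exact ⟨c, hc⟩
  refine LinearMap.ext fun m => ?_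
  obtain ⟨p, rfl⟩ := Submodule.Quotient.mk_surjective _ m
  have : (Submodule.Quotient.mk p : MvPolynomial (Fin 2) k ⧸
      Ideal.span {(MvPolynomial.X 0 : MvPolynomial (Fin 2) k), MvPolynomial.X 1})
      = p • Submodule.Quotient.mk 1 := by
    rw [← Submodule.Quotient.mk_smul, smul_eq_mul, mul_one]
  rw [this, map_smul, h1, smul_zero, LinearMap.zero_apply]
end

section
/- Let k be a field, A = k[x,y] the polynomial ring in two variables, and M = A/(x,y). Then for no n ≥ 1 does there exist an exact sequence of A-modules Aⁿ → Aⁿ → M → 0 (i.e. M admits no presentation by equally many generators and relations; M is a torsion module that does not have few relations). -/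
theorem aux_lift {A : Type*} [CommRing A] {n : ℕ} (φ : (Fin n → A) →ₗ[A] (Fin n → A)) (a : A)
    (h : ∀ v : Fin n → A, a • v ∈ LinearMap.range φ) : LinearMap.det φ ∣ a ^ n := by
  choose b hb using fun i : Fin n => h (Pi.basisFun A (Fin n) i)
  have key : φ ∘ₗ ((Pi.basisFun A (Fin n)).constr A b) = a • LinearMap.id := by
    refine (Pi.basisFun A (Fin n)).ext fun i => ?_
    rw [LinearMap.comp_apply, Module.Basis.constr_basis, hb]
    rfl
  refine ⟨LinearMap.det ((Pi.basisFun A (Fin n)).constr A b), ?_⟩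
  rw [← LinearMap.det_comp, key]
  cases subsingleton_or_nontrivial A
  · exact Subsingleton.elim _ _
  · rw [LinearMap.det_smul]
    simp

/-- Let `k` be a field, `A = k[x,y]` and `M = A/(x,y)`.  Then for no
`n ≥ 1` does there exist an exact sequence of `A`-modules `Aⁿ → Aⁿ → M → 0`:
`M` admits no presentation by equally many generators and relations. -/
theorem statement5 (k : Type*) [Field k] (n : ℕ) (hn : 1 ≤ n)
    (φ : (Fin n → MvPolynomial (Fin 2) k) →ₗ[MvPolynomial (Fin 2) k]
      (Fin n → MvPolynomial (Fin 2) k))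
    (ψ : (Fin n → MvPolynomial (Fin 2) k) →ₗ[MvPolynomial (Fin 2) k]
      (MvPolynomial (Fin 2) k ⧸
        Ideal.span {(MvPolynomial.X 0 : MvPolynomial (Fin 2) k), MvPolynomial.X 1})) :
    ¬ (Function.Surjective ψ ∧ LinearMap.ker ψ = LinearMap.range φ) := by
  generalize hI : Ideal.span {(MvPolynomial.X 0 : MvPolynomial (Fin 2) k), MvPolynomial.X 1} = I at ψ
  rintro ⟨hs, hk⟩
  have hmem : ∀ a ∈ I, LinearMap.det φ ∣ a ^ n := by
    intro a ha
    refine aux_lift φ a fun v => ?_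
    rw [← hk, LinearMap.mem_ker, map_smul]
    obtain ⟨w, hw⟩ := Ideal.Quotient.mk_surjective (ψ v)
    rw [← hw]
    exact Ideal.Quotient.eq_zero_iff_mem.2 (I.mul_mem_right w ha)
  have h0 := hmem (MvPolynomial.X 0) (hI ▸ Ideal.subset_span (by simp))
  have h1 := hmem (MvPolynomial.X 1) (hI ▸ Ideal.subset_span (by simp))
  have p0 : Prime (MvPolynomial.X 0 : MvPolynomial (Fin 2) k) := MvPolynomial.X_prime
  have hu : IsUnit (LinearMap.det φ) := by
    obtain ⟨i, -, hi⟩ := (dvd_prime_pow p0 n).1 h0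
    rcases Nat.eq_zero_or_pos i with rfl | hpos
    · rw [pow_zero] at hi
      exact associated_one_iff_isUnit.1 hi
    · exfalso
      have := p0.dvd_of_dvd_pow (((dvd_pow_self _ hpos.ne').trans hi.symm.dvd).trans h1)
      rw [MvPolynomial.X_dvd_X] at this
      simp at this
  have hr : LinearMap.range φ = ⊤ := by
    have := (LinearMap.isUnit_iff_isUnit_det φ).2 hu
    exact LinearMap.range_eq_top.2 ((Module.End.isUnit_iff φ).1 this).2
  obtain ⟨v, hv⟩ := hs 1
  have hz : ψ v = 0 := by
    rw [← LinearMap.mem_ker, hk, hr]; trivial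
  have h1I : (1 : MvPolynomial (Fin 2) k) ∈ I := by
    rw [← Ideal.Quotient.eq_zero_iff_mem, map_one, ← hv, hz]
  have hle : I ≤ RingHom.ker (MvPolynomial.constantCoeff (σ := Fin 2) (R := k)) := by
    rw [← hI, Ideal.span_le]
    rintro x (rfl | rfl) <;> simp [RingHom.mem_ker]
  have := hle h1I
  simp [RingHom.mem_ker] at this
end

section
/- Let A be a commutative ring and let f ∈ A[a, b, c] be a polynomial in three variables, viewed as a polynomial function on sl₂ via the matrix M(a,b,c) = [[a, b], [c, −a]]. Then the following are equivalent: (1) for every commutative A-algebra R, every g ∈ SL₂(R) and every (a₀, b₀, c₀) ∈ R³, writing g·M(a₀,b₀,c₀)·g⁻¹ = M(a₁,b₁,c₁), one has f(a₁,b₁,c₁) = f(a₀,b₀,c₀); (2) f lies in the A-subalgebra A[a² + bc] of A[a,b,c] generated by a² + bc. In other words, the ring of invariants A[sl₂]^{SL₂} equals A[det], where det(a,b,c) = −a² − bc. -/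
open MvPolynomial

universe u

/-- Let `A` be a commutative ring and `f ∈ A[a, b, c]` (with
`a = X 0`, `b = X 1`, `c = X 2`), viewed as a polynomial function on `sl₂` via
`M(a,b,c) = [[a, b], [c, −a]]`.  Then `f` is invariant under the conjugation action
of `SL₂(R)` for every commutative `A`-algebra `R` if and only if `f` lies in the
`A`-subalgebra generated by `a² + bc`; i.e. `A[sl₂]^{SL₂} = A[det]` with
`det = −a² − bc`. -/
theorem statement10 {A : Type u} [CommRing A] (f : MvPolynomial (Fin 3) A) :
    (∀ (R : Type u) [CommRing R] [Algebra A R]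
        (g : Matrix.SpecialLinearGroup (Fin 2) R) (v : Fin 3 → R)
        (N : Matrix (Fin 2) (Fin 2) R),
        N = (g : Matrix (Fin 2) (Fin 2) R) * !![v 0, v 1; v 2, -(v 0)] *
              ((g⁻¹ : Matrix.SpecialLinearGroup (Fin 2) R) : Matrix (Fin 2) (Fin 2) R) →
        aeval (![N 0 0, N 0 1, N 1 0] : Fin 3 → R) f = aeval v f) ↔
    f ∈ Algebra.adjoin A ({X 0 ^ 2 + X 1 * X 2} : Set (MvPolynomial (Fin 3) A)) := by
  constructor
  · intro H
    set D : MvPolynomial (Fin 3) A := X 0 ^ 2 + X 1 * X 2 with hD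
    let h : MvPolynomial (Fin 3) A := aeval ![0, 1, D] f
    have hmem : h ∈ Algebra.adjoin A ({D} : Set (MvPolynomial (Fin 3) A)) := by
      have hDm : D ∈ Algebra.adjoin A ({D} : Set (MvPolynomial (Fin 3) A)) :=
        Algebra.subset_adjoin rfl
      have : h = (Algebra.adjoin A ({D} : Set (MvPolynomial (Fin 3) A))).val
          (aeval ![0, 1, ⟨D, hDm⟩] f) := by
        rw [← AlgHom.comp_apply, comp_aeval]
        show aeval _ f = _
        congr 2
        ext i : 1
        fin_cases i <;> simp
      rw [this]
      exact Subtype.property _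
    suffices hf : f = h by rw [hf]; exact hmem
    rw [← sub_eq_zero]
    apply expand_injective (n := 2) (by norm_num)
    rw [map_zero]
    let L := Localization.Away (X 1 : MvPolynomial (Fin 3) A)
    let ι : MvPolynomial (Fin 3) A →ₐ[A] L := IsScalarTower.toAlgHom A _ L
    have hinj : Function.Injective ι := by
      apply IsLocalization.injective L (M := Submonoid.powers (X 1 : MvPolynomial (Fin 3) A))
      rw [Submonoid.powers_le]
      exact isRegular_X.mem_nonZeroDivisors
    apply hinj
    rw [map_zero, map_sub, map_sub, sub_eq_zero]
    let a := ι (X 0)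
    let s := ι (X 1)
    let c := ι (X 2)
    obtain ⟨t, ht⟩ : ∃ t, s * t = 1 :=
      (IsLocalization.Away.algebraMap_isUnit (S := L)
        (X 1 : MvPolynomial (Fin 3) A)).exists_right_inv
    have e1 : ι (expand 2 f) = aeval ![a ^ 2, s ^ 2, c ^ 2] f := by
      rw [expand, bind₁, ← AlgHom.comp_apply, comp_aeval]
      congr 2
      ext i : 1
      fin_cases i <;> simp [a, s, c]
    have e2 : ι (expand 2 h) = aeval ![0, 1, (a ^ 2) ^ 2 + s ^ 2 * c ^ 2] f := by
      show ι (expand 2 (aeval ![0, 1, D] f)) = _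
      rw [← AlgHom.comp_apply, ← AlgHom.comp_apply, comp_aeval]
      congr 2
      ext i : 1
      fin_cases i <;> simp [a, s, c, D]
    rw [e1, e2]
    let g : Matrix.SpecialLinearGroup (Fin 2) L :=
      ⟨!![s, 0; -(a ^ 2 * t), t], by simp [Matrix.det_fin_two, ht]⟩
    have hg : (g : Matrix (Fin 2) (Fin 2) L) = !![s, 0; -(a ^ 2 * t), t] := rfl
    have hgi : ((g⁻¹ : Matrix.SpecialLinearGroup (Fin 2) L) : Matrix (Fin 2) (Fin 2) L) =
        !![t, 0; a ^ 2 * t, s] := by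
      rw [Matrix.SpecialLinearGroup.coe_inv, hg, Matrix.adjugate_fin_two_of]
      simp
      exact neg_neg (a ^ 2 * t)
    clear_value g
    rw [← H L g ![0, 1, (a ^ 2) ^ 2 + s ^ 2 * c ^ 2] _ rfl]
    congr 2
    ext i : 1
    fin_cases i
    · simp [hg, hgi, Matrix.mul_apply,
        Fin.sum_univ_two]
      linear_combination (-a ^ 2) * ht
    · simp [hg, hgi, Matrix.mul_apply,
        Fin.sum_univ_two]
      try ring
    · simp [hg, hgi, Matrix.mul_apply,
        Fin.sum_univ_two]
      linear_combination (-c ^ 2 * (s * t + 1)) * ht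
  · intro hf R _ _ g v N hN
    have hdet : g.1 0 0 * g.1 1 1 - g.1 0 1 * g.1 1 0 = 1 := by
      rw [← Matrix.det_fin_two]; exact g.2
    induction hf using Algebra.adjoin_induction with
    | mem x hx =>
      rw [Set.mem_singleton_iff] at hx
      subst hx
      subst hN
      simp [Matrix.SpecialLinearGroup.coe_inv, Matrix.adjugate_fin_two, Matrix.mul_apply,
        Fin.sum_univ_two]
      generalize g.1 0 0 = p at *
      generalize g.1 0 1 = q at *
      generalize g.1 1 0 = r at *
      generalize g.1 1 1 = s at *
      linear_combination ((v 0 ^ 2 + v 1 * v 2) * (p * s - q * r + 1)) * hdet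
    | algebraMap r => simp
    | add x y _ _ hx hy => simp [hx, hy]
    | mul x y _ _ hx hy => simp [hx, hy]
end

section
/- Let A be a commutative ring with 2-torsion ideal A[2] = {x ∈ A : 2x = 0}, and let f ∈ A[α, b, c]. For a commutative A-algebra R and g = [[p, q], [r, s]] ∈ SL₂(R) (so ps − qr = 1), define the adjoint action of g on R³ by (α, b, c) ↦ (α + 2qrα + 2qsc − 2prb, p²b − q²c − pqα, s²c − r²b + rsα) (this is the conjugation action on psl₂, whose coordinate ring has generators α = 2a, b, c). Then f is invariant under this action for every commutative A-algebra R and every g ∈ SL₂(R) if and only if f = h₀(α² + 4bc) + α·h₁(α² + 4bc) for some polynomials h₀ ∈ A[T] and h₁ ∈ A[T] all of whose coefficients lie in A[2]. In other words, A[psl₂]^{PSL₂} = A[4det] + α·A[2][4det], with 4det = −α² − 4bc. -/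
open MvPolynomial

universe u

/-- invariance predicate -/
def PInv {A : Type u} [CommRing A] (f : MvPolynomial (Fin 3) A) : Prop :=
    (∀ (R : Type u) [CommRing R] [Algebra A R] (p q r s : R), p * s - q * r = 1 →
      ∀ v : Fin 3 → R,
        aeval (![v 0 + 2 * q * r * v 0 + 2 * q * s * v 2 - 2 * p * r * v 1,
                 p ^ 2 * v 1 - q ^ 2 * v 2 - p * q * v 0,
                 s ^ 2 * v 2 - r ^ 2 * v 1 + r * s * v 0] : Fin 3 → R) f = aeval v f)

lemma comp_zero_aux {S : Type*} [CommRing S] (P Q : Polynomial S) (hd : Q.natDegree ≠ 0)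
    (hl : Q.leadingCoeff ∈ nonZeroDivisors S) (h : P.comp Q = 0) : P = 0 := by
  have h1 := Polynomial.coeff_comp_degree_mul_degree (p := P) hd
  rw [h, Polynomial.coeff_zero] at h1
  have h2 := (mul_right_mem_nonZeroDivisors_eq_zero_iff (pow_mem hl P.natDegree)).1 h1.symm
  exact Polynomial.leadingCoeff_eq_zero.1 h2

lemma aeval_comp_aux {A S : Type*} [CommRing A] [CommRing S] [Algebra A S]
    (f : MvPolynomial (Fin 3) A) (Q : Polynomial S) (w : Fin 3 → Polynomial S) :
    (aeval w f).comp Q = aeval (fun i => (w i).comp Q) f :=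
  comp_aeval_apply (R := A) (f := w)
    ((Polynomial.aeval Q : Polynomial S →ₐ[S] Polynomial S).restrictScalars A) f

lemma pinv_form {A : Type u} [CommRing A] (h₀ h₁ : Polynomial A)
    (h : ∀ i : ℕ, 2 * h₁.coeff i = 0) :
    PInv (Polynomial.aeval (X 0 ^ 2 + 4 * (X 1 * X 2) : MvPolynomial (Fin 3) A) h₀ +
          X 0 * Polynomial.aeval (X 0 ^ 2 + 4 * (X 1 * X 2) : MvPolynomial (Fin 3) A) h₁) := by
  intro R _ _ p q r s hg v
  have key : ∀ (w : Fin 3 → R) (k : Polynomial A),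
      aeval w (Polynomial.aeval (X 0 ^ 2 + 4 * (X 1 * X 2) : MvPolynomial (Fin 3) A) k)
        = Polynomial.aeval (w 0 ^ 2 + 4 * (w 1 * w 2)) k := by
    intro w k
    rw [← Polynomial.aeval_algHom_apply]
    simp
  have h2 : (2 : Polynomial A) * h₁ = 0 := by
    ext i
    rw [← Polynomial.C_ofNat, Polynomial.coeff_C_mul]
    simpa using h i
  have h3 : ∀ d : R, 2 * Polynomial.aeval d h₁ = 0 := by
    intro d
    have := congrArg (Polynomial.aeval d) h2
    rwa [map_mul, map_zero, map_ofNat] at this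
  simp only [map_add, map_mul, key, aeval_X]
  simp only [Matrix.cons_val]
  have hD : (v 0 + 2 * q * r * v 0 + 2 * q * s * v 2 - 2 * p * r * v 1) ^ 2 +
      4 * ((p ^ 2 * v 1 - q ^ 2 * v 2 - p * q * v 0) * (s ^ 2 * v 2 - r ^ 2 * v 1 + r * s * v 0))
      = v 0 ^ 2 + 4 * (v 1 * v 2) := by
    have hp : p * s = 1 + q * r := by linear_combination hg
    grobner
  rw [hD]
  linear_combination (q * r * v 0 + q * s * v 2 - p * r * v 1) * h3 (v 0 ^ 2 + 4 * (v 1 * v 2))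

lemma pinv_c {A : Type u} [CommRing A] {f : MvPolynomial (Fin 3) A} (hf : PInv f)
    (R : Type u) [CommRing R] [Algebra A R] (x c : R) :
    aeval (![x, 0, c] : Fin 3 → R) f = aeval (![x, 0, 0] : Fin 3 → R) f := by
  -- generic version
  let P : Polynomial (Polynomial A) := aeval (![Polynomial.C Polynomial.X, 0, Polynomial.X] : Fin 3 → Polynomial (Polynomial A)) f
  let P0 : Polynomial (Polynomial A) := aeval (![Polynomial.C Polynomial.X, 0, 0] : Fin 3 → Polynomial (Polynomial A)) f
  let Q : Polynomial (Polynomial A) := Polynomial.C Polynomial.X * Polynomial.X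
  have hc : ∀ w : Fin 3 → Polynomial (Polynomial A), (aeval w f).comp Q = aeval (fun i => (w i).comp Q) f :=
    fun w => aeval_comp_aux f Q w
  have hQ : P.comp Q = P0 := by
    have h := hf (Polynomial (Polynomial A)) 1 0 (Polynomial.X) 1 (by ring) ![Polynomial.C Polynomial.X, 0, 0]
    rw [hc]
    refine Eq.trans ?_ h
    congr 2
    funext i
    fin_cases i <;> simp [Q]
  have hQ0 : P0.comp Q = P0 := by
    rw [hc]
    show _ = aeval _ f
    congr 2
    funext i
    fin_cases i <;> simp [Q]
  have hPP : P = P0 := by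
    refine sub_eq_zero.1 ?_
    rcases subsingleton_or_nontrivial A with hA | hA
    · exact Subsingleton.elim _ _
    refine comp_zero_aux _ Q ?_ ?_ ?_
    · have : Q.natDegree = 1 := Polynomial.natDegree_C_mul_X _ Polynomial.X_ne_zero
      omega
    · have : Q.leadingCoeff = Polynomial.X := Polynomial.leadingCoeff_C_mul_X _
      rw [this]
      exact Polynomial.X_mem_nonzeroDivisors
    · rw [Polynomial.sub_comp, hQ, hQ0, sub_self]
  let g : Polynomial (Polynomial A) →+* R := Polynomial.eval₂RingHom (Polynomial.aeval x : Polynomial A →ₐ[A] R).toRingHom c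
  let G : Polynomial (Polynomial A) →ₐ[A] R := { g with commutes' := by intro a; simp [g, Polynomial.algebraMap_apply] }
  have e := congrArg G hPP
  have e1 : ∀ w : Fin 3 → Polynomial (Polynomial A), G (aeval w f) = aeval (fun i => G (w i)) f :=
    fun w => comp_aeval_apply (R := A) (f := w) G f
  have hGX : G Polynomial.X = c := by
    show g _ = c
    simp [g]
  have hGC : G (Polynomial.C Polynomial.X) = x := by
    show g _ = x
    simp [g]
  rw [e1, e1] at e
  refine Eq.trans ?_ (e.trans ?_)
  · congr 2
    funext i
    fin_cases i <;> simp [hGX, hGC]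
  · congr 2
    funext i
    fin_cases i <;> simp [hGC]

lemma pinv_zero {A : Type u} [CommRing A] {f : MvPolynomial (Fin 3) A} (hf : PInv f)
    (h0 : aeval (![Polynomial.X, 0, 0] : Fin 3 → Polynomial A) f = 0) : f = 0 := by
  rcases subsingleton_or_nontrivial A with hA | hA
  · exact Subsingleton.elim _ _
  let S := MvPolynomial (Fin 2) A
  let T := Polynomial S
  let Φ : MvPolynomial (Fin 3) A ≃ₐ[A] T :=
    (renameEquiv A (Equiv.swap (0 : Fin 3) 1)).trans (finSuccEquiv A 2)
  let a : T := Polynomial.C (X 0)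
  let c : T := Polynomial.C (X 1)
  let u : T := Polynomial.X
  let Q : T := Polynomial.C (X 1) * Polynomial.X ^ 2 + Polynomial.C (X 0) * Polynomial.X
    + Polynomial.C 0
  have hX1 : (X 1 : S) ≠ 0 := X_ne_zero _
  let K : T →ₐ[A] T :=
    { Polynomial.compRingHom Q with
      commutes' := by intro a; simp [T, Polynomial.algebraMap_apply] }
  have hΦ0 : Φ (X 0) = a := by
    simp only [Φ, AlgEquiv.trans_apply, renameEquiv_apply, rename_X, Equiv.swap_apply_left]
    exact finSuccEquiv_X_succ (j := 0)
  have hΦ1 : Φ (X 1) = u := by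
    simp only [Φ, AlgEquiv.trans_apply, renameEquiv_apply, rename_X, Equiv.swap_apply_right]
    exact finSuccEquiv_X_zero
  have hΦ2 : Φ (X 2) = c := by
    simp only [Φ, AlgEquiv.trans_apply, renameEquiv_apply, rename_X]
    rw [Equiv.swap_apply_of_ne_of_ne (by decide) (by decide)]
    exact finSuccEquiv_X_succ (j := 1)
  have hcomp : (Φ f).comp Q = aeval (![a, Q, c] : Fin 3 → T) f := by
    have : (K.comp (Φ : MvPolynomial (Fin 3) A →ₐ[A] T)) = aeval (![a, Q, c] : Fin 3 → T) := by
      apply MvPolynomial.algHom_ext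
      intro i
      rw [aeval_X]
      show (Φ (X i)).comp Q = _
      fin_cases i
      · show (Φ (X 0)).comp Q = a
        rw [hΦ0]; exact Polynomial.C_comp
      · show (Φ (X 1)).comp Q = Q
        rw [hΦ1]; exact Polynomial.X_comp
      · show (Φ (X 2)).comp Q = c
        rw [hΦ2]; exact Polynomial.C_comp
    exact DFunLike.congr_fun this f
  have hzero : ∀ x : T, aeval (![x, 0, 0] : Fin 3 → T) f = 0 := by
    intro x
    have e := congrArg (Polynomial.aeval x : Polynomial A →ₐ[A] T) h0
    rw [comp_aeval_apply, map_zero] at e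
    refine Eq.trans ?_ e
    congr 2
    funext i
    fin_cases i <;> simp
  have hval : aeval (![a, Q, c] : Fin 3 → T) f = 0 := by
    refine (hf T 1 u 0 1 (by ring) ![a, Q, c]).symm.trans ?_
    refine Eq.trans ?_ ((pinv_c hf T (a + 2 * u * c) c).trans (hzero (a + 2 * u * c)))
    congr 2
    funext i
    fin_cases i
    · simp
    · simp [Q, a, c, u]; ring
    · simp
  have hΦf : Φ f = 0 := by
    refine comp_zero_aux _ Q ?_ ?_ (hcomp.trans hval)
    · have : Q.natDegree = 2 := Polynomial.natDegree_quadratic hX1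
      omega
    · have : Q.leadingCoeff = X 1 := Polynomial.leadingCoeff_quadratic hX1
      rw [this]
      exact MvPolynomial.isRegular_X.mem_nonZeroDivisors
  exact (map_eq_zero_iff Φ Φ.injective).1 hΦf

lemma pinv_exists {A : Type u} [CommRing A] {f : MvPolynomial (Fin 3) A} (hf : PInv f) :
    ∃ h₀ h₁ : Polynomial A, (∀ i : ℕ, 2 * h₁.coeff i = 0) ∧
      f = Polynomial.aeval (X 0 ^ 2 + 4 * (X 1 * X 2) : MvPolynomial (Fin 3) A) h₀ +
          X 0 * Polynomial.aeval (X 0 ^ 2 + 4 * (X 1 * X 2) : MvPolynomial (Fin 3) A) h₁ := by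
  let φ : Polynomial A := aeval (![Polynomial.X, 0, 0] : Fin 3 → Polynomial A) f
  have hφ : φ.comp (-Polynomial.X) = φ := by
    have h := hf (Polynomial A) 0 1 (-1) 0 (by ring) ![Polynomial.X, 0, 0]
    refine Eq.trans ?_ h
    refine (aeval_comp_aux f _ _).trans ?_
    congr 2
    funext i
    fin_cases i
    · simp; ring
    · simp
    · simp
  have hodd : ∀ i, 2 * φ.coeff (2 * i + 1) = 0 := by
    intro i
    have h := congrArg (fun P => Polynomial.coeff P (2 * i + 1)) hφ
    rw [← neg_one_mul, ← Polynomial.C_1, ← Polynomial.C_neg] at h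
    simp only [Polynomial.comp_C_mul_X_coeff] at h
    rw [Odd.neg_one_pow ⟨i, rfl⟩] at h
    linear_combination -h
  let h₀ := φ.contract 2
  let h₁ := φ.divX.contract 2
  have hh : ∀ i, 2 * h₁.coeff i = 0 := by
    intro i
    rw [Polynomial.coeff_contract two_ne_zero, Polynomial.coeff_divX, mul_comm i 2]
    exact hodd i
  have hdec : φ = Polynomial.expand A 2 h₀ + Polynomial.X * Polynomial.expand A 2 h₁ := by
    ext n
    rw [Polynomial.coeff_add, Polynomial.coeff_expand two_pos]
    rcases n with _ | n
    · simp [h₀, Polynomial.coeff_contract two_ne_zero]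
    · rw [Polynomial.coeff_X_mul, Polynomial.coeff_expand two_pos]
      rw [Polynomial.coeff_contract two_ne_zero, Polynomial.coeff_contract two_ne_zero,
        Polynomial.coeff_divX]
      rcases Nat.even_or_odd' n with ⟨k, rfl | rfl⟩
      · rw [if_neg (by omega), if_pos (by omega)]
        simp [mul_comm]
      · rw [if_pos (by omega), if_neg (by omega), Nat.div_mul_cancel (by omega)]
        simp
  refine ⟨h₀, h₁, hh, ?_⟩
  refine sub_eq_zero.1 (pinv_zero ?_ ?_)
  · intro R _ _ p q r s hg v
    rw [map_sub, map_sub, hf R p q r s hg v, pinv_form h₀ h₁ hh R p q r s hg v]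
  · rw [map_sub, sub_eq_zero]
    refine hdec.trans ?_
    rw [map_add, map_mul, ← Polynomial.aeval_algHom_apply, ← Polynomial.aeval_algHom_apply]
    simp [Polynomial.expand_eq_comp_X_pow, Polynomial.comp,
      Polynomial.aeval_def, Polynomial.algebraMap_eq]

/-- Let `A` be a commutative ring with `2`-torsion ideal `A[2]`, and
`f ∈ A[α, b, c]` (with `α = X 0`, `b = X 1`, `c = X 2`), the coordinate ring of `psl₂`.
For `g = [[p, q], [r, s]] ∈ SL₂(R)` (`ps − qr = 1`) the adjoint action on `(α, b, c)` is
`(α + 2qrα + 2qsc − 2prb, p²b − q²c − pqα, s²c − r²b + rsα)`.  Then `f` is invariant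
under this action for every commutative `A`-algebra `R` and every `g` iff
`f = h₀(α² + 4bc) + α·h₁(α² + 4bc)` with `h₀ ∈ A[T]` and `h₁ ∈ A[T]` having all
coefficients in `A[2]`; i.e. `A[psl₂]^{PSL₂} = A[4det] + α·A[2][4det]`. -/
theorem statement11 {A : Type u} [CommRing A] (f : MvPolynomial (Fin 3) A) :
    (∀ (R : Type u) [CommRing R] [Algebra A R] (p q r s : R), p * s - q * r = 1 →
      ∀ v : Fin 3 → R,
        aeval (![v 0 + 2 * q * r * v 0 + 2 * q * s * v 2 - 2 * p * r * v 1,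
                 p ^ 2 * v 1 - q ^ 2 * v 2 - p * q * v 0,
                 s ^ 2 * v 2 - r ^ 2 * v 1 + r * s * v 0] : Fin 3 → R) f = aeval v f) ↔
    (∃ h₀ h₁ : Polynomial A, (∀ i : ℕ, 2 * h₁.coeff i = 0) ∧
      f = Polynomial.aeval (X 0 ^ 2 + 4 * (X 1 * X 2) : MvPolynomial (Fin 3) A) h₀ +
          X 0 * Polynomial.aeval (X 0 ^ 2 + 4 * (X 1 * X 2) : MvPolynomial (Fin 3) A) h₁) := by
  constructor
  · intro h
    exact pinv_exists h
  · rintro ⟨h₀, h₁, h, rfl⟩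
    exact pinv_form h₀ h₁ h
end

section
/- Let A be a commutative ring and n ≥ 1. Let f ∈ MvPolynomial over A in the (2n)×(2n) matrix entry variables, regarded as a polynomial function on matrices. Suppose f is Sp_{2n}-invariant on the symplectic Lie algebra: for every commutative A-algebra R, every P ∈ Sp_{2n}(R) (i.e. Pᵀ J P = J for J = [[0, Iₙ], [−Iₙ, 0]]) and every M ∈ sp_{2n}(R) (i.e. Mᵀ J + J M = 0), one has f(P M P⁻¹) = f(M), where f(M) means evaluation of f at the entries of M. Then there exists a polynomial g ∈ A[y₁, …, yₙ] such that for every commutative A-algebra R and every M ∈ sp_{2n}(R), f(M) = g(c₂(M), c₄(M), …, c_{2n}(M)), where the cᵢ(M) are defined by det(t·I − M) = t^{2n} + c₂(M)·t^{2n−2} + c₄(M)·t^{2n−4} + … + c_{2n}(M) (the odd coefficients vanish for M ∈ sp_{2n}(R)). Conversely, every function of this form is Sp_{2n}-invariant. In other words, the ring of invariant polynomial functions on sp_{2n} over A is A[c₂, c₄, …, c_{2n}]. -/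
open Matrix MvPolynomial

universe u

theorem s14_homog_scale {σ : Type*} {B R : Type*} [CommRing B] [CommRing R] [Algebra B R]
    (φ : MvPolynomial σ B) (k : ℕ) (h : φ.IsHomogeneous k) (T : R) (w : σ → R) :
    aeval (fun s => T * w s) φ = T ^ k * aeval w φ := by
  rw [aeval_def, aeval_def, eval₂_eq, eval₂_eq, Finset.mul_sum]
  refine Finset.sum_congr rfl fun d hd => ?_
  have := h (mem_support_iff.mp hd)
  rw [Finsupp.weight_apply] at this
  simp only [Pi.one_apply, smul_eq_mul, mul_one] at this
  simp_rw [mul_pow]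
  rw [Finset.prod_mul_distrib, Finset.prod_pow_eq_pow_sum, ← this, Finsupp.sum]
  ring

theorem s14_key {σ : Type*} {A B : Type*} [CommRing A] [CommRing B] [Algebra A B]
    (hinj : Function.Injective (algebraMap A B)) (F : MvPolynomial σ A) (x0 : σ → B)
    (y : σ → PowerSeries (MvPolynomial σ B))
    (h0 : ∀ s, PowerSeries.coeff 0 (y s) = C (x0 s))
    (h1 : ∀ s, PowerSeries.coeff 1 (y s) = X s)
    (hF : aeval y F = 0) : F = 0 := by
  -- translated polynomial
  let F' : MvPolynomial σ B := aeval (fun s => X s + C (x0 s)) (map (algebraMap A B) F)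
  have hw : ∀ s, ∃ w : PowerSeries (MvPolynomial σ B), y s = PowerSeries.C (C (x0 s)) + PowerSeries.X * w ∧
      PowerSeries.constantCoeff w = X s := by
    intro s
    have : PowerSeries.X ∣ y s - PowerSeries.C (C (x0 s)) := by
      rw [PowerSeries.X_dvd_iff, map_sub, PowerSeries.constantCoeff_C,
        ← PowerSeries.coeff_zero_eq_constantCoeff_apply, h0, sub_self]
    obtain ⟨w, hw⟩ := this
    have e : y s = PowerSeries.C (C (x0 s)) + PowerSeries.X * w := by rw [← hw]; ring
    refine ⟨w, e, ?_⟩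
    have := h1 s
    rw [e, map_add, PowerSeries.coeff_C, mul_comm] at this
    rw [show (1:ℕ) = 0 + 1 from rfl, PowerSeries.coeff_succ_mul_X] at this
    simpa using this
  choose w hw hw0 using hw
  have hF' : aeval (fun s => PowerSeries.X * w s) F' = 0 := by
    rw [← hF]
    simp only [F']
    rw [aeval_map_algebraMap, ← AlgHom.restrictScalars_apply A, 
      ← AlgHom.comp_apply]
    congr 1
    ext s : 1
    simp only [AlgHom.comp_apply, aeval_X, AlgHom.restrictScalars_apply, map_add, hw]
    rw [add_comm]
    congr 1
    rw [← MvPolynomial.algebraMap_eq, AlgHom.commutes, PowerSeries.algebraMap_apply]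
  have hcomp : ∀ k, homogeneousComponent k F' = 0 := by
    intro k
    induction k using Nat.strong_induction_on with
    | _ k ih =>
    have h2 : PowerSeries.coeff k (aeval (fun s => PowerSeries.X * w s) F') = homogeneousComponent k F' := by
      conv_lhs => rw [← sum_homogeneousComponent F']
      rw [map_sum, map_sum]
      have h3 : ∀ j, PowerSeries.coeff k (aeval (fun s => PowerSeries.X * w s) (homogeneousComponent j F'))
         = if j = k then homogeneousComponent k F' else 0 := by
        intro j
        rw [s14_homog_scale _ j (homogeneousComponent_isHomogeneous j F')]
        rw [PowerSeries.coeff_X_pow_mul']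
        split_ifs with a b b
        · subst b
          rw [Nat.sub_self, PowerSeries.coeff_zero_eq_constantCoeff_apply]
          have : PowerSeries.constantCoeff ((aeval w) (homogeneousComponent j F')) = 
              aeval (fun s => PowerSeries.constantCoeff (w s)) (homogeneousComponent j F') := by
            rw [aeval_def, aeval_def, hom_eval₂]
            rfl
          rw [this]
          simp only [hw0]
          simp
        · rw [ih j (by omega)]; simp
        · omega
        · rfl
      simp_rw [h3]
      rw [Finset.sum_ite_eq']
      split_ifs with hk
      · rfl
      · rw [homogeneousComponent_eq_zero]
        simpa using hk
    rw [← h2, hF', map_zero]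
  have hF0 : F' = 0 := by
    rw [← sum_homogeneousComponent F']
    exact Finset.sum_eq_zero fun i _ => hcomp i
  apply MvPolynomial.map_injective _ hinj
  rw [map_zero]
  have : aeval (fun s => X s - C (x0 s)) F' = map (algebraMap A B) F := by
    simp only [F']
    rw [← AlgHom.comp_apply]
    conv_rhs => rw [← AlgHom.id_apply (R := B) (map (algebraMap A B) F)]
    congr 1
    ext s : 1
    simp [-MvPolynomial.algebraMap_eq]
  rw [← this, hF0, map_zero]

section
variable {R : Type*} [CommRing R] {n : ℕ}

def s14J (n : ℕ) (R : Type*) [CommRing R] : Matrix (Fin n ⊕ Fin n) (Fin n ⊕ Fin n) R :=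
  Matrix.fromBlocks 0 1 (-1) 0

theorem s14_JJ : -(s14J n R) * s14J n R = 1 := by
  simp [s14J, fromBlocks_multiply, fromBlocks_neg]

theorem s14_JJ' : s14J n R * -(s14J n R) = 1 := by
  simp [s14J, fromBlocks_multiply, fromBlocks_neg]

theorem s14_JT : (s14J n R)ᵀ = -(s14J n R) := by
  simp [s14J, fromBlocks_transpose, fromBlocks_neg]

theorem s14_symp_inv {P : Matrix (Fin n ⊕ Fin n) (Fin n ⊕ Fin n) R}
    (h : Pᵀ * s14J n R * P = s14J n R) : P⁻¹ * P = 1 ∧ P * P⁻¹ = 1 := by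
  have : (-(s14J n R) * Pᵀ * s14J n R) * P = 1 := by
    rw [Matrix.mul_assoc, Matrix.mul_assoc, ← Matrix.mul_assoc Pᵀ, h, s14_JJ]
  have hu : IsUnit P.det := Matrix.isUnit_det_of_left_inverse this
  exact ⟨Matrix.nonsing_inv_mul _ hu, Matrix.mul_nonsing_inv _ hu⟩

theorem s14_symp_mul {P Q : Matrix (Fin n ⊕ Fin n) (Fin n ⊕ Fin n) R}
    (h : Pᵀ * s14J n R * P = s14J n R) (h' : Qᵀ * s14J n R * Q = s14J n R) :
    (P * Q)ᵀ * s14J n R * (P * Q) = s14J n R := by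
  rw [Matrix.transpose_mul]
  calc Qᵀ * Pᵀ * s14J n R * (P * Q) = Qᵀ * (Pᵀ * s14J n R * P) * Q := by
        simp only [Matrix.mul_assoc]
    _ = _ := by rw [h, h']

theorem s14_sp_conj {P M : Matrix (Fin n ⊕ Fin n) (Fin n ⊕ Fin n) R}
    (h : Pᵀ * s14J n R * P = s14J n R) (hM : Mᵀ * s14J n R + s14J n R * M = 0) :
    (P * M * P⁻¹)ᵀ * s14J n R + s14J n R * (P * M * P⁻¹) = 0 := by
  obtain ⟨h1, h2⟩ := s14_symp_inv h
  have h3 : (P⁻¹)ᵀ * Pᵀ = 1 := by rw [← Matrix.transpose_mul, h2, transpose_one]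
  have h4 : Pᵀ * s14J n R = s14J n R * P⁻¹ := by
    calc Pᵀ * s14J n R = Pᵀ * s14J n R * (P * P⁻¹) := by rw [h2, Matrix.mul_one]
      _ = (Pᵀ * s14J n R * P) * P⁻¹ := by simp only [Matrix.mul_assoc]
      _ = _ := by rw [h]
  have h5 : s14J n R * P = (P⁻¹)ᵀ * s14J n R := by
    calc s14J n R * P = ((P⁻¹)ᵀ * Pᵀ) * (s14J n R * P) := by rw [h3, Matrix.one_mul]
      _ = (P⁻¹)ᵀ * (Pᵀ * s14J n R * P) := by simp only [Matrix.mul_assoc]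
      _ = _ := by rw [h]
  calc (P * M * P⁻¹)ᵀ * s14J n R + s14J n R * (P * M * P⁻¹)
      = (P⁻¹)ᵀ * Mᵀ * (Pᵀ * s14J n R) + (s14J n R * P) * M * P⁻¹ := by
        simp only [Matrix.transpose_mul, Matrix.mul_assoc]
    _ = (P⁻¹)ᵀ * (Mᵀ * s14J n R + s14J n R * M) * P⁻¹ := by
        rw [h4, h5]; simp only [Matrix.mul_assoc, Matrix.mul_add, Matrix.add_mul]
    _ = 0 := by rw [hM]; simp

theorem s14_charpoly_conj {P : Matrix (Fin n ⊕ Fin n) (Fin n ⊕ Fin n) R}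
    (h : Pᵀ * s14J n R * P = s14J n R) (M : Matrix (Fin n ⊕ Fin n) (Fin n ⊕ Fin n) R) :
    (P * M * P⁻¹).charpoly = M.charpoly := by
  obtain ⟨h1, h2⟩ := s14_symp_inv h
  exact Matrix.charpoly_units_conj ⟨P, P⁻¹, h2, h1⟩ M

/-- The normal form. -/
def s14N (b c : Fin n → R) : Matrix (Fin n ⊕ Fin n) (Fin n ⊕ Fin n) R :=
  Matrix.fromBlocks 0 (diagonal b) (diagonal c) 0

theorem s14N_sp (b c : Fin n → R) : (s14N b c)ᵀ * s14J n R + s14J n R * s14N b c = 0 := by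
  simp [s14N, s14J, fromBlocks_transpose, fromBlocks_multiply]
  ext i
  rcases i with i | i <;> simp

theorem s14N_charpoly (b c : Fin n → R) :
    (s14N b c).charpoly = Polynomial.expand R 2 (∏ i, (Polynomial.X - Polynomial.C (b i * c i))) := by
  have hmul : (s14N b c).charmatrix * Matrix.fromBlocks (scalar (Fin n) (Polynomial.X : Polynomial R)) 0
      (diagonal fun i => Polynomial.C (c i)) 1 =
      Matrix.fromBlocks (diagonal fun i => (Polynomial.X ^ 2 - Polynomial.C (b i * c i) : Polynomial R))
        (-diagonal fun i => Polynomial.C (b i)) 0 (scalar (Fin n) (Polynomial.X : Polynomial R)) := by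
    have h0 : ((0 : Matrix (Fin n) (Fin n) R)).charmatrix = scalar (Fin n) (Polynomial.X : Polynomial R) := by
      simp [charmatrix]
    rw [s14N, charmatrix_fromBlocks, fromBlocks_multiply, h0]
    congr 1
    · ext i j : 1
      by_cases hij : i = j
      · subst hij; simp [Matrix.diagonal_map]; ring
      · simp [Matrix.diagonal_map, hij]
    · simp [Matrix.diagonal_map]
    · ext i j : 1
      by_cases hij : i = j
      · subst hij; simp [Matrix.diagonal_map]
      · simp [Matrix.diagonal_map, hij]
    · simp
  have hdet := congrArg Matrix.det hmul
  rw [Matrix.det_mul, Matrix.det_fromBlocks_zero₁₂, Matrix.det_fromBlocks_zero₂₁, det_one, mul_one] at hdet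
  have hs : (scalar (Fin n) (Polynomial.X : Polynomial R)).det = Polynomial.X ^ n := by
    simp
  rw [hs, det_diagonal] at hdet
  have hX : (Polynomial.X ^ n : Polynomial R) ∈ nonZeroDivisors _ :=
    pow_mem Polynomial.X_mem_nonzeroDivisors n
  have := (mul_cancel_right_mem_nonZeroDivisors hX).mp hdet
  rw [Matrix.charpoly, this, map_prod]
  simp

theorem s14N_coeff (b c : Fin n → R) (k : Fin n) :
    (s14N b c).charpoly.coeff (2 * n - 2 * ((k : ℕ) + 1)) =
      (-1) ^ ((k : ℕ) + 1) * (Finset.univ.val.map fun i => b i * c i).esymm ((k : ℕ) + 1) := by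
  rw [s14N_charpoly, show 2 * n - 2 * ((k : ℕ) + 1) = (n - (k + 1)) * 2 by omega,
    Polynomial.coeff_expand_mul (by norm_num)]
  have hk := k.2
  have := Multiset.prod_X_sub_C_coeff (Finset.univ.val.map fun i : Fin n => b i * c i)
    (k := n - (k + 1)) (by simp)
  rw [Multiset.map_map] at this
  simp only [Multiset.card_map, Finset.card_val, Finset.card_univ, Fintype.card_fin] at this
  rw [show n - (n - ((k : ℕ) + 1)) = k + 1 by omega] at this
  exact this
end

section
variable {U : Type*} [CommRing U] {n : ℕ}

theorem s14_C1_mul {m : Type*} [Fintype m] (P Q : Matrix m m (PowerSeries U)) :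
    (P * Q).map (PowerSeries.coeff 1) =
      P.map (PowerSeries.coeff 1) * Q.map (PowerSeries.constantCoeff) +
      P.map (PowerSeries.constantCoeff) * Q.map (PowerSeries.coeff 1) := by
  ext i j
  simp only [Matrix.map_apply, Matrix.mul_apply, Matrix.add_apply, map_sum,
    ← Finset.sum_add_distrib]
  refine Finset.sum_congr rfl fun k _ => ?_
  rw [PowerSeries.coeff_mul, Finset.Nat.antidiagonal_succ]
  simp [add_comm]

theorem s14_C0_mul {m : Type*} [Fintype m] (P Q : Matrix m m (PowerSeries U)) :
    (P * Q).map (PowerSeries.constantCoeff) =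
      P.map (PowerSeries.constantCoeff) * Q.map (PowerSeries.constantCoeff) :=
  Matrix.map_mul

/-- `T * Z` as a power series matrix -/
noncomputable def s14T (Z : Matrix (Fin n) (Fin n) U) : Matrix (Fin n) (Fin n) (PowerSeries U) :=
  Z.map fun z => PowerSeries.C z * PowerSeries.X

theorem s14T_0 (Z : Matrix (Fin n) (Fin n) U) : (s14T Z).map PowerSeries.constantCoeff = 0 := by
  ext; simp [s14T]

theorem s14T_1 (Z : Matrix (Fin n) (Fin n) U) : (s14T Z).map (PowerSeries.coeff 1) = Z := by
  ext; simp [s14T, PowerSeries.coeff_one_X]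

theorem s14T_T (Z : Matrix (Fin n) (Fin n) U) : (s14T Z)ᵀ = s14T Zᵀ := rfl

theorem s14_one_1 {m : Type*} [DecidableEq m] :
    (1 : Matrix m m (PowerSeries U)).map (PowerSeries.coeff 1) = 0 := by
  ext i j
  by_cases h : i = j <;> simp [Matrix.one_apply, h, PowerSeries.coeff_one]

theorem s14_one_0 {m : Type*} [DecidableEq m] :
    (1 : Matrix m m (PowerSeries U)).map PowerSeries.constantCoeff = 1 := by
  ext i j
  by_cases h : i = j <;> simp [Matrix.one_apply, h]

theorem s14_exists_P (α β γ : Matrix (Fin n) (Fin n) U) (hβ : βᵀ = β) (hγ : γᵀ = γ) :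
    ∃ P : Matrix (Fin n ⊕ Fin n) (Fin n ⊕ Fin n) (PowerSeries U),
      Pᵀ * s14J n _ * P = s14J n _ ∧ P.map PowerSeries.constantCoeff = 1 ∧
      P.map (PowerSeries.coeff 1) = fromBlocks α β γ (-αᵀ) := by
  set g : Matrix (Fin n) (Fin n) (PowerSeries U) := 1 + s14T α with hg
  have hg0 : g.map PowerSeries.constantCoeff = 1 := by
    rw [hg, Matrix.map_add _ (map_add _), s14_one_0, s14T_0, add_zero]
  have hg1 : g.map (PowerSeries.coeff 1) = α := by
    rw [hg, Matrix.map_add _ (map_add _), s14_one_1, s14T_1, zero_add]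
  have hu : IsUnit g.det := by
    rw [PowerSeries.isUnit_iff_constantCoeff, RingHom.map_det, RingHom.mapMatrix_apply, hg0]
    simp
  have hh1 := Matrix.nonsing_inv_mul g hu
  have hh2 := Matrix.mul_nonsing_inv g hu
  set h := g⁻¹
  have h0 : h.map PowerSeries.constantCoeff = 1 := by
    have := congrArg (fun M => Matrix.map M PowerSeries.constantCoeff) hh1
    simpa only [s14_C0_mul, hg0, mul_one, s14_one_0] using this
  have h1 : h.map (PowerSeries.coeff 1) = -α := by
    have := congrArg (fun M => Matrix.map M (PowerSeries.coeff 1)) hh1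
    simp only [s14_C1_mul, hg0, hg1, h0, mul_one, one_mul, s14_one_1] at this
    exact eq_neg_of_add_eq_zero_left this
  refine ⟨fromBlocks 1 (s14T β) 0 1 * (fromBlocks 1 0 (s14T γ) 1 * fromBlocks g 0 0 hᵀ), ?_, ?_, ?_⟩
  · refine s14_symp_mul ?_ (s14_symp_mul ?_ ?_)
    · simp [s14J, fromBlocks_transpose, fromBlocks_multiply, s14T_T, hβ]
    · simp [s14J, fromBlocks_transpose, fromBlocks_multiply, s14T_T, hγ]
    · simp only [s14J, fromBlocks_transpose, fromBlocks_multiply]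
      have : h * g = 1 := hh1
      have h2 : gᵀ * hᵀ = 1 := by rw [← Matrix.transpose_mul, hh1, transpose_one]
      simp [hh1, h2]
  · simp only [s14_C0_mul, fromBlocks_map, s14_one_0, s14T_0, transpose_map, h0, hg0,
      Matrix.map_zero _ (map_zero _)]
    simp [fromBlocks_multiply]
  · simp only [s14_C1_mul, s14_C0_mul, fromBlocks_map, s14_one_0, s14_one_1, s14T_1, s14T_0, transpose_map,
      h0, hg0, h1, hg1, Matrix.map_zero _ (map_zero _)]
    simp [fromBlocks_multiply, fromBlocks_add]

theorem s14_exists_conj (d : Fin n → U) (e : Fin n → Fin n → U)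
    (he : ∀ i j, i ≠ j → e i j * (d i - d j) = 1)
    (A B C : Matrix (Fin n) (Fin n) U) (hB : Bᵀ = B) (hC : Cᵀ = C) :
    ∃ (P : Matrix (Fin n ⊕ Fin n) (Fin n ⊕ Fin n) (PowerSeries U)) (b c : Fin n → PowerSeries U),
      Pᵀ * s14J n _ * P = s14J n _ ∧
      (P * s14N b c * P⁻¹).map PowerSeries.constantCoeff = s14N 1 d ∧
      (P * s14N b c * P⁻¹).map (PowerSeries.coeff 1) = fromBlocks A B C (-Aᵀ) := by
  have he' : ∀ i j, i ≠ j → e j i = - e i j := by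
    intro i j hij
    linear_combination (-e j i) * he i j hij - (e i j) * he j i hij.symm
  have hB' : ∀ i j, B j i = B i j := fun i j => congrFun (congrFun hB i) j
  have hC' : ∀ i j, C j i = C i j := fun i j => congrFun (congrFun hC i) j
  let α : Matrix (Fin n) (Fin n) U := of fun i j => if i = j then 0 else -(C i j + d j * B i j) * e i j
  let β : Matrix (Fin n) (Fin n) U := of fun i j => if i = j then 0 else -(A i j - A j i) * e i j
  let γ : Matrix (Fin n) (Fin n) U := of fun i j => β i j * d j - A i j
  have hβ : βᵀ = β := by
    ext i j
    by_cases h : i = j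
    · subst h; rfl
    · simp only [β, transpose_apply, of_apply, if_neg h, if_neg (Ne.symm h), he' i j h]; ring
  have hγ : γᵀ = γ := by
    ext i j
    by_cases h : i = j
    · subst h; rfl
    · simp only [γ, β, transpose_apply, of_apply, if_neg h, if_neg (Ne.symm h), he' i j h]
      linear_combination (A j i - A i j) * he i j h
  obtain ⟨P, hP, hP0, hP1⟩ := s14_exists_P α β γ hβ hγ
  let b : Fin n → PowerSeries U := fun i => 1 + PowerSeries.C (B i i) * PowerSeries.X
  let c : Fin n → PowerSeries U := fun i => PowerSeries.C (d i) + PowerSeries.C (C i i) * PowerSeries.X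
  have hN0 : (s14N b c).map PowerSeries.constantCoeff = s14N 1 d := by
    rw [s14N, s14N, fromBlocks_map, diagonal_map (map_zero _), diagonal_map (map_zero _),
      Matrix.map_zero _ (map_zero _)]
    congr 2 <;> ext i <;> simp [b, c]
  have hN1 : (s14N b c).map (PowerSeries.coeff 1) = s14N (fun i => B i i) (fun i => C i i) := by
    rw [s14N, s14N, fromBlocks_map, diagonal_map (map_zero _), diagonal_map (map_zero _),
      Matrix.map_zero _ (map_zero _)]
    congr 2 <;> ext i <;> simp [b, c, PowerSeries.coeff_one, PowerSeries.coeff_C, PowerSeries.coeff_one_X]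
  have hcomm : (P * s14N b c * P⁻¹) * P = P * s14N b c := by
    rw [Matrix.mul_assoc, (s14_symp_inv hP).1, Matrix.mul_one]
  set M := P * s14N b c * P⁻¹
  have hM0 : M.map PowerSeries.constantCoeff = s14N 1 d := by
    have := congrArg (fun M => Matrix.map M PowerSeries.constantCoeff) hcomm
    simpa only [s14_C0_mul, hP0, hN0, mul_one, one_mul] using this
  refine ⟨P, b, c, hP, hM0, ?_⟩
  have := congrArg (fun M => Matrix.map M (PowerSeries.coeff 1)) hcomm
  simp only [s14_C1_mul, hP0, hP1, hN0, hN1, hM0, mul_one, one_mul] at this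
  rw [eq_sub_of_add_eq this]
  simp only [s14N, fromBlocks_multiply, fromBlocks_add, sub_eq_add_neg, fromBlocks_neg]
  rw [show (diagonal (1 : Fin n → U)) = 1 from diagonal_one]
  congr 1
  · ext i j
    simp [γ]
  · ext i j
    by_cases h : i = j
    · subst h; simp [α]
    · simp [α, h, Ne.symm h, he' i j h, hB' i j, hC' i j]
      linear_combination (B i j) * he i j h
  · ext i j
    by_cases h : i = j
    · subst h; simp [α]
    · simp [α, h, Ne.symm h, he' i j h, hB' i j, hC' i j]
      linear_combination (C i j) * he i j h
  · ext i j
    have hb : β i j = β j i := congrFun (congrFun hβ j) i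
    have hg : γ i j = γ j i := congrFun (congrFun hγ j) i
    simp [hg, hb]
    simp [γ]; ring
end

section
variable {A : Type u} [CommRing A] {n : ℕ}

noncomputable def s14ev {R : Type*} [CommRing R] [Algebra A R]
    (f : MvPolynomial ((Fin n ⊕ Fin n) × (Fin n ⊕ Fin n)) A)
    (M : Matrix (Fin n ⊕ Fin n) (Fin n ⊕ Fin n) R) : R :=
  aeval (fun p : (Fin n ⊕ Fin n) × (Fin n ⊕ Fin n) => M p.1 p.2) f

theorem s14ev_map {R R' : Type*} [CommRing R] [Algebra A R] [CommRing R'] [Algebra A R']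
    (φ : R →ₐ[A] R') (f : MvPolynomial ((Fin n ⊕ Fin n) × (Fin n ⊕ Fin n)) A)
    (M : Matrix (Fin n ⊕ Fin n) (Fin n ⊕ Fin n) R) :
    φ (s14ev f M) = s14ev f (M.map φ) := by
  simp only [s14ev]
  rw [← AlgHom.comp_apply, comp_aeval]
  rfl

def s14Inv (f : MvPolynomial ((Fin n ⊕ Fin n) × (Fin n ⊕ Fin n)) A) : Prop :=
  ∀ (R : Type u) [CommRing R] [Algebra A R]
        (P M : Matrix (Fin n ⊕ Fin n) (Fin n ⊕ Fin n) R),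
        Pᵀ * s14J n R * P = s14J n R → Mᵀ * s14J n R + s14J n R * M = 0 →
        s14ev f (P * M * P⁻¹) = s14ev f M

theorem s14Inv.conj {f : MvPolynomial ((Fin n ⊕ Fin n) × (Fin n ⊕ Fin n)) A} (hf : s14Inv f)
    {R : Type u} [CommRing R] [Algebra A R]
    {P M M' : Matrix (Fin n ⊕ Fin n) (Fin n ⊕ Fin n) R}
    (hP : Pᵀ * s14J n R * P = s14J n R) (hM : Mᵀ * s14J n R + s14J n R * M = 0)
    (h : M' * P = P * M) : s14ev f M' = s14ev f M := by
  rw [← hf R P M hP hM, ← h, Matrix.mul_assoc, (s14_symp_inv hP).2, Matrix.mul_one]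

theorem s14N_map {R R' : Type*} [CommRing R] [Algebra A R] [CommRing R'] [Algebra A R']
    (φ : R →ₐ[A] R') (b c : Fin n → R) :
    (s14N b c).map φ = s14N (fun i => φ (b i)) (fun i => φ (c i)) := by
  rw [s14N, s14N, fromBlocks_map, diagonal_map (map_zero _), diagonal_map (map_zero _),
      Matrix.map_zero _ (map_zero _)]

noncomputable def s14G (f : MvPolynomial ((Fin n ⊕ Fin n) × (Fin n ⊕ Fin n)) A) :
    MvPolynomial (Fin n) A := s14ev f (s14N 1 X)

theorem s14G_aeval (f : MvPolynomial ((Fin n ⊕ Fin n) × (Fin n ⊕ Fin n)) A)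
    {R : Type*} [CommRing R] [Algebra A R] (d : Fin n → R) :
    aeval d (s14G f) = s14ev f (s14N 1 d) := by
  rw [s14G, s14ev_map, s14N_map]
  simp
  rfl

theorem s14G_symm {f : MvPolynomial ((Fin n ⊕ Fin n) × (Fin n ⊕ Fin n)) A} (hf : s14Inv f) :
    (s14G f).IsSymmetric := by
  intro e
  have : rename e (s14G f) = aeval (fun i => (X (e i) : MvPolynomial (Fin n) A)) (s14G f) := by
    congr 1
    ext i : 1
    simp
  rw [this, s14G_aeval]
  conv_rhs => rw [s14G]
  let Q : Matrix (Fin n) (Fin n) (MvPolynomial (Fin n) A) := e.permMatrix _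
  have hQ : Qᵀ * Q = 1 := by
    simp only [Q]
    rw [Matrix.transpose_permMatrix, ← Matrix.permMatrix_mul]
    simp
  refine hf.conj (P := fromBlocks Q 0 0 Q) ?_ (s14N_sp _ _) ?_
  · simp [s14J, fromBlocks_transpose, fromBlocks_multiply, hQ]
  · simp only [s14N, fromBlocks_multiply]
    rw [show (diagonal (1 : Fin n → MvPolynomial (Fin n) A)) = 1 from diagonal_one]
    simp
    ext i j : 1
    simp only [diagonal_mul, mul_diagonal, Q, Equiv.Perm.permMatrix, PEquiv.toMatrix_apply, Equiv.toPEquiv_apply, Option.mem_some_iff]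
    by_cases h : e i = j
    · simp [h]
    · simp [h]

theorem s14_X_nzd {σ : Type*} (i : σ) : (X i : MvPolynomial σ A) ∈ nonZeroDivisors _ := by
  rw [mem_nonZeroDivisors_iff_right]
  intro x hx
  apply MvPolynomial.coe_injective σ A
  have h := congrArg (fun p : MvPolynomial σ A => (p : MvPowerSeries σ A)) hx
  simp only [MvPolynomial.coe_mul, MvPolynomial.coe_X, MvPolynomial.coe_zero] at h
  rw [MvPolynomial.coe_zero]
  exact (mul_right_mem_nonZeroDivisors_eq_zero_iff MvPowerSeries.X_mem_nonzeroDivisors).mp h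

theorem s14_normal {f : MvPolynomial ((Fin n ⊕ Fin n) × (Fin n ⊕ Fin n)) A} (hf : s14Inv f)
    {R : Type*} [CommRing R] [Algebra A R] (b c : Fin n → R) :
    s14ev f (s14N b c) = aeval (fun i => b i * c i) (s14G f) := by
  let V := MvPolynomial (Fin n ⊕ Fin n) A
  let q : V := s14ev f (s14N (fun i => (X (Sum.inl i) : V)) (fun i => X (Sum.inr i)))
  let q' : V := aeval (fun i => (X (Sum.inl i) * X (Sum.inr i) : V)) (s14G f)
  suffices hq : q = q' by
    have h := congrArg (aeval (Sum.elim b c)) hq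
    simp only [q, q'] at h
    rw [s14ev_map, s14N_map, ← AlgHom.comp_apply, comp_aeval] at h
    simpa using h
  apply expand_injective (n := 2) (by norm_num)
  let K := FractionRing V
  apply IsFractionRing.injective V K
  have e1 : ∀ v : V, algebraMap V K v = Algebra.algHom A V K v := fun v => rfl
  rw [e1, e1]
  simp only [q, q']
  rw [s14ev_map, s14ev_map, s14N_map, s14N_map, ← AlgHom.comp_apply, ← AlgHom.comp_apply, comp_aeval, s14G_aeval]
  have hx : ∀ s, expand 2 (X s : V) = (X s : V) ^ 2 := fun s => expand_X 2 s
  simp only [AlgHom.comp_apply, map_mul, hx, map_pow]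
  set t : Fin n → K := fun i => Algebra.algHom A V K (X (Sum.inl i)) with ht
  have hu : ∀ i, IsUnit (t i) := fun i =>
    IsLocalization.map_units K (⟨X (Sum.inl i), s14_X_nzd _⟩ : nonZeroDivisors V)
  choose r hr using fun i => (hu i).exists_right_inv
  have hr' : ∀ i, r i * t i = 1 := fun i => by rw [mul_comm, hr]
  refine hf.conj (P := fromBlocks (diagonal t) 0 0 (diagonal r)) ?_ (s14N_sp _ _) ?_
  · rw [s14J, fromBlocks_transpose, fromBlocks_multiply, fromBlocks_multiply]
    simp [hr, hr']
  · simp only [s14N, fromBlocks_multiply]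
    simp
    constructor
    · intro i
      linear_combination t i * hr i
    · rw [diagonal_mul_diagonal]
      congr 1
      ext i
      linear_combination (-(t i) * Algebra.algHom A V K (X (Sum.inr i)) ^ 2) * hr i
end

section
variable {A : Type u} [CommRing A] {n : ℕ}

/-- parametrization of the symplectic Lie algebra by symmetric matrices -/
def s14sp {R : Type*} [CommRing R] (y : Sym2 (Fin n ⊕ Fin n) → R) :
    Matrix (Fin n ⊕ Fin n) (Fin n ⊕ Fin n) R :=
  -(s14J n R) * of fun i j => y s(i, j)

theorem s14sp_map {R R' : Type*} [CommRing R] [Algebra A R] [CommRing R'] [Algebra A R']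
    (φ : R →ₐ[A] R') (y : Sym2 (Fin n ⊕ Fin n) → R) :
    (s14sp y).map φ = s14sp (fun s => φ (y s)) := by
  rw [s14sp, s14sp, Matrix.map_mul]
  congr 1
  ext i j
  rcases i with i | i <;> rcases j with j | j <;> simp [s14J, Matrix.one_apply, apply_ite φ]

theorem s14_exists_sp {R : Type*} [CommRing R] (M : Matrix (Fin n ⊕ Fin n) (Fin n ⊕ Fin n) R)
    (hM : Mᵀ * s14J n R + s14J n R * M = 0) :
    ∃ y : Sym2 (Fin n ⊕ Fin n) → R, (∀ i j, y s(i, j) = (s14J n R * M) i j) ∧ M = s14sp y := by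
  have hs : (s14J n R * M)ᵀ = s14J n R * M := by
    rw [Matrix.transpose_mul, s14_JT, Matrix.mul_neg]
    exact neg_eq_of_add_eq_zero_right hM
  refine ⟨Sym2.lift ⟨fun i j => (s14J n R * M) i j, fun i j => (congrFun (congrFun hs i) j).symm⟩,
    fun i j => rfl, ?_⟩
  have : (of fun i j => (Sym2.lift ⟨fun i j => (s14J n R * M) i j,
      fun i j => (congrFun (congrFun hs i) j).symm⟩ : Sym2 (Fin n ⊕ Fin n) → R) s(i, j)) = s14J n R * M := by
    ext i j; rfl
  rw [s14sp, this, ← Matrix.mul_assoc, s14_JJ, Matrix.one_mul]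

theorem s14_J_sp {R : Type*} [CommRing R] (y : Sym2 (Fin n ⊕ Fin n) → R) :
    s14J n R * s14sp y = of fun i j => y s(i, j) := by
  rw [s14sp, ← Matrix.mul_assoc, s14_JJ', Matrix.one_mul]

theorem s14sp_blocks {R : Type*} [CommRing R] (y : Sym2 (Fin n ⊕ Fin n) → R) :
    ∃ a b c : Matrix (Fin n) (Fin n) R, bᵀ = b ∧ cᵀ = c ∧ s14sp y = fromBlocks a b c (-aᵀ) := by
  refine ⟨-(of fun i j => y s(Sum.inr i, Sum.inl j)), -(of fun i j => y s(Sum.inr i, Sum.inr j)),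
    of fun i j => y s(Sum.inl i, Sum.inl j), ?_, ?_, ?_⟩
  · ext i j; simp [Sym2.eq_swap]
  · ext i j; simp [Sym2.eq_swap]
  · have : (of fun i j => y s(i, j)) = fromBlocks (of fun i j => y s(Sum.inl i, Sum.inl j))
      (of fun i j => y s(Sum.inl i, Sum.inr j)) (of fun i j => y s(Sum.inr i, Sum.inl j))
      (of fun i j => y s(Sum.inr i, Sum.inr j)) := by
      ext i j
      rcases i with i | i <;> rcases j with j | j <;> rfl
    rw [s14sp, this, s14J, fromBlocks_neg, fromBlocks_multiply]
    simp
    ext i j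
    simp [Sym2.eq_swap]

theorem s14J_map0 {U : Type*} [CommRing U] :
    (s14J n (PowerSeries U)).map PowerSeries.constantCoeff = s14J n U := by
  ext i j
  rcases i with i | i <;> rcases j with j | j <;> by_cases h : i = j <;>
    simp [s14J, Matrix.one_apply, h]

theorem s14J_map1 {U : Type*} [CommRing U] :
    (s14J n (PowerSeries U)).map (PowerSeries.coeff 1) = 0 := by
  ext i j
  rcases i with i | i <;> rcases j with j | j <;>
    simp [s14J, Matrix.one_apply, apply_ite, PowerSeries.coeff_one]

theorem s14_exists_d (A : Type u) [CommRing A] (n : ℕ) : ∃ (B : Type u) (_ : CommRing B) (_ : Algebra A B)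
    (d : Fin n → B) (e : Fin n → Fin n → B), Function.Injective (algebraMap A B) ∧
    ∀ i j, i ≠ j → e i j * (d i - d j) = 1 := by
  let B := FractionRing (Polynomial A)
  have hu : ∀ i j : Fin n, i ≠ j → IsUnit (algebraMap (Polynomial A) B (Polynomial.X ^ (i : ℕ)) -
      algebraMap (Polynomial A) B (Polynomial.X ^ (j : ℕ))) := by
    have key : ∀ i j : Fin n, i < j → IsUnit (algebraMap (Polynomial A) B (Polynomial.X ^ (j : ℕ)) -
      algebraMap (Polynomial A) B (Polynomial.X ^ (i : ℕ))) := by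
      intro i j hij
      rw [← map_sub]
      rcases subsingleton_or_nontrivial A with hA | hA
      · have : Subsingleton B := (algebraMap (Polynomial A) B).codomain_trivial
        exact isUnit_of_subsingleton _
      have : (Polynomial.X ^ (j : ℕ) - Polynomial.X ^ (i : ℕ) : Polynomial A).Monic := by
        apply Polynomial.monic_X_pow_sub
        rw [Polynomial.degree_X_pow]
        exact_mod_cast hij
      exact IsLocalization.map_units B (⟨_, this.mem_nonZeroDivisors⟩ : nonZeroDivisors (Polynomial A))
    intro i j hij
    rcases lt_or_gt_of_ne hij with h | h
    · rw [← neg_sub]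
      exact (key i j h).neg
    · exact key j i h
  refine ⟨B, inferInstance, inferInstance, fun i => algebraMap (Polynomial A) B (Polynomial.X ^ (i : ℕ)),
    fun i j => Ring.inverse (algebraMap (Polynomial A) B (Polynomial.X ^ (i : ℕ)) -
      algebraMap (Polynomial A) B (Polynomial.X ^ (j : ℕ))), ?_, ?_⟩
  · rw [IsScalarTower.algebraMap_eq A (Polynomial A) B]
    exact (IsFractionRing.injective (Polynomial A) B).comp Polynomial.C_injective
  · intro i j hij
    exact Ring.inverse_mul_cancel _ (hu i j hij)

noncomputable def s14c {R : Type*} [CommRing R] [Algebra A R] (g : MvPolynomial (Fin n) A)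
    (M : Matrix (Fin n ⊕ Fin n) (Fin n ⊕ Fin n) R) : R :=
  aeval (fun k : Fin n => M.charpoly.coeff (2 * n - 2 * ((k : ℕ) + 1))) g

theorem s14c_map {R R' : Type*} [CommRing R] [Algebra A R] [CommRing R'] [Algebra A R']
    (φ : R →ₐ[A] R') (g : MvPolynomial (Fin n) A)
    (M : Matrix (Fin n ⊕ Fin n) (Fin n ⊕ Fin n) R) :
    φ (s14c g M) = s14c g (M.map φ) := by
  simp only [s14c]
  rw [← AlgHom.comp_apply, comp_aeval]
  have : (M.map φ).charpoly = M.charpoly.map (φ : R →+* R') := Matrix.charpoly_map M (φ : R →+* R')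
  rw [this]
  simp

theorem s14_density (F : MvPolynomial (Sym2 (Fin n ⊕ Fin n)) A)
    (hF : ∀ (R : Type u) [CommRing R] [Algebra A R] (P : Matrix (Fin n ⊕ Fin n) (Fin n ⊕ Fin n) R)
      (b c : Fin n → R) (y : Sym2 (Fin n ⊕ Fin n) → R), Pᵀ * s14J n R * P = s14J n R →
      s14sp y = P * s14N b c * P⁻¹ → aeval y F = 0) : F = 0 := by
  obtain ⟨B, _, _, d, e, hinj, he⟩ := s14_exists_d A n
  let U := MvPolynomial (Sym2 (Fin n ⊕ Fin n)) B
  obtain ⟨a, b, c, hb, hc, hX⟩ := s14sp_blocks (n := n) (fun s => (X s : U))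
  obtain ⟨P, b', c', hP, h0, h1⟩ := s14_exists_conj (n := n) (U := U) (fun i => C (d i)) (fun i j => C (e i j))
    (by intro i j hij; rw [← map_sub, ← map_mul, he i j hij, map_one]) a b c hb hc
  obtain ⟨x0, hx0, hx0'⟩ := s14_exists_sp (s14N 1 d) (s14N_sp _ _)
  obtain ⟨y, hy, hy'⟩ := s14_exists_sp (P * s14N b' c' * P⁻¹) (s14_sp_conj hP (s14N_sp _ _))
  refine s14_key hinj F x0 y ?_ ?_ (hF (PowerSeries U) P b' c' y hP hy'.symm)
  · intro s
    induction s using Sym2.ind with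
    | _ i j =>
    rw [hy, hx0]
    have h2 : (s14J n (PowerSeries U) * (P * s14N b' c' * P⁻¹)).map PowerSeries.constantCoeff =
        (s14J n B * s14N 1 d).map (C : B →+* U) := by
      rw [s14_C0_mul, h0, s14J_map0]
      rw [Matrix.map_mul]
      congr 1
      · ext i j : 1
        rcases i with i | i <;> rcases j with j | j <;> by_cases h : i = j <;>
          simp [s14J, Matrix.one_apply, h]
      · ext i j : 1
        rcases i with i | i <;> rcases j with j | j <;> by_cases h : i = j <;>
          simp [s14N, h]
    rw [PowerSeries.coeff_zero_eq_constantCoeff_apply]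
    exact congrFun (congrFun h2 i) j
  · intro s
    induction s using Sym2.ind with
    | _ i j =>
    rw [hy]
    have h2 : (s14J n (PowerSeries U) * (P * s14N b' c' * P⁻¹)).map (PowerSeries.coeff 1) =
        of fun i j => (X s(i, j) : U) := by
      rw [s14_C1_mul, h1, s14J_map0, s14J_map1, Matrix.zero_mul, zero_add, ← hX, s14_J_sp]
    exact congrFun (congrFun h2 i) j

theorem s14_forward (f : MvPolynomial ((Fin n ⊕ Fin n) × (Fin n ⊕ Fin n)) A) (hf : s14Inv f) :
    ∃ g : MvPolynomial (Fin n) A,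
      ∀ (R : Type u) [CommRing R] [Algebra A R]
        (M : Matrix (Fin n ⊕ Fin n) (Fin n ⊕ Fin n) R),
        Mᵀ * s14J n R + s14J n R * M = 0 → s14ev f M = s14c g M := by
  obtain ⟨g0, hg0⟩ := esymmAlgHom_surjective (σ := Fin n) A (n := n) (by simp) ⟨s14G f, s14G_symm hf⟩
  have hg0' : aeval (fun i : Fin n => esymm (Fin n) A (i + 1)) g0 = s14G f := by
    rw [← esymmAlgHom_apply, hg0]
  let g : MvPolynomial (Fin n) A := aeval (fun k : Fin n => (-1) ^ ((k : ℕ) + 1) * X k) g0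
  have hN : ∀ (R : Type u) [CommRing R] [Algebra A R] (b c : Fin n → R),
      s14ev f (s14N b c) = s14c g (s14N b c) := by
    intro R _ _ b c
    rw [s14_normal hf, s14c, ← hg0']
    simp only [g, s14N_coeff]
    rw [← AlgHom.comp_apply, ← AlgHom.comp_apply, comp_aeval, comp_aeval]
    congr 2
    ext k
    simp only [aeval_esymm_eq_multiset_esymm, map_mul, map_pow, map_neg, map_one, aeval_X]
    rw [← mul_assoc, ← mul_pow]
    simp
  refine ⟨g, ?_⟩
  let F : MvPolynomial (Sym2 (Fin n ⊕ Fin n)) A := s14ev f (s14sp X) - s14c g (s14sp X)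
  have hFe : ∀ (R : Type u) [CommRing R] [Algebra A R] (y : Sym2 (Fin n ⊕ Fin n) → R),
      aeval y F = s14ev f (s14sp y) - s14c g (s14sp y) := by
    intro R _ _ y
    simp only [F]
    rw [map_sub, s14ev_map, s14c_map, s14sp_map]
    simp
  have hF : F = 0 := by
    apply s14_density
    intro R _ _ P b c y hP hy
    rw [hFe, hy, hf R P _ hP (s14N_sp _ _), hN, s14c, s14c, s14_charpoly_conj hP, sub_self]
  intro R _ _ M hM
  obtain ⟨y, -, rfl⟩ := s14_exists_sp M hM
  rw [← sub_eq_zero, ← hFe, hF, map_zero]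
end


/-- Let `A` be a commutative ring, `n ≥ 1`, and `f` a polynomial over
`A` in the `(2n)×(2n)` matrix entry variables (indexed by `(Fin n ⊕ Fin n) × (Fin n ⊕ Fin n)`).
Then `f` is `Sp_{2n}`-invariant on the symplectic Lie algebra — i.e. for every commutative
`A`-algebra `R`, every `P` with `Pᵀ J P = J` and every `M` with `Mᵀ J + J M = 0` one has
`f(P M P⁻¹) = f(M)` — if and only if there is `g ∈ A[y₁, …, yₙ]` with
`f(M) = g(c₂(M), c₄(M), …, c_{2n}(M))` for all such `M`, where the `cᵢ(M)` are the
coefficients of the characteristic polynomial: `c_{2k}(M) = charpoly(M).coeff (2n − 2k)`.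
In other words, the ring of invariant polynomial functions on `sp_{2n}` over `A` is
`A[c₂, c₄, …, c_{2n}]`. -/
theorem statement14 {A : Type u} [CommRing A] (n : ℕ) (hn : 1 ≤ n)
    (f : MvPolynomial ((Fin n ⊕ Fin n) × (Fin n ⊕ Fin n)) A) :
    (∀ (R : Type u) [CommRing R] [Algebra A R]
        (P M : Matrix (Fin n ⊕ Fin n) (Fin n ⊕ Fin n) R),
        Pᵀ * Matrix.fromBlocks 0 1 (-1) 0 * P = Matrix.fromBlocks 0 1 (-1) 0 →
        Mᵀ * Matrix.fromBlocks 0 1 (-1) 0 + Matrix.fromBlocks 0 1 (-1) 0 * M = 0 →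
        aeval (fun p : (Fin n ⊕ Fin n) × (Fin n ⊕ Fin n) => (P * M * P⁻¹) p.1 p.2) f =
          aeval (fun p : (Fin n ⊕ Fin n) × (Fin n ⊕ Fin n) => M p.1 p.2) f) ↔
    (∃ g : MvPolynomial (Fin n) A,
      ∀ (R : Type u) [CommRing R] [Algebra A R]
        (M : Matrix (Fin n ⊕ Fin n) (Fin n ⊕ Fin n) R),
        Mᵀ * Matrix.fromBlocks 0 1 (-1) 0 + Matrix.fromBlocks 0 1 (-1) 0 * M = 0 →
        aeval (fun p : (Fin n ⊕ Fin n) × (Fin n ⊕ Fin n) => M p.1 p.2) f =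
          aeval (fun k : Fin n => M.charpoly.coeff (2 * n - 2 * ((k : ℕ) + 1))) g) := by
  constructor
  · intro h
    exact s14_forward f h
  · rintro ⟨g, hg⟩ R _ _ P M hP hM
    have hP' : Pᵀ * s14J n R * P = s14J n R := hP
    rw [hg R (P * M * P⁻¹) (s14_sp_conj hP' hM), hg R M hM, s14_charpoly_conj hP' M]
end

section
/- Let A be a commutative ring with 2-torsion ideal A[2], and n ≥ 1. Let P be the polynomial ring over A in the coordinates of sp_{2n} (the entries aᵢⱼ of an n×n block A-matrix and the entries bᵢⱼ (i ≤ j), cᵢⱼ (i ≤ j) of two symmetric n×n blocks, parametrizing the generic matrix M = [[A, B], [C, −Aᵀ]]). Let I ⊆ P be the subring of Sp_{2n}-invariant polynomials, i.e. those f such that for every commutative A-algebra R, every P₀ ∈ Sp_{2n}(R) and every point v of sp_{2n}(R), f evaluated at the coordinates of P₀ M(v) P₀⁻¹ equals f(v). Let ρ : P → A[X₁, …, Xₙ] be the restriction to the diagonal torus, obtained by substituting A = diag(X₁, …, Xₙ) and B = C = 0. Then ρ restricted to I is injective, its image is contained in the ring of invariants of A[X₁, …, Xₙ] under the hyperoctahedral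 Weyl group W = (ℤ/2)ⁿ ⋊ Sₙ (generated by permutations of the Xᵢ and the sign changes Xᵢ ↦ −Xᵢ), and ρ(I) equals the full ring of W-invariants if and only if A[2] = 0. That is, the Chevalley morphism 𝔱/W → sp_{2n}/Sp_{2n} is an isomorphism if and only if A has no 2-torsion. -/
open Matrix MvPolynomial

universe u

/-- Coordinates of `sp_{2n}`: the entries `aᵢⱼ` of the `A`-block, and the entries
`bᵢⱼ` (`i ≤ j`) and `cᵢⱼ` (`i ≤ j`) — indexed by unordered pairs — of the two symmetric
blocks `B` and `C` of the generic matrix `M = [[A, B], [C, −Aᵀ]]`. -/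
abbrev SpCoord (n : ℕ) : Type :=
  (Fin n × Fin n) ⊕ (Sym2 (Fin n) ⊕ Sym2 (Fin n))

/-- The generic symplectic matrix `M(v) = [[A, B], [C, −Aᵀ]]` with entries given by a
point `v` of coordinates valued in a commutative ring `R`. -/
noncomputable def genSpMatrix {R : Type*} [CommRing R] (n : ℕ) (v : SpCoord n → R) :
    Matrix (Fin n ⊕ Fin n) (Fin n ⊕ Fin n) R :=
  Matrix.fromBlocks
    (Matrix.of fun i j => v (Sum.inl (i, j)))
    (Matrix.of fun i j => v (Sum.inr (Sum.inl s(i, j))))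
    (Matrix.of fun i j => v (Sum.inr (Sum.inr s(i, j))))
    (-(Matrix.of fun i j => v (Sum.inl (i, j)))ᵀ)

/-- A polynomial `f` on `sp_{2n}` over `A` is `Sp_{2n}`-invariant if for every commutative
`A`-algebra `R`, every symplectic `P` (`Pᵀ J P = J`) and all coordinate points `v, w` with
`M(w) = P · M(v) · P⁻¹`, one has `f(w) = f(v)`. -/
def IsSpInvariant {A : Type u} [CommRing A] {n : ℕ}
    (f : MvPolynomial (SpCoord n) A) : Prop :=
  ∀ (R : Type u) [CommRing R] [Algebra A R]
    (P : Matrix (Fin n ⊕ Fin n) (Fin n ⊕ Fin n) R),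
    Pᵀ * Matrix.fromBlocks 0 1 (-1) 0 * P = Matrix.fromBlocks 0 1 (-1) 0 →
    ∀ v w : SpCoord n → R,
      genSpMatrix n w = P * genSpMatrix n v * P⁻¹ →
      aeval w f = aeval v f

/-- Restriction to the Lie algebra of the diagonal maximal torus
`diag(X₁, …, Xₙ, −X₁, …, −Xₙ)`: substitute `aᵢⱼ ↦ δᵢⱼ Xᵢ`, `b ↦ 0`, `c ↦ 0`. -/
noncomputable def restrictToTorus {A : Type u} [CommRing A] {n : ℕ}
    (f : MvPolynomial (SpCoord n) A) : MvPolynomial (Fin n) A :=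
  aeval (fun s : SpCoord n =>
    match s with
    | Sum.inl (i, j) => if i = j then (X i : MvPolynomial (Fin n) A) else 0
    | Sum.inr _ => 0) f

/-- Invariance under the hyperoctahedral Weyl group `W = (ℤ/2)ⁿ ⋊ Sₙ`, generated by the
permutations of the variables and the sign changes `Xᵢ ↦ −Xᵢ`. -/
def IsHyperoctahedralInvariant {A : Type u} [CommRing A] {n : ℕ}
    (p : MvPolynomial (Fin n) A) : Prop :=
  (∀ σ : Equiv.Perm (Fin n), rename σ p = p) ∧
  (∀ i : Fin n,
    aeval (fun l : Fin n =>
      if l = i then -(X l : MvPolynomial (Fin n) A) else X l) p = p)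

abbrev JJ (n : ℕ) (R : Type*) [CommRing R] : Matrix (Fin n ⊕ Fin n) (Fin n ⊕ Fin n) R :=
  Matrix.fromBlocks 0 1 (-1) 0

lemma JJ_sq (n : ℕ) (R : Type*) [CommRing R] : JJ n R * JJ n R = -1 := by
  simp [JJ, Matrix.fromBlocks_multiply, ← Matrix.fromBlocks_one, Matrix.fromBlocks_neg]

lemma JJ_tr (n : ℕ) (R : Type*) [CommRing R] : (JJ n R)ᵀ = - JJ n R := by
  simp [JJ, Matrix.fromBlocks_transpose, Matrix.fromBlocks_neg]

lemma sp_left_inv {n : ℕ} {R : Type*} [CommRing R]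
    {P : Matrix (Fin n ⊕ Fin n) (Fin n ⊕ Fin n) R}
    (h : Pᵀ * JJ n R * P = JJ n R) : (-(JJ n R * Pᵀ * JJ n R)) * P = 1 := by
  have : -(JJ n R * Pᵀ * JJ n R) * P = -(JJ n R * (Pᵀ * JJ n R * P)) := by
    simp only [neg_mul, mul_assoc]
  rw [this, h, JJ_sq, neg_neg]

lemma sp_isUnit {n : ℕ} {R : Type*} [CommRing R]
    {P : Matrix (Fin n ⊕ Fin n) (Fin n ⊕ Fin n) R}
    (h : Pᵀ * JJ n R * P = JJ n R) : IsUnit P.det :=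
  (Matrix.isUnit_iff_isUnit_det _).1 (IsUnit.of_mul_eq_one_right _ (sp_left_inv h))

/-- usable form of invariance -/
lemma spinv_apply {A : Type u} [CommRing A] {n : ℕ} {f : MvPolynomial (SpCoord n) A}
    (hf : IsSpInvariant f) {R : Type u} [CommRing R] [Algebra A R]
    {P : Matrix (Fin n ⊕ Fin n) (Fin n ⊕ Fin n) R}
    (hP : Pᵀ * JJ n R * P = JJ n R) {v w : SpCoord n → R}
    (h : genSpMatrix n w * P = P * genSpMatrix n v) : aeval w f = aeval v f := by
  apply hf R P hP v w
  rw [← h, mul_assoc, Matrix.mul_nonsing_inv _ (sp_isUnit hP), mul_one]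

lemma gen_sp {R : Type*} [CommRing R] (n : ℕ) (v : SpCoord n → R) :
    (genSpMatrix n v)ᵀ * JJ n R = - (JJ n R * genSpMatrix n v) := by
  simp only [genSpMatrix, JJ, Matrix.fromBlocks_transpose, Matrix.fromBlocks_multiply,
    Matrix.fromBlocks_neg]
  congr 1 <;> ext i j <;> simp [Sym2.eq_swap]

lemma sp_exists {R : Type*} [CommRing R] (n : ℕ) (M : Matrix (Fin n ⊕ Fin n) (Fin n ⊕ Fin n) R)
    (h : Mᵀ * JJ n R = - (JJ n R * M)) : ∃ v, genSpMatrix n v = M := by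
  obtain ⟨a, b, c, d, rfl⟩ : ∃ a b c d, M = Matrix.fromBlocks a b c d :=
    ⟨_, _, _, _, (Matrix.fromBlocks_toBlocks M).symm⟩
  simp only [JJ, Matrix.fromBlocks_transpose, Matrix.fromBlocks_multiply,
    Matrix.fromBlocks_neg, Matrix.fromBlocks_inj] at h
  obtain ⟨h1, h2, h3, h4⟩ := h
  simp at h1 h2 h3 h4
  have hb : ∀ i j, b i j = b j i := fun i j => by
    have := congrFun (congrFun h4 j) i; simpa using this
  have hc : ∀ i j, c i j = c j i := fun i j => by
    have := congrFun (congrFun h1 j) i; simpa using this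
  refine ⟨fun s => match s with
    | Sum.inl (i, j) => a i j
    | Sum.inr (Sum.inl s) => Sym2.lift ⟨fun i j => b i j, hb⟩ s
    | Sum.inr (Sum.inr s) => Sym2.lift ⟨fun i j => c i j, hc⟩ s, ?_⟩
  unfold genSpMatrix
  congr 1
  rw [eq_comm, ← neg_eq_iff_eq_neg, ← h2]; rfl

/-- torus point -/
noncomputable def torusPt {R : Type*} [CommRing R] (n : ℕ) (t : Fin n → R) : SpCoord n → R :=
  fun s => match s with
    | Sum.inl (i, j) => if i = j then t i else 0
    | Sum.inr _ => 0

lemma aeval_torus {A : Type u} [CommRing A] {n : ℕ} (f : MvPolynomial (SpCoord n) A)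
    {R : Type*} [CommRing R] [Algebra A R] (t : Fin n → R) :
    aeval t (restrictToTorus f) = aeval (torusPt n t) f := by
  unfold restrictToTorus
  rw [← AlgHom.comp_apply, MvPolynomial.comp_aeval]
  congr 2
  funext s
  rcases s with ⟨i, j⟩ | s
  · by_cases h : i = j <;> simp [torusPt, h]
  · simp [torusPt]

lemma restrict_eq {A : Type u} [CommRing A] {n : ℕ} (f : MvPolynomial (SpCoord n) A) :
    restrictToTorus f = aeval (torusPt n X) f := by
  rw [← aeval_torus]; simp

lemma gen_torus {R : Type*} [CommRing R] (n : ℕ) (t : Fin n → R) :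
    genSpMatrix n (torusPt n t) = Matrix.fromBlocks (diagonal t) 0 0 (-diagonal t) := by
  unfold genSpMatrix torusPt
  congr 1
  ext i j
  by_cases h : i = j
  · subst h; simp
  · simp [h, Ne.symm h]

/-- conjugation by diagonal elements -/
lemma diag_conj {A : Type u} [CommRing A] {n : ℕ} {f : MvPolynomial (SpCoord n) A}
    (hf : IsSpInvariant f) {L : Type u} [CommRing L] [Algebra A L] (v w : SpCoord n → L)
    (d e : Fin n → L) (hde : ∀ i, d i * e i = 1)
    (ha : ∀ i j, w (Sum.inl (i, j)) * d j = d i * v (Sum.inl (i, j)))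
    (hb : ∀ i j, w (Sum.inr (Sum.inl s(i, j))) * e j = d i * v (Sum.inr (Sum.inl s(i, j))))
    (hc : ∀ i j, w (Sum.inr (Sum.inr s(i, j))) * d j = e i * v (Sum.inr (Sum.inr s(i, j)))) :
    aeval w f = aeval v f := by
  have hed : ∀ i, e i * d i = 1 := fun i => by rw [mul_comm, hde]
  have hD : (Matrix.fromBlocks (diagonal d) 0 0 (diagonal e))ᵀ * JJ n _ *
      (Matrix.fromBlocks (diagonal d) 0 0 (diagonal e)) = JJ n _ := by
    simp only [JJ, Matrix.fromBlocks_transpose, Matrix.fromBlocks_multiply]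
    congr 1
    · simp
    · simp [diagonal_mul_diagonal, hde]
    · simp only [transpose_zero, diagonal_transpose, mul_neg, mul_one, zero_add, neg_mul,
        diagonal_mul_diagonal, hed, mul_zero, add_zero, diagonal_one]
    · simp
  apply spinv_apply hf hD
  simp only [genSpMatrix, Matrix.fromBlocks_multiply]
  congr 1
  · ext1 i j
    simp [mul_diagonal, diagonal_mul, ha]
  · ext1 i j
    simp [mul_diagonal, diagonal_mul, hb]
  · ext1 i j
    simp [mul_diagonal, diagonal_mul, hc]
  · ext1 i j
    simp [mul_diagonal, diagonal_mul]
    linear_combination (e i * e j) * ha j i - w (Sum.inl (j, i)) * e j * hed i + e i * v (Sum.inl (j, i)) * hed j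

/-- contraction -/
lemma contraction {A : Type u} [CommRing A] {n : ℕ} {f : MvPolynomial (SpCoord n) A}
    (hf : IsSpInvariant f) {R : Type u} [CommRing R] [Algebra A R] (v : SpCoord n → R)
    (hA : ∀ i j, i < j → v (Sum.inl (i, j)) = 0) (hC : ∀ s, v (Sum.inr (Sum.inr s)) = 0) :
    aeval v f = aeval (fun i => v (Sum.inl (i, i))) (restrictToTorus f) := by
  let wt : Sym2 (Fin n) → ℕ := Sym2.lift ⟨fun i j => (i : ℕ) + j + 2, fun i j => by ring⟩
  let vs : SpCoord n → Polynomial R := fun s => match s with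
    | Sum.inl (i, j) => Polynomial.C (v (Sum.inl (i, j))) * Polynomial.X ^ ((i : ℕ) - j)
    | Sum.inr (Sum.inl s) => Polynomial.C (v (Sum.inr (Sum.inl s))) * Polynomial.X ^ (wt s)
    | Sum.inr (Sum.inr s) => 0
  let φ : Polynomial R →ₐ[A] LaurentPolynomial R := (Polynomial.toLaurentAlg (R := R)).restrictScalars A
  have hφ : Function.Injective φ := Polynomial.toLaurent_injective
  let x : LaurentPolynomial R := φ Polynomial.X
  let y : LaurentPolynomial R := LaurentPolynomial.T (-1)
  have hxy : x * y = 1 := by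
    change (Polynomial.X : Polynomial R).toLaurent * _ = _
    rw [Polynomial.toLaurent_X, ← LaurentPolynomial.T_add]; simp
  have hx : φ Polynomial.X = x := rfl
  clear_value x y
  have key : aeval (fun s => φ (vs s)) f = aeval (fun s => φ (Polynomial.C (v s))) f := by
    apply diag_conj hf _ _ (fun i => x ^ ((i : ℕ) + 1)) (fun i => y ^ ((i : ℕ) + 1))
    · intro i; rw [← mul_pow, hxy, one_pow]
    · intro i j
      rcases lt_or_ge i j with h | h
      · simp [vs, hA i j h]
      · have : (i : ℕ) + 1 = (i - j) + (j + 1) := by have : (j:ℕ) ≤ i := h; omega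
        simp only [vs, map_mul, map_pow, hx]
        rw [this, pow_add x]; simp; ring
    · intro i j
      simp only [vs, wt, Sym2.lift_mk, map_mul, map_pow, hx]
      have : (x * y) ^ ((j : ℕ) + 1) = 1 := by rw [hxy, one_pow]
      rw [mul_pow] at this
      have h2 : (i : ℕ) + j + 2 = (i + 1) + (j + 1) := by ring
      rw [h2, pow_add x]
      linear_combination φ (Polynomial.C (v (Sum.inr (Sum.inl s(i, j))))) * x ^ ((i : ℕ) + 1) * this
    · intro i j
      simp [vs, hC]
  have h1 : aeval vs f = Polynomial.C (aeval v f) := by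
    apply hφ
    have e1 : φ (aeval vs f) = aeval (fun s => φ (vs s)) f := by
      rw [← AlgHom.comp_apply, MvPolynomial.comp_aeval]
    have e2 : φ (Polynomial.C (aeval v f)) = aeval (fun s => φ (Polynomial.C (v s))) f := by
      have : φ (Polynomial.C (aeval v f)) = (φ.comp ((Polynomial.CAlgHom (R := R)).restrictScalars A)) (aeval v f) := rfl
      rw [this, ← AlgHom.comp_apply, MvPolynomial.comp_aeval]
      rfl
    rw [e1, e2, key]
  have h2 := congrArg ((Polynomial.aeval (0 : R)).restrictScalars A) h1
  rw [← AlgHom.comp_apply, MvPolynomial.comp_aeval] at h2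
  have h3 : ((Polynomial.aeval (0 : R)).restrictScalars A) (Polynomial.C (aeval v f)) = aeval v f := by
    change Polynomial.aeval (0 : R) _ = _
    rw [Polynomial.aeval_C]; rfl
  rw [h3] at h2
  rw [← h2, aeval_torus]
  congr 2
  funext s
  rcases s with ⟨i, j⟩ | s | s
  · rcases lt_trichotomy i j with h | h | h
    · simp [vs, torusPt, hA i j h, h.ne]
    · subst h; simp [vs, torusPt]
    · have : (i:ℕ) - j ≠ 0 := by have : (j:ℕ) < i := h; omega
      simp [vs, torusPt, this, h.ne']
  · induction s with | _ i j => simp [vs, wt, torusPt]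
  · simp [vs, torusPt]

lemma tr_aeval {n : ℕ} {R : Type*} [CommRing R] {M : Matrix (Fin n ⊕ Fin n) (Fin n ⊕ Fin n) R}
    (hM : Mᵀ * JJ n R = - (JJ n R * M)) (p : Polynomial R) :
    (Polynomial.aeval M p)ᵀ * JJ n R = JJ n R * Polynomial.aeval (-M) p := by
  induction p using Polynomial.induction_on with
  | C a => simp [Algebra.algebraMap_eq_smul_one]
  | add p q hp hq => simp [add_mul, mul_add, hp, hq]
  | monomial k a ih =>
    have h : Polynomial.C a * Polynomial.X ^ (k + 1) =
      (Polynomial.C a * Polynomial.X ^ k) * Polynomial.X := by ring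
    have h' : Polynomial.C a * Polynomial.X ^ (k + 1) =
      Polynomial.X * (Polynomial.C a * Polynomial.X ^ k) := by ring
    generalize Polynomial.C a * Polynomial.X ^ k = q at *
    have e1 : Polynomial.aeval M (q * Polynomial.X) = Polynomial.aeval M q * M := by
      rw [map_mul, Polynomial.aeval_X]
    have e2 : Polynomial.aeval (-M) (Polynomial.X * q) = -M * Polynomial.aeval (-M) q := by
      rw [map_mul, Polynomial.aeval_X]
    conv_lhs => rw [h, e1]
    rw [h', e2, Matrix.transpose_mul, mul_assoc, ih, ← mul_assoc, hM]
    simp only [neg_mul, mul_neg, mul_assoc]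

noncomputable def NN {n : ℕ} {R : Type*} [CommRing R] (t : Fin n → R) : Polynomial R :=
  ∏ i, (Polynomial.X + Polynomial.C (t i))

noncomputable def DD {n : ℕ} {R : Type*} [CommRing R] (t : Fin n → R) (m : ℕ) : Polynomial R :=
  ∏ i with (i : Fin n).val < m, (Polynomial.X - Polynomial.C (t i))

lemma DD_top {n : ℕ} {R : Type*} [CommRing R] (t : Fin n → R) :
    DD t n = ∏ i, (Polynomial.X - Polynomial.C (t i)) := by
  unfold DD
  congr 1
  ext i; simp

lemma DD_succ {n : ℕ} {R : Type*} [CommRing R] (t : Fin n → R) (k : Fin n) :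
    DD t (k + 1) = (Polynomial.X - Polynomial.C (t k)) * DD t k := by
  unfold DD
  rw [← Finset.prod_insert (f := fun i => Polynomial.X - Polynomial.C (t i)) (by simp)]
  congr 1
  ext i
  simp only [Finset.mem_filter, Finset.mem_univ, true_and, Finset.mem_insert, Fin.ext_iff]
  omega

lemma NN_neg {n : ℕ} {R : Type*} [CommRing R] (t : Fin n → R) :
    (NN t).comp (-Polynomial.X) = (-1) ^ n * DD t n := by
  rw [DD_top, NN, Polynomial.prod_comp]
  have : ∀ i, (Polynomial.X + Polynomial.C (t i)).comp (-Polynomial.X) =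
    (-1) * (Polynomial.X - Polynomial.C (t i)) := fun i => by simp; ring
  simp only [this, Finset.prod_mul_distrib]
  simp

lemma pp_monic {n : ℕ} {R : Type*} [CommRing R] (t : Fin n → R) (m : ℕ) :
    (NN t * DD t m).Monic := by
  apply Polynomial.Monic.mul
  · exact Polynomial.monic_prod_of_monic _ _ fun i _ => Polynomial.monic_X_add_C _
  · exact Polynomial.monic_prod_of_monic _ _ fun i _ => Polynomial.monic_X_sub_C _

lemma pp_deg {n : ℕ} {R : Type*} [CommRing R] [Nontrivial R] (t : Fin n → R) (k : Fin n) :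
    (NN t * DD t k).natDegree = n + k := by
  have h1 : (NN t).Monic := Polynomial.monic_prod_of_monic _ _ fun i _ => Polynomial.monic_X_add_C _
  have h2 : (DD t k).Monic := Polynomial.monic_prod_of_monic _ _ fun i _ => Polynomial.monic_X_sub_C _
  rw [h1.natDegree_mul h2, NN, DD, Polynomial.natDegree_prod_of_monic _ _ fun i _ => Polynomial.monic_X_add_C _,
    Polynomial.natDegree_prod_of_monic _ _ fun i _ => Polynomial.monic_X_sub_C _]
  have : (Finset.univ.filter fun x : Fin n => (x : ℕ) < k) = Finset.Iio k := by
    ext x; simp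
  simp only [Polynomial.natDegree_X_add_C, Polynomial.natDegree_X_sub_C, this]
  simp

lemma sp_complete {n : ℕ} {R : Type*} [CommRing R] (E : Matrix (Fin n ⊕ Fin n) (Fin n) R)
    (hE : Eᵀ * JJ n R * E = 0) (G : Matrix (Fin n) (Fin n ⊕ Fin n) R) (hG : G * E = 1) :
    ∃ F : Matrix (Fin n ⊕ Fin n) (Fin n) R, Eᵀ * JJ n R * F = 1 ∧ Fᵀ * JJ n R * F = 0 := by
  set F0 := - (JJ n R * Gᵀ) with hF0
  have h1 : Eᵀ * JJ n R * F0 = 1 := by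
    rw [hF0, Matrix.mul_neg, Matrix.mul_assoc, ← Matrix.mul_assoc (JJ n R), JJ_sq]
    rw [Matrix.neg_mul, Matrix.mul_neg, neg_neg, Matrix.one_mul, ← Matrix.transpose_mul, hG, Matrix.transpose_one]
  have h2 : F0ᵀ * JJ n R * E = -1 := by
    have := congrArg Matrix.transpose h1
    rw [Matrix.transpose_mul, Matrix.transpose_mul, JJ_tr, Matrix.transpose_transpose, Matrix.transpose_one] at this
    rw [← this]; simp [Matrix.mul_assoc]
  set W := F0ᵀ * JJ n R * F0 with hW
  have hWd : ∀ i, W i i = 0 := by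
    intro i
    rw [hW, Matrix.mul_assoc]
    simp [Matrix.mul_apply, JJ, Fintype.sum_sum_type, Matrix.one_apply, mul_comm]
  have hWt : ∀ i j, W j i = - W i j := by
    intro i j
    have : Wᵀ = - W := by
      rw [hW, Matrix.transpose_mul, Matrix.transpose_mul, JJ_tr, Matrix.transpose_transpose]
      simp [Matrix.mul_assoc]
    exact congrFun (congrFun this i) j
  clear_value W
  let S : Matrix (Fin n) (Fin n) R := Matrix.of fun i j => if i < j then W i j else 0
  have hS : W - S + Sᵀ = 0 := by
    ext i j
    simp only [S, Matrix.add_apply, Matrix.sub_apply, Matrix.transpose_apply, Matrix.of_apply, Matrix.zero_apply]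
    rcases lt_trichotomy i j with h | h | h
    · simp [h, h.not_gt]
    · subst h; simp [hWd]
    · simp [h, h.not_gt, hWt i j]
  refine ⟨F0 + E * S, ?_, ?_⟩
  · rw [Matrix.mul_add, h1, ← Matrix.mul_assoc, hE]; simp
  · rw [Matrix.transpose_add, Matrix.add_mul, Matrix.add_mul, Matrix.mul_add, Matrix.mul_add, ← hW,
      ← Matrix.mul_assoc _ E S, h2, Matrix.transpose_mul, Matrix.mul_assoc Sᵀ, Matrix.mul_assoc Sᵀ,
      Matrix.mul_assoc Sᵀ, h1, ← Matrix.mul_assoc _ E S, hE, Matrix.zero_mul, Matrix.mul_zero, Matrix.mul_one, Matrix.neg_mul, Matrix.one_mul,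
      add_zero, ← sub_eq_add_neg, hS]

lemma borel_form {n : ℕ} {R : Type*} [CommRing R] (M : Matrix (Fin n ⊕ Fin n) (Fin n ⊕ Fin n) R)
    (hM : Mᵀ * JJ n R = - (JJ n R * M)) (t : Fin n → R)
    (hχ : M.charpoly = NN t * DD t n) (c : Fin n ⊕ Fin n → R)
    (φ : Fin n → Fin n ⊕ Fin n → R)
    (hφ0 : ∀ (j : Fin n) (i : ℕ), i < n + j → φ j ⬝ᵥ (M ^ i *ᵥ c) = 0)
    (hφ1 : ∀ (j : Fin n), φ j ⬝ᵥ (M ^ (n + j : ℕ) *ᵥ c) = 1) :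
    ∃ (P : Matrix (Fin n ⊕ Fin n) (Fin n ⊕ Fin n) R) (U B D : Matrix (Fin n) (Fin n) R),
      Pᵀ * JJ n R * P = JJ n R ∧ M * P = P * Matrix.fromBlocks U B 0 D ∧
      (∀ i j, i < j → U i j = 0) ∧ (∀ i, U i i = t i) := by
  nontriviality R
  let u : ℕ → Fin n ⊕ Fin n → R := fun m => Polynomial.aeval M (NN t * DD t m) *ᵥ c
  have hun : u n = 0 := by
    simp only [u]; rw [← hχ, Matrix.aeval_self_charpoly, Matrix.zero_mulVec]
  have hMu : ∀ k : Fin n, M *ᵥ u k = t k • u k + u (k + 1) := by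
    intro k
    simp only [u]
    have : Polynomial.X * (NN t * DD t k) = Polynomial.C (t k) * (NN t * DD t k) + NN t * DD t (k + 1) := by
      rw [DD_succ]; ring
    have h := congrArg (Polynomial.aeval M) this
    rw [map_mul, map_add, Polynomial.aeval_X] at h
    rw [Matrix.mulVec_mulVec, h, Matrix.add_mulVec, map_mul (Polynomial.aeval M) (Polynomial.C _), Polynomial.aeval_C,
      Algebra.algebraMap_eq_smul_one, Matrix.smul_mul, Matrix.one_mul, Matrix.smul_mulVec]
  let E : Matrix (Fin n ⊕ Fin n) (Fin n) R := Matrix.of fun a k => u k a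
  let U : Matrix (Fin n) (Fin n) R := Matrix.of fun i k =>
    (if i = k then t k else 0) + (if (i : ℕ) = k + 1 then 1 else 0)
  have hMEU : M * E = E * U := by
    ext a k
    have h1 : (M * E) a k = (M *ᵥ u k) a := rfl
    rw [h1, hMu]
    simp only [Matrix.mul_apply, U, E, Matrix.of_apply, mul_add, Finset.sum_add_distrib, Pi.add_apply, Pi.smul_apply, smul_eq_mul]
    congr 1
    · simp [mul_comm]
    · by_cases hk : (k : ℕ) + 1 < n
      · rw [Finset.sum_eq_single ⟨k + 1, hk⟩]
        · simp
        · intro b _ hb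
          have : ¬ (b : ℕ) = k + 1 := fun h => hb (Fin.ext h)
          simp [this]
        · simp
      · have : (k : ℕ) + 1 = n := by omega
        rw [this, hun, Finset.sum_eq_zero]
        · rfl
        · intro b _
          simp [b.isLt.ne]
  have hE : Eᵀ * JJ n R * E = 0 := by
    ext k l
    have h1 : (Eᵀ * JJ n R * E) k l = u k ⬝ᵥ (JJ n R *ᵥ u l) := by
      rw [Matrix.mul_assoc]; rfl
    have h2 : JJ n R * (Polynomial.aeval (-M) (NN t * DD t k) * Polynomial.aeval M (NN t * DD t l)) = 0 := by
      have h3 : Polynomial.aeval (-M) (NN t * DD t k) = Polynomial.aeval M ((NN t * DD t k).comp (-Polynomial.X)) := by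
        rw [Polynomial.aeval_comp]; simp
      rw [h3, ← map_mul, Polynomial.mul_comp, NN_neg]
      have h4 : (-1) ^ n * DD t n * (DD t k).comp (-Polynomial.X) * (NN t * DD t l) =
        (NN t * DD t n) * ((-1) ^ n * (DD t k).comp (-Polynomial.X) * DD t l) := by ring
      rw [h4, ← hχ, map_mul, Matrix.aeval_self_charpoly]; simp
    rw [h1]
    simp only [u]
    rw [Matrix.mulVec_mulVec, ← Matrix.vecMul_transpose, ← Matrix.dotProduct_mulVec, Matrix.mulVec_mulVec,
      ← Matrix.mul_assoc, tr_aeval hM, Matrix.mul_assoc, h2]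
    simp
  let Φ : Matrix (Fin n) (Fin n) R := Matrix.of φ * E
  have hΦ : ∀ j k : Fin n, k ≤ j → Φ j k = if j = k then 1 else 0 := by
    intro j k hjk
    have h1 : Φ j k = φ j ⬝ᵥ u k := rfl
    rw [h1]; simp only [u]
    rw [Polynomial.aeval_eq_sum_range, pp_deg, Matrix.sum_mulVec, dotProduct_sum]
    have hlow : ∀ i ∈ Finset.range (n + k), φ j ⬝ᵥ (((NN t * DD t k).coeff i • M ^ i) *ᵥ c) = 0 := by
      intro i hi
      have hi' : i < n + k := Finset.mem_range.1 hi
      rw [Matrix.smul_mulVec, dotProduct_smul, hφ0 j i (by have : (k : ℕ) ≤ j := hjk; omega), smul_zero]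
    rw [Finset.sum_range_succ, Finset.sum_eq_zero hlow, zero_add]
    have hl : (NN t * DD t k).coeff (n + k) = 1 := by
      have := pp_monic t k
      rwa [Polynomial.Monic, Polynomial.leadingCoeff, pp_deg] at this
    rw [hl, one_smul]
    split_ifs with h
    · subst h; exact hφ1 j
    · apply hφ0; have : (k : ℕ) ≤ j := hjk; have : (j : ℕ) ≠ k := fun h' => h (Fin.ext h'); omega
  have hdet : Φ.det = 1 := by
    rw [Matrix.det_of_isUpperTriangular]
    · exact Finset.prod_eq_one fun i _ => by rw [hΦ i i le_rfl, if_pos rfl]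
    · intro i j hij
      have hij' : j < i := hij
      rw [hΦ i j hij'.le, if_neg hij'.ne']
  obtain ⟨F, hF1, hF2⟩ := sp_complete E hE (Φ⁻¹ * Matrix.of φ) (by
    rw [Matrix.mul_assoc]; exact Matrix.nonsing_inv_mul _ (by rw [hdet]; exact isUnit_one))
  have hF3 : Fᵀ * JJ n R * E = -1 := by
    have := congrArg Matrix.transpose hF1
    rw [Matrix.transpose_mul, Matrix.transpose_mul, JJ_tr, Matrix.transpose_transpose, Matrix.transpose_one] at this
    rw [← this]; simp [Matrix.mul_assoc]
  have hP : (Matrix.fromCols E F)ᵀ * JJ n R * Matrix.fromCols E F = JJ n R := by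
    rw [Matrix.transpose_fromCols, Matrix.fromRows_mul, Matrix.fromRows_mul_fromCols, hE, hF1, hF2, hF3]
  have hu := sp_isUnit hP
  refine ⟨Matrix.fromCols E F, U, ((Matrix.fromCols E F)⁻¹ * M * F).toRows₁,
    ((Matrix.fromCols E F)⁻¹ * M * F).toRows₂, hP, ?_, ?_, ?_⟩
  · rw [Matrix.mul_fromCols, Matrix.fromCols_mul_fromBlocks, hMEU, Matrix.mul_zero, add_zero,
      ← Matrix.fromCols_mul_fromRows, Matrix.fromRows_toRows, ← Matrix.mul_assoc, ← Matrix.mul_assoc,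
      Matrix.mul_nonsing_inv _ hu, Matrix.one_mul]
  · intro i j hij
    have h1 : (i : ℕ) ≠ j + 1 := by have : (i : ℕ) < j := hij; omega
    simp [U, hij.ne, h1]
  · intro i; simp [U]

lemma key {A : Type u} [CommRing A] {n : ℕ} {f : MvPolynomial (SpCoord n) A}
    (hf : IsSpInvariant f) {R : Type u} [CommRing R] [Algebra A R] (v : SpCoord n → R) (t : Fin n → R)
    (hχ : (genSpMatrix n v).charpoly = NN t * DD t n) (c : Fin n ⊕ Fin n → R)
    (hK : IsUnit (Matrix.of (fun a (b : Fin n ⊕ Fin n) =>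
      (genSpMatrix n v ^ (Sum.elim (fun j : Fin n => (j : ℕ)) (fun j : Fin n => n + (j : ℕ)) b) *ᵥ c) a)).det) :
    aeval v f = aeval t (restrictToTorus f) := by
  set K := (Matrix.of (fun a (b : Fin n ⊕ Fin n) =>
      (genSpMatrix n v ^ (Sum.elim (fun j : Fin n => (j : ℕ)) (fun j : Fin n => n + (j : ℕ)) b) *ᵥ c) a)) with hKdef
  have hKK : K⁻¹ * K = 1 := Matrix.nonsing_inv_mul _ hK
  have hent : ∀ (j : Fin n) b, K⁻¹ (Sum.inr j) ⬝ᵥ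
      (genSpMatrix n v ^ (Sum.elim (fun j : Fin n => (j : ℕ)) (fun j : Fin n => n + (j : ℕ)) b) *ᵥ c) =
      (1 : Matrix (Fin n ⊕ Fin n) (Fin n ⊕ Fin n) R) (Sum.inr j) b := by
    intro j b
    rw [← hKK]; rfl
  obtain ⟨P, U, B, D, hP, hMP, hU, hUd⟩ := borel_form (genSpMatrix n v) (gen_sp n v) t hχ c
    (fun j => K⁻¹ (Sum.inr j)) (by
      intro j i hi
      by_cases h : i < n
      · have := hent j (Sum.inl ⟨i, h⟩)
        simpa using this
      · have := hent j (Sum.inr ⟨i - n, by omega⟩)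
        have h2 : n + (i - n) = i := by omega
        simp only [Sum.elim_inr, h2] at this
        rw [this, Matrix.one_apply_ne]
        intro h3
        have := congrArg Fin.val (Sum.inr_injective h3)
        simp at this; omega) (by
      intro j
      have := hent j (Sum.inr j)
      simpa using this)
  obtain ⟨w, hw⟩ := sp_exists n (Matrix.fromBlocks U B 0 D) (by
    have hu := sp_isUnit hP
    have h1 : P * (Matrix.fromBlocks U B 0 D) = genSpMatrix n v * P := hMP.symm
    generalize Matrix.fromBlocks U B 0 D = Y at h1
    have h2 := gen_sp n v
    calc Yᵀ * JJ n R = (P * Y)ᵀ * JJ n R * P := by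
          rw [Matrix.transpose_mul, Matrix.mul_assoc, Matrix.mul_assoc, ← Matrix.mul_assoc Pᵀ, hP]
      _ = Pᵀ * ((genSpMatrix n v)ᵀ * JJ n R) * P := by
          rw [h1, Matrix.transpose_mul]; simp only [Matrix.mul_assoc]
      _ = - (Pᵀ * JJ n R * (P * Y)) := by
          rw [h2, h1]; simp only [Matrix.mul_assoc, Matrix.mul_neg, Matrix.neg_mul]
      _ = _ := by rw [← Matrix.mul_assoc, hP])
  have hA : ∀ i j, w (Sum.inl (i, j)) = U i j := fun i j => by
    have := congrFun (congrFun hw (Sum.inl i)) (Sum.inl j)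
    simpa [genSpMatrix] using this
  have hC : ∀ s, w (Sum.inr (Sum.inr s)) = 0 := fun s => by
    induction s with | _ i j =>
    have := congrFun (congrFun hw (Sum.inr i)) (Sum.inl j)
    simpa [genSpMatrix] using this
  rw [spinv_apply hf hP (v := w) (w := v) (by rw [hw, hMP]),
    contraction hf w (fun i j h => by rw [hA, hU i j h]) hC]
  congr 2
  funext i
  rw [hA, hUd]

lemma gen_map {R S : Type*} [CommRing R] [CommRing S] (n : ℕ) (φ : R →+* S) (v : SpCoord n → R) :
    genSpMatrix n (fun s => φ (v s)) = (genSpMatrix n v).map φ := by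
  unfold genSpMatrix
  rw [Matrix.fromBlocks_map]
  congr 1
  ext i j; simp

lemma det_add_sub {n : ℕ} {R : Type*} [CommRing R] {M : Matrix (Fin n ⊕ Fin n) (Fin n ⊕ Fin n) R}
    (hM : Mᵀ * JJ n R = - (JJ n R * M)) (r : R) :
    (Matrix.scalar _ (-r) - M).det = (Matrix.scalar _ r - M).det := by
  have hJ : IsUnit (JJ n R).det := by
    rw [← Matrix.isUnit_iff_isUnit_det]
    exact IsUnit.of_mul_eq_one (-(JJ n R)) (by rw [mul_neg, JJ_sq, neg_neg])
  have h1 : JJ n R * (Matrix.scalar _ r + M) = (Matrix.scalar _ r - M)ᵀ * JJ n R := by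
    rw [Matrix.transpose_sub, sub_mul, hM, mul_add, sub_neg_eq_add]
    congr 1
    simp [Matrix.scalar_apply, ← Matrix.smul_one_eq_diagonal]
  have h2 := congrArg Matrix.det h1
  rw [Matrix.det_mul, Matrix.det_mul, Matrix.det_transpose, mul_comm] at h2
  rw [← hJ.mul_right_cancel h2]
  have h3 : Matrix.scalar _ (-r) - M = -(Matrix.scalar _ r + M) := by
    rw [map_neg]; abel
  rw [h3, Matrix.det_neg]
  simp [← two_mul]

lemma charpoly_odd {R : Type*} [CommRing R] (n : ℕ) (v : SpCoord n → R) (k : ℕ) (hk : Odd k) :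
    (genSpMatrix n v).charpoly.coeff k = 0 := by
  let φ : MvPolynomial (SpCoord n) ℤ →+* R := MvPolynomial.eval₂Hom (Int.castRingHom R) v
  have h1 : genSpMatrix n v = (genSpMatrix n (fun s => (X s : MvPolynomial (SpCoord n) ℤ))).map φ := by
    rw [← gen_map]; simp [φ]
  rw [h1, Matrix.charpoly_map, Polynomial.coeff_map]
  set M := genSpMatrix n (fun s => (X s : MvPolynomial (SpCoord n) ℤ)) with hMd
  have h2 : M.charpoly.comp (-Polynomial.X) = M.charpoly := by
    apply Polynomial.funext
    intro r
    rw [Polynomial.eval_comp, Matrix.eval_charpoly, Matrix.eval_charpoly, Polynomial.eval_neg, Polynomial.eval_X]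
    exact det_add_sub (gen_sp n _) r
  have h3 := congrArg (fun p => Polynomial.coeff p k) h2
  have h5 : (-Polynomial.X : Polynomial (MvPolynomial (SpCoord n) ℤ)) = Polynomial.C (-1) * Polynomial.X := by
    rw [Polynomial.C_neg, Polynomial.C_1]
    ring
  simp only [h5, Polynomial.comp_C_mul_X_coeff, hk.neg_one_pow] at h3
  have h4 : (2 : MvPolynomial (SpCoord n) ℤ) * M.charpoly.coeff k = 0 := by linear_combination -h3
  rw [(mul_eq_zero.1 h4).resolve_left two_ne_zero, map_zero]

lemma charpoly_expand {R : Type*} [CommRing R] (n : ℕ) (v : SpCoord n → R) :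
    Polynomial.expand R 2 (Polynomial.contract 2 (genSpMatrix n v).charpoly) = (genSpMatrix n v).charpoly := by
  ext k
  rw [Polynomial.coeff_expand two_pos]
  split_ifs with h
  · rw [Polynomial.coeff_contract two_ne_zero, Nat.div_mul_cancel h]
  · rw [charpoly_odd]; rwa [← Nat.not_even_iff_odd, even_iff_two_dvd]

lemma exists_roots (n : ℕ) : ∀ (S : Type u) [CommRing S] [Nontrivial S] (q : Polynomial S),
    q.Monic → q.natDegree = n → ∃ (R : Type u) (_ : CommRing R) (φ : S →+* R),
      Function.Injective φ ∧ ∃ t : Fin n → R, q.map φ = ∏ i, (Polynomial.X - Polynomial.C (t i ^ 2)) := by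
  induction n with
  | zero =>
    intro S _ _ q hq hd
    refine ⟨S, inferInstance, RingHom.id S, fun _ _ h => h, fun i => i.elim0, ?_⟩
    rw [Polynomial.eq_one_of_monic_natDegree_zero hq hd]; simp
  | succ n ih =>
    intro S _ _ q hq hd
    set p := Polynomial.expand S 2 q with hp
    have hpm : p.Monic := (Polynomial.monic_expand_iff two_pos).2 hq
    have hpu : ¬ IsUnit p := by
      intro hu
      have := hpm.eq_one_of_isUnit hu
      have h2 := Polynomial.natDegree_expand 2 q
      rw [← hp, this, hd] at h2; simp at h2
    have := hpm.free_adjoinRoot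
    have : Nontrivial (AdjoinRoot p) := Ideal.Quotient.nontrivial_iff.mpr (by simpa)
    have hroot : (q.map (algebraMap S (AdjoinRoot p))).IsRoot (AdjoinRoot.root p ^ 2) := by
      have := AdjoinRoot.eval₂_root p
      rw [Polynomial.IsRoot, Polynomial.eval_map, AdjoinRoot.algebraMap_eq]
      conv at this => lhs; arg 3; rw [hp, Polynomial.expand_eq_comp_X_pow]
      rw [Polynomial.eval₂_comp] at this
      simpa using this
    obtain ⟨q', hq'⟩ := Polynomial.dvd_iff_isRoot.2 hroot
    have hqm : q'.Monic := .of_mul_monic_left (Polynomial.monic_X_sub_C _) (hq' ▸ hq.map _)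
    have hqd : q'.natDegree = n := by
      have h1 := hq.natDegree_map (algebraMap S (AdjoinRoot p))
      rw [hq', (Polynomial.monic_X_sub_C _).natDegree_mul hqm, hd, Polynomial.natDegree_X_sub_C] at h1
      omega
    obtain ⟨R, _, φ, hφ, t, ht⟩ := ih (AdjoinRoot p) q' hqm hqd
    refine ⟨R, inferInstance, φ.comp (algebraMap S (AdjoinRoot p)),
      hφ.comp (FaithfulSMul.algebraMap_injective S _), Fin.cons (φ (AdjoinRoot.root p)) t, ?_⟩
    rw [← Polynomial.map_map, hq', Polynomial.map_mul, ht, Fin.prod_univ_succ]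
    simp

lemma expand_prod {R : Type*} [CommRing R] {n : ℕ} (t : Fin n → R) :
    Polynomial.expand R 2 (∏ i, (Polynomial.X - Polynomial.C (t i ^ 2))) = NN t * DD t n := by
  rw [DD_top, NN, ← Finset.prod_mul_distrib, map_prod]
  refine Finset.prod_congr rfl fun i _ => ?_
  simp; ring

lemma exists_split {S : Type u} [CommRing S] [Nontrivial S] (n : ℕ) (v : SpCoord n → S) :
    ∃ (R : Type u) (_ : CommRing R) (φ : S →+* R), Function.Injective φ ∧ ∃ t : Fin n → R,
      (genSpMatrix n (fun s => φ (v s))).charpoly = NN t * DD t n := by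
  have he := charpoly_expand n v
  obtain ⟨R, _, φ, hφ, t, ht⟩ := exists_roots n S (Polynomial.contract 2 (genSpMatrix n v).charpoly)
    (by rw [← Polynomial.monic_expand_iff two_pos, he]; exact Matrix.charpoly_monic _)
    (by
      have := Polynomial.natDegree_expand 2 (Polynomial.contract 2 (genSpMatrix n v).charpoly)
      rw [he, Matrix.charpoly_natDegree_eq_dim] at this
      simp at this; omega)
  refine ⟨R, inferInstance, φ, hφ, t, ?_⟩
  rw [gen_map, Matrix.charpoly_map, ← he, Polynomial.map_expand, ht, expand_prod]

/-- Krylov matrix -/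
def KK {n : ℕ} {R : Type*} [CommRing R] (M : Matrix (Fin n ⊕ Fin n) (Fin n ⊕ Fin n) R)
    (c : Fin n ⊕ Fin n → R) : Matrix (Fin n ⊕ Fin n) (Fin n ⊕ Fin n) R :=
  Matrix.of (fun a (b : Fin n ⊕ Fin n) =>
      (M ^ (Sum.elim (fun j : Fin n => (j : ℕ)) (fun j : Fin n => n + (j : ℕ)) b) *ᵥ c) a)

lemma KK_map {n : ℕ} {R S : Type*} [CommRing R] [CommRing S] (φ : R →+* S)
    (M : Matrix (Fin n ⊕ Fin n) (Fin n ⊕ Fin n) R) (c : Fin n ⊕ Fin n → R) :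
    KK (M.map φ) (fun a => φ (c a)) = (KK M c).map φ := by
  ext a b
  simp only [KK, Matrix.of_apply, Matrix.map_apply]
  rw [RingHom.map_mulVec, Matrix.map_pow]
  rfl

def v0 (n : ℕ) (A : Type*) [CommRing A] : SpCoord n → A := fun s => match s with
  | Sum.inl (i, j) => if (i : ℕ) = j + 1 then 1 else 0
  | Sum.inr (Sum.inl _) => 0
  | Sum.inr (Sum.inr s) => Sym2.lift ⟨fun i j : Fin n => if (i : ℕ) + 1 = n ∧ (j : ℕ) + 1 = n then (1 : A) else 0,
      fun i j => by simp only [and_comm]⟩ s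

lemma krylov0 (n : ℕ) (A : Type*) [CommRing A] (hn : 0 < n) (i : ℕ) (hi : i < n) :
    genSpMatrix n (v0 n A) ^ i *ᵥ Pi.single (Sum.inl ⟨0, hn⟩) 1 = Pi.single (Sum.inl ⟨i, hi⟩) 1 := by
  induction i with
  | zero => rw [pow_zero, Matrix.one_mulVec]
  | succ i ih =>
    rw [pow_succ', ← Matrix.mulVec_mulVec, ih (by omega), Matrix.mulVec_single_one]
    ext a
    rcases a with a | a
    · simp [genSpMatrix, v0, Pi.single_apply, Fin.ext_iff]
    · have : ¬ (i + 1 = n) := by omega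
      simp [genSpMatrix, v0, this]

lemma krylov1 (n : ℕ) (A : Type*) [CommRing A] (hn : 0 < n) (j : ℕ) (hj : j < n) :
    genSpMatrix n (v0 n A) ^ (n + j) *ᵥ Pi.single (Sum.inl ⟨0, hn⟩) 1 =
      Pi.single (Sum.inr ⟨n - 1 - j, by omega⟩) ((-1) ^ j) := by
  induction j with
  | zero =>
    obtain ⟨m, rfl⟩ : ∃ m, n = m + 1 := ⟨n - 1, by omega⟩
    rw [add_zero, pow_succ', ← Matrix.mulVec_mulVec, krylov0 _ _ _ m (by omega), Matrix.mulVec_single_one]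
    ext a
    rcases a with a | a
    · have : ¬ ((a : ℕ) = m + 1) := by omega
      simp [genSpMatrix, v0, this]
    · simp [genSpMatrix, v0, Pi.single_apply, Fin.ext_iff]
  | succ j ih =>
    rw [← add_assoc, pow_succ', ← Matrix.mulVec_mulVec, ih (by omega)]
    have : (Pi.single (Sum.inr (⟨n - 1 - j, by omega⟩ : Fin n)) ((-1) ^ j) : Fin n ⊕ Fin n → A) =
      ((-1) ^ j : A) • Pi.single (Sum.inr (⟨n - 1 - j, by omega⟩ : Fin n)) 1 := by
      rw [← Pi.single_smul]; simp
    rw [this, Matrix.mulVec_smul, Matrix.mulVec_single_one]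
    ext a
    rcases a with a | a
    · simp [genSpMatrix, v0]
    · simp only [genSpMatrix, v0, Pi.single_apply, Fin.ext_iff, Pi.smul_apply, Matrix.col_apply, Matrix.fromBlocks_apply₂₂,
        Matrix.neg_apply, Matrix.transpose_apply, Matrix.of_apply, Sum.inr.injEq, smul_eq_mul]
      have : (n - 1 - j = (a : ℕ) + 1) ↔ ((a : ℕ) = n - 1 - (j + 1)) := by omega
      simp only [this]
      split_ifs <;> simp [pow_succ]

lemma KK0 (n : ℕ) (A : Type*) [CommRing A] (hn : 0 < n) :
    IsUnit (KK (genSpMatrix n (v0 n A)) (Pi.single (Sum.inl ⟨0, hn⟩) 1)).det := by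
  rw [← Matrix.isUnit_iff_isUnit_det]
  set K := KK (genSpMatrix n (v0 n A)) (Pi.single (Sum.inl ⟨0, hn⟩) 1) with hK
  have h1 : ∀ a (i : Fin n), K a (Sum.inl i) = (Pi.single (Sum.inl i) 1 : Fin n ⊕ Fin n → A) a := by
    intro a i
    have := krylov0 n A hn i i.2
    exact congrFun this a
  have h2 : ∀ a (i : Fin n), K a (Sum.inr i) =
      (Pi.single (Sum.inr ⟨n - 1 - i, by omega⟩) ((-1) ^ (i : ℕ)) : Fin n ⊕ Fin n → A) a := by
    intro a i
    have := krylov1 n A hn i i.2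
    exact congrFun this a
  have : Kᵀ * K = 1 := by
    ext a b
    simp only [Matrix.mul_apply, Matrix.transpose_apply]
    rcases a with a | a <;> rcases b with b | b
    · simp [h1, Pi.single_apply, Matrix.one_apply, eq_comm]
    · simp [h1, h2, Pi.single_apply]
    · simp [h1, h2, Pi.single_apply]
    · simp only [h2]
      rw [Finset.sum_eq_single (Sum.inr ⟨n - 1 - a, by omega⟩)]
      · simp only [Pi.single_apply, Matrix.one_apply, if_true, Sum.inr.injEq, Fin.ext_iff]
        have : (n - 1 - (a:ℕ) = n - 1 - b) ↔ ((a : ℕ) = b) := by omega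
        simp only [this]
        by_cases hab : (a : ℕ) = b
        · simp [hab, ← mul_pow]
        · simp [hab]
      · intro c _ hc
        simp [Pi.single_apply, hc]
      · simp
  exact IsUnit.of_mul_eq_one_right _ this

lemma part1 {A : Type u} [CommRing A] (n : ℕ) (hn : 1 ≤ n) (f g : MvPolynomial (SpCoord n) A)
    (hf : IsSpInvariant f) (hg : IsSpInvariant g) (h : restrictToTorus f = restrictToTorus g) : f = g := by
  nontriviality A
  let S := MvPowerSeries (SpCoord n) A
  let τ : MvPolynomial (SpCoord n) A →ₐ[A] MvPolynomial (SpCoord n) A := aeval fun s => X s + C (v0 n A s)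
  have hτ : Function.Injective τ := by
    let τ' : MvPolynomial (SpCoord n) A →ₐ[A] MvPolynomial (SpCoord n) A := aeval fun s => X s - C (v0 n A s)
    have : τ'.comp τ = AlgHom.id A _ := by
      ext s; simp [τ, τ']
    exact Function.LeftInverse.injective (g := τ') fun p => congrArg (fun F => F p) this
  let ι : MvPolynomial (SpCoord n) A →+* S := MvPolynomial.coeToMvPowerSeries.ringHom
  have hι : Function.Injective ι := MvPolynomial.coe_injective _ _
  let vS : SpCoord n → S := fun s => ι (X s + C (v0 n A s))
  obtain ⟨R, _, φ, hφ, t, ht⟩ := exists_split n vS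
  let _ : Algebra A R := ((φ.comp ι).comp C).toAlgebra
  have hK : IsUnit (KK (genSpMatrix n fun s => φ (vS s)) (fun a => φ ((Pi.single (Sum.inl ⟨0, hn⟩) 1 : _ → S) a))).det := by
    rw [gen_map, KK_map]
    have h1 : IsUnit (KK (genSpMatrix n vS) (Pi.single (Sum.inl ⟨0, hn⟩) 1)).det := by
      rw [MvPowerSeries.isUnit_iff_constantCoeff, RingHom.map_det, RingHom.mapMatrix_apply, ← KK_map, ← gen_map]
      convert KK0 n A hn using 5
      · rename_i s
        change MvPowerSeries.constantCoeff
          ((X s + C (v0 n A s) : MvPolynomial (SpCoord n) A) : MvPowerSeries (SpCoord n) A) = _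
        rw [MvPolynomial.coe_add, MvPolynomial.coe_X, MvPolynomial.coe_C]
        simp
      · rename_i a
        by_cases ha : a = Sum.inl ⟨0, hn⟩
        · subst ha; simp
        · simp [ha]
    have := h1.map φ
    rwa [RingHom.map_det] at this
  have e : ∀ p : MvPolynomial (SpCoord n) A, aeval (fun s => φ (vS s)) p = φ (ι (τ p)) := by
    intro p
    let Ψ : MvPolynomial (SpCoord n) A →ₐ[A] R := { φ.comp ι with commutes' := fun r => rfl }
    have : aeval (fun s => φ (vS s)) = Ψ.comp τ := by
      ext s
      simp [τ, vS]
      rfl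
    rw [this]; rfl
  have h1 := key hf (fun s => φ (vS s)) t ht _ hK
  have h2 := key hg (fun s => φ (vS s)) t ht _ hK
  rw [h, ← h2, e, e] at h1
  exact hτ (hι (hφ h1))

lemma part2 {A : Type u} [CommRing A] (n : ℕ) (f : MvPolynomial (SpCoord n) A)
    (hf : IsSpInvariant f) : IsHyperoctahedralInvariant (restrictToTorus f) := by
  constructor
  · intro σ
    rw [show rename σ (restrictToTorus f) = aeval (fun i => (X (σ i) : MvPolynomial (Fin n) A)) (restrictToTorus f) from by
        have hr : (rename σ : MvPolynomial (Fin n) A →ₐ[A] _) = aeval (fun i => (X (σ i) : MvPolynomial (Fin n) A)) := by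
          ext i; simp
        rw [hr],
      aeval_torus, restrict_eq]
    let Q : Matrix (Fin n) (Fin n) (MvPolynomial (Fin n) A) := Matrix.of fun i j => if σ i = j then 1 else 0
    have hQ : Qᵀ * Q = 1 := by
      ext1 i j
      rw [Matrix.mul_apply, Finset.sum_eq_single (σ.symm i)]
      · simp [Q, Matrix.one_apply]
      · intro b _ hb
        have : σ b ≠ i := fun h => hb (by rw [← h]; simp)
        simp [Q, this]
      · simp
    apply spinv_apply hf (P := Matrix.fromBlocks Q 0 0 Q)
    · simp [JJ, Matrix.fromBlocks_transpose, Matrix.fromBlocks_multiply, hQ]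
    · have : diagonal (fun i => (X (σ i) : MvPolynomial (Fin n) A)) * Q = Q * diagonal X := by
        ext1 i j
        rw [diagonal_mul, mul_diagonal]
        by_cases h : σ i = j
        · simp [Q, h]
        · simp [Q, h]
      rw [gen_torus, gen_torus]
      simp only [Matrix.fromBlocks_multiply, this, Matrix.mul_zero, Matrix.zero_mul, add_zero, zero_add,
        Matrix.neg_mul, Matrix.mul_neg, neg_zero]
  · intro i
    rw [aeval_torus, restrict_eq]
    let d : Fin n → MvPolynomial (Fin n) A := fun l => if l = i then 0 else 1
    let e : Fin n → MvPolynomial (Fin n) A := fun l => if l = i then 1 else 0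
    have hde : ∀ l, d l * e l = 0 := fun l => by by_cases h : l = i <;> simp [d, e, h]
    have hed : ∀ l, e l * d l = 0 := fun l => by rw [mul_comm, hde]
    have hdd : ∀ l, d l * d l + e l * e l = 1 := fun l => by by_cases h : l = i <;> simp [d, e, h]
    have hD1 : diagonal d * diagonal e = 0 := by
      rw [diagonal_mul_diagonal]; simp [hde]
    have hD2 : diagonal e * diagonal d = 0 := by
      rw [diagonal_mul_diagonal]; simp [hed]
    have hD3 : diagonal d * diagonal d + diagonal e * diagonal e = 1 := by
      rw [diagonal_mul_diagonal, diagonal_mul_diagonal, diagonal_add]; simp [hdd]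
    apply spinv_apply hf (P := Matrix.fromBlocks (diagonal d) (diagonal e) (-diagonal e) (diagonal d))
    · simp only [JJ, Matrix.fromBlocks_transpose, Matrix.fromBlocks_multiply, diagonal_transpose, Matrix.transpose_neg,
        Matrix.mul_zero, Matrix.mul_one, Matrix.mul_neg, Matrix.neg_mul, neg_neg, zero_add, add_zero, hD1, hD2, hD3]
      congr 1
      · simp
      · rw [add_comm, hD3]
      · rw [← neg_add, hD3]
      · simp
    · rw [gen_torus, gen_torus]
      simp only [Matrix.fromBlocks_multiply, Matrix.mul_zero, Matrix.zero_mul, add_zero, zero_add, Matrix.mul_neg,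
        Matrix.neg_mul, neg_neg, neg_zero, add_zero, zero_add, diagonal_mul_diagonal]
      congr 1
      · refine congrArg diagonal (funext fun l => ?_); by_cases h : l = i <;> simp [d, h]
      · rw [diagonal_neg]; refine congrArg diagonal (funext fun l => ?_); by_cases h : l = i <;> simp [e, h]
      · rw [diagonal_neg]; refine congrArg diagonal (funext fun l => ?_); by_cases h : l = i <;> simp [e, h]
      · refine congrArg (fun z => -diagonal z) (funext fun l => ?_); by_cases h : l = i <;> simp [d, h]

lemma part3a {A : Type u} [CommRing A] (n : ℕ) (hn : 1 ≤ n)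
    (H : ∀ p : MvPolynomial (Fin n) A, IsHyperoctahedralInvariant p →
        ∃ f : MvPolynomial (SpCoord n) A, IsSpInvariant f ∧ restrictToTorus f = p)
    (x : A) (hx : 2 * x = 0) : x = 0 := by
  obtain ⟨f, hf, hr⟩ := H (C x * ∑ i, X i) (by
    constructor
    · intro σ
      rw [map_mul, rename_C, map_sum]
      simp only [rename_X]
      rw [Equiv.sum_comp σ (fun i => (X i : MvPolynomial (Fin n) A))]
    · intro i
      rw [map_mul, map_sum, aeval_C, Finset.mul_sum, Finset.mul_sum]
      refine Finset.sum_congr rfl fun l _ => ?_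
      rw [aeval_X]
      split_ifs
      · have : (C x : MvPolynomial (Fin n) A) * X l + C x * X l = 0 := by
          rw [← two_mul, ← mul_assoc, ← map_ofNat C 2, ← map_mul, hx]; simp
        rw [mul_neg]; exact neg_eq_of_add_eq_zero_left this
      · rfl)
  let o : Fin n := ⟨0, hn⟩
  let y : SpCoord n → Polynomial A := fun s => match s with
    | Sum.inl _ => 0
    | Sum.inr (Sum.inl s) => if s = s(o, o) then 1 else 0
    | Sum.inr (Sum.inr s) => if s = s(o, o) then Polynomial.X else 0
  let w : SpCoord n → Polynomial A := fun s => match s with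
    | Sum.inl (i, j) => if i = o ∧ j = o then Polynomial.X else 0
    | Sum.inr (Sum.inl s) => if s = s(o, o) then 1 else 0
    | Sum.inr (Sum.inr s) => 0
  have h1 := contraction hf w (by
    intro i j hij
    have : ¬ (i = o ∧ j = o) := by rintro ⟨rfl, rfl⟩; exact lt_irrefl _ hij
    simp [w, this]) (fun s => rfl)
  rw [hr] at h1
  have h2 : aeval (fun s => Polynomial.expand A 2 (y s)) f = aeval w f := by
    let E : Matrix (Fin n) (Fin n) (Polynomial A) := Matrix.single o o 1
    have hEE : E * E = E := by simp [E]
    have hE : ∀ i j, E i j = if i = o ∧ j = o then 1 else 0 := by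
      intro i j
      simp [E, Matrix.single_apply, eq_comm]
    have e1 : genSpMatrix n (fun s => Polynomial.expand A 2 (y s)) =
        Matrix.fromBlocks 0 E ((Polynomial.X ^ 2 : Polynomial A) • E) 0 := by
      unfold genSpMatrix
      congr 1
      · ext1 i j; simp [y]
      · ext1 i j
        have hs : s(i, j) = s(o, o) ↔ i = o ∧ j = o := by simp
        simp only [y, hE, Matrix.of_apply, Matrix.smul_apply, hs]
        split_ifs <;> simp
      · ext1 i j
        have hs : s(i, j) = s(o, o) ↔ i = o ∧ j = o := by simp
        simp only [y, hE, Matrix.of_apply, Matrix.smul_apply, hs]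
        split_ifs <;> simp
      · ext1 i j; simp [y]
    have e2 : genSpMatrix n w =
        Matrix.fromBlocks ((Polynomial.X : Polynomial A) • E) E 0 (-((Polynomial.X : Polynomial A) • E)) := by
      unfold genSpMatrix
      congr 1
      · ext1 i j; simp [w, hE]
      · ext1 i j; simp [w, hE]
      · ext1 i j; simp [w, hE, and_comm]
    apply spinv_apply hf (P := Matrix.fromBlocks 1 0 ((Polynomial.X : Polynomial A) • E) 1)
    · have : Eᵀ = E := by simp [E]
      simp [JJ, Matrix.fromBlocks_transpose, Matrix.fromBlocks_multiply, this]
    · rw [e1, e2]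
      simp [Matrix.fromBlocks_multiply, hEE, smul_smul, pow_two]
  have h3 : aeval (fun s => Polynomial.expand A 2 (y s)) f = Polynomial.expand A 2 (aeval y f) := by
    rw [← AlgHom.comp_apply, MvPolynomial.comp_aeval]
  rw [← h2, h3] at h1
  have h4 := congrArg (fun p => Polynomial.coeff p 1) h1
  have h5 : aeval (fun i => w (Sum.inl (i, i))) (C x * ∑ i, X i : MvPolynomial (Fin n) A) = Polynomial.C x * Polynomial.X := by
    rw [map_mul, map_sum, aeval_C]
    simp [w]
  rw [h5] at h4
  simp only [Polynomial.coeff_expand two_pos] at h4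
  simpa using h4.symm

lemma coeff_sign {A : Type u} [CommRing A] {n : ℕ} (i : Fin n) (p : MvPolynomial (Fin n) A) (m : Fin n →₀ ℕ) :
    coeff m (aeval (fun l : Fin n =>
      if l = i then -(X l : MvPolynomial (Fin n) A) else X l) p) = (-1) ^ (m i) * coeff m p := by
  induction p using MvPolynomial.induction_on' with
  | add p q hp hq => rw [map_add, coeff_add, coeff_add, hp, hq, mul_add]
  | monomial u a =>
    have : aeval (fun l : Fin n => if l = i then -(X l : MvPolynomial (Fin n) A) else X l) (monomial u a) =
        monomial u ((-1) ^ (u i) * a) := by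
      rw [aeval_monomial, Finsupp.prod_fintype _ _ (by simp)]
      have h1 : ∀ l, (if l = i then -(X l : MvPolynomial (Fin n) A) else X l) ^ u l =
        (if l = i then (-1) ^ u i else 1) * X l ^ u l := by
        intro l
        split_ifs with h
        · subst h; rw [neg_pow]
        · simp
      simp only [h1, Finset.prod_mul_distrib]
      rw [monomial_eq, Finsupp.prod_fintype _ _ (by simp)]
      simp; ring
    rw [this, coeff_monomial, coeff_monomial]
    split_ifs with h
    · rw [h]
    · simp

lemma part3b {A : Type u} [CommRing A] (n : ℕ) (h2 : ∀ x : A, 2 * x = 0 → x = 0)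
    (p : MvPolynomial (Fin n) A) (hp : IsHyperoctahedralInvariant p) :
    ∃ f : MvPolynomial (SpCoord n) A, IsSpInvariant f ∧ restrictToTorus f = p := by
  obtain ⟨hp1, hp2⟩ := hp
  have hev : ∀ m ∈ p.support, ∀ i, 2 ∣ m i := by
    intro m hm i
    by_contra hc
    have h := congrArg (coeff m) (hp2 i)
    have ho : Odd (m i) := by rwa [← Nat.not_even_iff_odd, even_iff_two_dvd]
    rw [coeff_sign, ho.neg_one_pow] at h
    exact (mem_support_iff.1 hm) (h2 _ (by linear_combination -h))
  obtain ⟨p1, hp1e⟩ : ∃ p1, expand 2 p1 = p := by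
    refine ⟨∑ m ∈ p.support, monomial (m.mapRange (fun k => k / 2) (by simp)) (coeff m p), ?_⟩
    rw [map_sum]
    conv_rhs => rw [p.as_sum]
    refine Finset.sum_congr rfl fun m hm => ?_
    have hm2 : 2 • m.mapRange (fun k => k / 2) (by simp) = m := by
      ext i
      simp [Nat.mul_div_cancel' (hev m hm i)]
    rw [expand_monomial, hm2]
  have hsym1 : p1.IsSymmetric := by
    intro σ
    apply expand_injective two_pos
    rw [← rename_expand, hp1e, hp1]
  let ν : MvPolynomial (Fin n) A →ₐ[A] MvPolynomial (Fin n) A := aeval fun i => -X i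
  have hνν : ∀ q, ν (ν q) = q := by
    intro q
    have : ν.comp ν = AlgHom.id A _ := by ext i; simp [ν]
    exact congrArg (fun F => F q) this
  have hsym2 : (ν p1).IsSymmetric := by
    intro σ
    have : (rename σ).comp ν = ν.comp (rename σ : MvPolynomial (Fin n) A →ₐ[A] MvPolynomial (Fin n) A) := by
      ext i; simp [ν]
    have h3 := congrArg (fun F => F p1) this
    simp only [AlgHom.comp_apply] at h3
    rw [h3, hsym1 σ]
  obtain ⟨g, hg⟩ := esymmAlgHom_fin_surjective A (le_refl n) ⟨ν p1, hsym2⟩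
  have hg' : aeval (fun i : Fin n => esymm (Fin n) A (i + 1)) g = ν p1 := by
    rw [← esymmAlgHom_apply, hg]
  let ψ : MvPolynomial (Fin n) A →ₐ[A] MvPolynomial (Fin n) A := (expand 2).comp ν
  let M := genSpMatrix n (fun s => (X s : MvPolynomial (SpCoord n) A))
  refine ⟨aeval (fun i : Fin n => M.charpoly.coeff (2 * (n - 1 - i))) g, ?_, ?_⟩
  all_goals
    have hev : ∀ (R : Type u) [CommRing R] [Algebra A R] (v : SpCoord n → R),
      aeval v (aeval (fun i : Fin n => M.charpoly.coeff (2 * (n - 1 - i))) g) =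
        aeval (fun i : Fin n => (genSpMatrix n v).charpoly.coeff (2 * (n - 1 - i))) g := by
      intro R _ _ v
      rw [← AlgHom.comp_apply, MvPolynomial.comp_aeval]
      congr 2
      funext i
      have : genSpMatrix n v = M.map (aeval v : _ →ₐ[A] R).toRingHom := by
        rw [← gen_map]; simp
      rw [this, Matrix.charpoly_map, Polynomial.coeff_map]; rfl
  · intro R _ _ P hP v w hvw
    rw [hev, hev, hvw]
    have hu : IsUnit P := (Matrix.isUnit_iff_isUnit_det _).2 (sp_isUnit hP)
    obtain ⟨P, rfl⟩ := hu
    rw [Matrix.charpoly_units_conj]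
  · rw [restrict_eq, hev]
    have h5 : ∀ i : Fin n, (genSpMatrix n (torusPt n (X : Fin n → MvPolynomial (Fin n) A))).charpoly.coeff (2 * (n - 1 - i)) =
        ψ (esymm (Fin n) A (i + 1)) := by
      intro i
      have h6 : (genSpMatrix n (torusPt n (X : Fin n → MvPolynomial (Fin n) A))).charpoly =
          NN X * DD X n := by
        rw [gen_torus, Matrix.charpoly_fromBlocks_zero₁₂, diagonal_neg, Matrix.charpoly_diagonal, Matrix.charpoly_diagonal,
          DD_top, NN, mul_comm]
        simp
      have h7 : (∏ i, (Polynomial.X - Polynomial.C (X i ^ 2)) : Polynomial (MvPolynomial (Fin n) A)) =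
          (∏ i : Fin n, (Polynomial.X + Polynomial.C (X i : MvPolynomial (Fin n) A)) : Polynomial _).map ψ.toRingHom := by
        rw [Polynomial.map_prod]
        refine Finset.prod_congr rfl fun i _ => ?_
        simp [ψ, ν, sub_eq_add_neg]
      rw [h6, ← expand_prod, mul_comm 2, Polynomial.coeff_expand_mul two_pos, h7, Polynomial.coeff_map,
        MvPolynomial.prod_X_add_C_coeff _ _ _ (by simp; omega)]
      have : Fintype.card (Fin n) - (n - 1 - i) = i + 1 := by simp; omega
      rw [this]; rfl
    simp only [h5]
    have h8 : aeval (fun i : Fin n => ψ (esymm (Fin n) A (i + 1))) g = ψ (aeval (fun i : Fin n => esymm (Fin n) A (i + 1)) g) := by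
      rw [← AlgHom.comp_apply, MvPolynomial.comp_aeval]
    rw [h8, hg']
    change expand 2 (ν (ν p1)) = p
    rw [hνν, hp1e]


theorem statement15 {A : Type u} [CommRing A] (n : ℕ) (hn : 1 ≤ n) :
    (∀ f g : MvPolynomial (SpCoord n) A, IsSpInvariant f → IsSpInvariant g →
      restrictToTorus f = restrictToTorus g → f = g) ∧
    (∀ f : MvPolynomial (SpCoord n) A, IsSpInvariant f →
      IsHyperoctahedralInvariant (restrictToTorus f)) ∧
    ((∀ p : MvPolynomial (Fin n) A, IsHyperoctahedralInvariant p →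
        ∃ f : MvPolynomial (SpCoord n) A, IsSpInvariant f ∧ restrictToTorus f = p) ↔
      (∀ x : A, 2 * x = 0 → x = 0)) :=
  ⟨part1 n hn, part2 n, part3a n hn, part3b n⟩
end

section
/- Let k be an algebraically closed field and n ≥ 1. Let f, g be polynomials over k in the n² matrix entry variables, and assume both are invariant under conjugation: for every P ∈ GLₙ(k) and every M ∈ Mₙ(k), f(P M P⁻¹) = f(M) and g(P M P⁻¹) = g(M). Let res(f), res(g) ∈ k[X₁, …, Xₙ] denote the restrictions to diagonal matrices, obtained by substituting Xᵢⱼ ↦ 0 for i ≠ j and Xᵢᵢ ↦ Xᵢ. If res(f) divides res(g) in k[X₁, …, Xₙ], then f divides g in the polynomial ring in the matrix entries. -/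
open Matrix MvPolynomial

lemma aux_lift_s16 {k : Type*} [Field k] (n : ℕ) (h : MvPolynomial (Fin n) k) (hs : h.IsSymmetric) :
    ∃ h' : MvPolynomial (Fin n × Fin n) k, ∀ (M : Matrix (Fin n) (Fin n) k) (d : Fin n → k),
      M.charpoly = ∏ i, (Polynomial.X - Polynomial.C (d i)) →
      eval (fun p : Fin n × Fin n => M p.1 p.2) h' = eval d h := by
  obtain ⟨H, hH⟩ := esymmAlgHom_surjective (σ := Fin n) k (n := n) (by simp) ⟨h, hs⟩
  have hH' := congrArg Subtype.val hH
  rw [esymmAlgHom_apply] at hH'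
  simp only at hH'
  refine ⟨aeval (fun i : Fin n => (-1) ^ (i.1 + 1) *
    (Matrix.charpoly.univ k (Fin n)).coeff (n - (i.1 + 1))) H, fun M d hM => ?_⟩
  rw [← hH']
  have e1 : ∀ {τ : Type} (v : τ → k) (w : Fin n → MvPolynomial τ k),
      eval v (aeval w H) = eval (fun i => eval v (w i)) H := by
    intro τ v w
    rw [← MvPolynomial.coe_aeval_eq_eval, ← MvPolynomial.coe_aeval_eq_eval]
    simp only [RingHom.coe_coe]
    rw [← AlgHom.comp_apply, MvPolynomial.comp_aeval]
  rw [e1, e1]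
  congr 2
  funext i
  have h1 : eval (fun p : Fin n × Fin n => M p.1 p.2)
      ((Matrix.charpoly.univ k (Fin n)).coeff (n - (i.1 + 1))) =
      M.charpoly.coeff (n - (i.1 + 1)) :=
    Matrix.charpoly.univ_coeff_eval₂Hom (Fin n) (RingHom.id k) (fun p => M p.1 p.2) _
  have h2 : (∏ i, (Polynomial.X - Polynomial.C (d i))).coeff (n - (i.1 + 1)) =
      (-1) ^ (i.1 + 1) * (Finset.univ.val.map d).esymm (i.1 + 1) := by
    have := Multiset.prod_X_sub_C_coeff (Finset.univ.val.map d) (k := n - (i.1 + 1)) (by simp)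
    simp only [Multiset.map_map, Multiset.card_map, Finset.card_val, Finset.card_univ,
      Fintype.card_fin] at this
    have h3 : n - (n - (i.1 + 1)) = i.1 + 1 := by omega
    rw [h3] at this
    exact this
  rw [map_mul, h1, hM, h2, ← mul_assoc, ← MvPolynomial.aeval_esymm_eq_multiset_esymm (Fin n) k]
  simp [← mul_pow, MvPolynomial.coe_aeval_eq_eval]

lemma aux_diag {k : Type*} [Field k] (n : ℕ) (M : Matrix (Fin n) (Fin n) k) (d : Fin n → k)
    (hM : M.charpoly = ∏ i, (Polynomial.X - Polynomial.C (d i))) (hd : Function.Injective d) :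
    ∃ P : Matrix.GeneralLinearGroup (Fin n) k, M = (P : Matrix (Fin n) (Fin n) k) * diagonal d *
      ((P⁻¹ : Matrix.GeneralLinearGroup (Fin n) k) : Matrix (Fin n) (Fin n) k) := by
  have hv : ∀ i, ∃ v : Fin n → k, Module.End.HasEigenvector (Matrix.toLin' M) (d i) v := by
    intro i
    apply Module.End.HasEigenvalue.exists_hasEigenvector
    rw [Module.End.hasEigenvalue_iff_isRoot_charpoly, Matrix.charpoly_toLin', hM,
      Polynomial.IsRoot, Polynomial.eval_prod]
    exact Finset.prod_eq_zero (Finset.mem_univ i) (by simp)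
  choose v hv using hv
  have hli : LinearIndependent k v :=
    Module.End.eigenvectors_linearIndependent' (Matrix.toLin' M) d hd v hv
  let Q : Matrix (Fin n) (Fin n) k := Matrix.of fun i j => v j i
  have hQ : IsUnit Q := by
    rw [← Matrix.linearIndependent_cols_iff_isUnit]
    exact hli
  obtain ⟨P, hP⟩ := hQ
  refine ⟨P, ?_⟩
  have hMQ : M * Q = Q * diagonal d := by
    ext i j
    have := congrFun (hv j).apply_eq_smul i
    simp only [Matrix.toLin'_apply, Pi.smul_apply, smul_eq_mul] at this
    rw [Matrix.mul_diagonal, mul_comm]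
    exact this
  rw [← hP] at hMQ
  rw [← hMQ, mul_assoc]
  simp

lemma aux_res {k : Type*} [Field k] (n : ℕ) (f : MvPolynomial (Fin n × Fin n) k) (d : Fin n → k) :
    eval d (aeval (fun p : Fin n × Fin n =>
          if p.1 = p.2 then (X p.1 : MvPolynomial (Fin n) k) else 0) f) =
    eval (fun p : Fin n × Fin n => diagonal d p.1 p.2) f := by
  rw [← MvPolynomial.coe_aeval_eq_eval, ← MvPolynomial.coe_aeval_eq_eval]
  simp only [RingHom.coe_coe]
  rw [← AlgHom.comp_apply, MvPolynomial.comp_aeval]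
  congr 2
  funext p
  by_cases h : p.1 = p.2 <;> simp [Matrix.diagonal_apply, h]

lemma aux_symm {k : Type*} [Field k] [Infinite k] (n : ℕ) (f : MvPolynomial (Fin n × Fin n) k)
    (hf : ∀ (P : Matrix.GeneralLinearGroup (Fin n) k) (M : Matrix (Fin n) (Fin n) k),
      eval (fun p : Fin n × Fin n =>
          ((P : Matrix (Fin n) (Fin n) k) * M *
            ((P⁻¹ : Matrix.GeneralLinearGroup (Fin n) k) : Matrix (Fin n) (Fin n) k)) p.1 p.2) f =
        eval (fun p : Fin n × Fin n => M p.1 p.2) f) :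
    (aeval (fun p : Fin n × Fin n =>
          if p.1 = p.2 then (X p.1 : MvPolynomial (Fin n) k) else 0) f).IsSymmetric := by
  intro e
  apply MvPolynomial.funext
  intro d
  rw [MvPolynomial.eval_rename, aux_res, aux_res]
  let P : Matrix.GeneralLinearGroup (Fin n) k :=
    ⟨(Equiv.toPEquiv e).toMatrix, (Equiv.toPEquiv e.symm).toMatrix,
      by rw [← PEquiv.toMatrix_trans, ← Equiv.toPEquiv_trans]; simp,
      by rw [← PEquiv.toMatrix_trans, ← Equiv.toPEquiv_trans]; simp⟩
  rw [← hf P (diagonal d)]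
  congr 2
  funext p
  change _ = (((Equiv.toPEquiv e).toMatrix * diagonal d * (Equiv.toPEquiv e.symm).toMatrix :
    Matrix (Fin n) (Fin n) k)) p.1 p.2
  rw [PEquiv.toMatrix_toPEquiv_mul, PEquiv.mul_toMatrix_toPEquiv]
  simp [Matrix.diagonal_apply]


/-- Let `k` be an algebraically closed field, `n ≥ 1`, and let
`f, g` be polynomials over `k` in the `n²` matrix entry variables, both invariant under
conjugation: `f(P M P⁻¹) = f(M)` and `g(P M P⁻¹) = g(M)` for all `P ∈ GLₙ(k)` and all
`M ∈ Mₙ(k)`.  If the restriction of `f` to diagonal matrices (substituting `Xᵢⱼ ↦ 0`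
for `i ≠ j` and `Xᵢᵢ ↦ Xᵢ`) divides that of `g` in `k[X₁, …, Xₙ]`, then `f` divides `g`. -/
theorem statement16 {k : Type*} [Field k] [IsAlgClosed k] (n : ℕ) (hn : 1 ≤ n)
    (f g : MvPolynomial (Fin n × Fin n) k)
    (hf : ∀ (P : Matrix.GeneralLinearGroup (Fin n) k) (M : Matrix (Fin n) (Fin n) k),
      eval (fun p : Fin n × Fin n =>
          ((P : Matrix (Fin n) (Fin n) k) * M *
            ((P⁻¹ : Matrix.GeneralLinearGroup (Fin n) k) : Matrix (Fin n) (Fin n) k)) p.1 p.2) f =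
        eval (fun p : Fin n × Fin n => M p.1 p.2) f)
    (hg : ∀ (P : Matrix.GeneralLinearGroup (Fin n) k) (M : Matrix (Fin n) (Fin n) k),
      eval (fun p : Fin n × Fin n =>
          ((P : Matrix (Fin n) (Fin n) k) * M *
            ((P⁻¹ : Matrix.GeneralLinearGroup (Fin n) k) : Matrix (Fin n) (Fin n) k)) p.1 p.2) g =
        eval (fun p : Fin n × Fin n => M p.1 p.2) g)
    (hres : (aeval (fun p : Fin n × Fin n =>
          if p.1 = p.2 then (X p.1 : MvPolynomial (Fin n) k) else 0) f) ∣
        aeval (fun p : Fin n × Fin n =>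
          if p.1 = p.2 then (X p.1 : MvPolynomial (Fin n) k) else 0) g) :
    f ∣ g := by
  classical
  haveI : Infinite k := IsAlgClosed.instInfinite
  have hfs := aux_symm n f hf
  have hgs := aux_symm n g hg
  obtain ⟨h, hsym, hh⟩ : ∃ h : MvPolynomial (Fin n) k, h.IsSymmetric ∧
      aeval (fun p : Fin n × Fin n =>
          if p.1 = p.2 then (X p.1 : MvPolynomial (Fin n) k) else 0) g =
      (aeval (fun p : Fin n × Fin n =>
          if p.1 = p.2 then (X p.1 : MvPolynomial (Fin n) k) else 0) f) * h := by
    obtain ⟨h, hh⟩ := hres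
    by_cases h0 : (aeval (fun p : Fin n × Fin n =>
          if p.1 = p.2 then (X p.1 : MvPolynomial (Fin n) k) else 0) f) = 0
    · exact ⟨0, MvPolynomial.IsSymmetric.zero, by rw [hh, h0]; simp⟩
    · refine ⟨h, fun e => ?_, hh⟩
      apply mul_left_cancel₀ h0
      rw [← hh, ← hgs e, hh, map_mul, hfs e]
  obtain ⟨h', hh'⟩ := aux_lift_s16 n h hsym
  let D₀ : MvPolynomial (Fin n) k := ∏ p : Fin n × Fin n, if p.1 = p.2 then 1 else X p.1 - X p.2
  have hD₀ : D₀.IsSymmetric := by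
    intro e
    simp only [D₀, map_prod]
    refine Fintype.prod_equiv (Equiv.prodCongr e e) _ _ fun p => ?_
    by_cases hp : p.1 = p.2 <;> simp [hp]
  have hD₀e : ∀ d : Fin n → k, eval d D₀ ≠ 0 ↔ Function.Injective d := by
    intro d
    simp only [D₀, map_prod, Finset.prod_ne_zero_iff, Finset.mem_univ, true_imp_iff]
    constructor
    · intro H i j hij
      by_contra hne
      exact H (i, j) (by simp [hne, hij])
    · intro H p
      by_cases hp : p.1 = p.2
      · simp [hp]
      · simpa [hp, sub_eq_zero] using fun hd => hp (H hd)
  obtain ⟨D, hD⟩ := aux_lift_s16 n D₀ hD₀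
  have hDne : D ≠ 0 := by
    rintro rfl
    have hinj := (Infinite.natEmbedding k).injective.comp (Fin.val_injective (n := n))
    apply (hD₀e _).2 hinj
    rw [← hD _ _ (Matrix.charpoly_diagonal _)]
    simp
  refine ⟨h', ?_⟩
  rw [← sub_eq_zero]
  refine (mul_eq_zero.1 (?_ : (g - f * h') * D = 0)).resolve_right hDne
  apply MvPolynomial.funext
  intro m
  obtain ⟨M, rfl⟩ : ∃ M : Matrix (Fin n) (Fin n) k, (fun p : Fin n × Fin n => M p.1 p.2) = m :=
    ⟨Matrix.of fun i j => m (i, j), rfl⟩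
  obtain ⟨d, hd⟩ : ∃ d : Fin n → k, M.charpoly = ∏ i, (Polynomial.X - Polynomial.C (d i)) := by
    have hs := IsAlgClosed.splits M.charpoly
    have h1 := hs.eq_prod_roots_of_monic M.charpoly_monic
    have hc : M.charpoly.roots.toList.length = n := by
      rw [Multiset.length_toList, ← hs.natDegree_eq_card_roots, Matrix.charpoly_natDegree_eq_dim]
      simp
    refine ⟨fun i => M.charpoly.roots.toList.get (i.cast hc.symm), ?_⟩
    rw [← Fintype.prod_equiv (finCongr hc)
      (fun i => Polynomial.X - Polynomial.C (M.charpoly.roots.toList.get i)) _ (fun i => by simp)]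
    refine h1.trans (Eq.trans ?_ (Fin.prod_univ_fun_getElem M.charpoly.roots.toList
      (fun x => Polynomial.X - Polynomial.C x)).symm)
    rw [← Multiset.prod_coe, ← Multiset.map_coe, Multiset.coe_toList]
  rw [map_mul, map_zero]
  by_cases hDM : eval (fun p : Fin n × Fin n => M p.1 p.2) D = 0
  · rw [hDM, mul_zero]
  rw [hD M d hd] at hDM
  have hinj := (hD₀e d).1 hDM
  obtain ⟨P, hP⟩ := aux_diag n M d hd hinj
  rw [map_sub, map_mul, hh' M d hd]
  have e := congrArg (eval d) hh
  rw [map_mul, aux_res, aux_res] at e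
  rw [hP, hf, hg, e]
  simp
end

section
/- Let n ≥ 3 and let sl_n(ℤ) be the Lie ring of n×n integer matrices with trace zero, with bracket [X, Y] = XY − YX. Then sl_n(ℤ) equals its own derived algebra: every trace-zero integer matrix is a ℤ-linear combination of brackets [X, Y] with X, Y ∈ sl_n(ℤ). -/
open Matrix

/-- `sl_n(ℤ)`: the additive group of `n × n` integer matrices of trace zero. -/
def slZ (n : ℕ) : AddSubgroup (Matrix (Fin n) (Fin n) ℤ) where
  carrier := {M | M.trace = 0}
  add_mem' := by
    intro a b ha hb
    simp only [Set.mem_setOf_eq] at *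
    rw [Matrix.trace_add, ha, hb, add_zero]
  zero_mem' := by simp
  neg_mem' := by
    intro a ha
    simp only [Set.mem_setOf_eq] at *
    rw [Matrix.trace_neg, ha, neg_zero]

theorem single_mem_slZ {n : ℕ} {i j : Fin n} (h : i ≠ j) (a : ℤ) :
    Matrix.single i j a ∈ slZ n := by
  change (Matrix.single i j a).trace = 0
  exact Matrix.trace_single_eq_of_ne i j a h

/-- For `n ≥ 3`, the Lie ring `sl_n(ℤ)` of trace-zero integer matrices
equals its own derived algebra: the additive subgroup generated by all brackets
`[X, Y] = XY − YX` with `X, Y ∈ sl_n(ℤ)` is all of `sl_n(ℤ)`. -/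
theorem statement17 (n : ℕ) (hn : 3 ≤ n) :
    AddSubgroup.closure {m | ∃ X ∈ slZ n, ∃ Y ∈ slZ n, m = X * Y - Y * X} = slZ n := by
  apply le_antisymm
  · rw [AddSubgroup.closure_le]
    rintro m ⟨X, -, Y, -, rfl⟩
    change (X * Y - Y * X).trace = 0
    rw [Matrix.trace_sub, Matrix.trace_mul_comm, sub_self]
  · intro M hM
    have hM : M.trace = 0 := hM
    let z : Fin n := ⟨0, by omega⟩
    have key : M = ∑ i, ∑ j, (Matrix.single i j (M i j) -
        if i = j then Matrix.single z z (M i j) else 0) := by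
      simp only [Finset.sum_sub_distrib, Finset.sum_ite_eq, Finset.mem_univ, if_true]
      rw [← Matrix.matrix_eq_sum_single]
      have : ∑ i, Matrix.single z z (M i i) = 0 := by
        have h := map_sum (Matrix.singleAddMonoidHom (α := ℤ) z z) (fun i => M i i) Finset.univ
        have h2 : ∑ i, M i i = 0 := hM
        rw [h2, map_zero] at h
        exact h.symm
      rw [this, sub_zero]
    rw [key]
    refine AddSubgroup.sum_mem _ fun i _ => AddSubgroup.sum_mem _ fun j _ => ?_
    generalize M i j = a
    by_cases hij : i = j
    · subst hij
      rw [if_pos rfl]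
      by_cases hz : i = z
      · rw [hz, sub_self]; exact AddSubgroup.zero_mem _
      · apply AddSubgroup.subset_closure
        refine ⟨_, single_mem_slZ hz a, _, single_mem_slZ (Ne.symm hz) 1, ?_⟩
        simp
    · rw [if_neg hij, sub_zero]
      obtain ⟨k, hk⟩ : ∃ k, k ∉ ({i, j} : Finset (Fin n)) := by
        by_contra! h
        have h1 := Finset.card_le_card (fun k _ => h k : Finset.univ ⊆ ({i, j} : Finset (Fin n)))
        have h2 := Finset.card_le_two (a := i) (b := j)
        simp only [Finset.card_univ, Fintype.card_fin] at h1
        omega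
      simp only [Finset.mem_insert, Finset.mem_singleton, not_or] at hk
      apply AddSubgroup.subset_closure
      refine ⟨_, single_mem_slZ (Ne.symm hk.1) a, _, single_mem_slZ hk.2 1, ?_⟩
      rw [Matrix.single_mul_single_same, Matrix.single_mul_single_of_ne (h := Ne.symm hij)]
      simp
end

section
/- Let A be a commutative ring with total quotient ring K (the localization of A at the nonzerodivisors), set K/A = coker(A → K), and let F be a torsion A-module with few relations, i.e. F ⊗_A K = 0 and F is the cokernel of an A-linear map Aⁿ → Aⁿ. Then its Pontryagin dual F† = Hom_A(F, K/A) is also a torsion A-module with few relations: F† ⊗_A K = 0 and F† is the cokernel of an A-linear map Aⁿ → Aⁿ. -/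
theorem aux_det {A : Type*} [CommRing A] (n : ℕ)
    (φ : (Fin n → A) →ₗ[A] (Fin n → A))
    (htors : Subsingleton (TensorProduct A ((Fin n → A) ⧸ LinearMap.range φ)
        (TotalQuotientRing A))) :
    (LinearMap.toMatrix' φ).det ∈ nonZeroDivisors A := by
  have h1 : ∀ i : Fin n, ∃ s : nonZeroDivisors A, ∃ c, φ c = (s : A) • Pi.single i (1 : A) := by
    intro i
    let x : (Fin n → A) ⧸ LinearMap.range φ := Submodule.Quotient.mk (Pi.single i (1 : A))
    have h0 : (TensorProduct.mk A (TotalQuotientRing A) ((Fin n → A) ⧸ LinearMap.range φ) 1) x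
        = 0 := by
      apply (TensorProduct.comm A _ _).injective
      exact Subsingleton.elim _ _
    rw [IsLocalizedModule.eq_zero_iff (nonZeroDivisors A)] at h0
    obtain ⟨s, hs⟩ := h0
    have hs' : (Submodule.Quotient.mk ((s : A) • Pi.single i (1 : A)) :
      (Fin n → A) ⧸ LinearMap.range φ) = 0 := hs
    rw [Submodule.Quotient.mk_eq_zero] at hs'
    obtain ⟨c, hc⟩ := hs'
    exact ⟨s, c, hc⟩
  choose s c hc using h1
  have h2 : LinearMap.toMatrix' φ * (Matrix.of c).transpose
      = Matrix.diagonal (fun i => (s i : A)) := by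
    ext i j
    have := congrFun (hc j) i
    rw [← LinearMap.toMatrix'_mulVec φ] at this
    rw [Matrix.mul_apply]
    simp only [Matrix.mulVec, dotProduct] at this
    simp only [Matrix.transpose_apply, Matrix.of_apply, this, Matrix.diagonal_apply,
      Pi.smul_apply, Pi.single_apply, smul_eq_mul, mul_ite, mul_one, mul_zero]
    split_ifs with h
    · rw [h]
    · rfl
  have h3 := congrArg Matrix.det h2
  rw [Matrix.det_mul, Matrix.det_diagonal] at h3
  have h4 : (∏ i, (s i : A)) ∈ nonZeroDivisors A := prod_mem fun i _ => (s i).2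
  rw [← h3] at h4
  exact (mul_mem_nonZeroDivisors.1 h4).1

theorem aux_mem {A : Type*} [CommRing A] (d : nonZeroDivisors A) (r : A) :
    (Submodule.Quotient.mk (r • IsLocalization.mk' (TotalQuotientRing A) (1 : A) d) : KModA A) = 0
      ↔ (d : A) ∣ r := by
  have hu : algebraMap A (TotalQuotientRing A) d * IsLocalization.mk' (TotalQuotientRing A) (1 : A) d = 1 := by
    rw [IsLocalization.mul_mk'_eq_mk'_of_mul, mul_one, IsLocalization.mk'_self']
  rw [Submodule.Quotient.mk_eq_zero, LinearMap.mem_range]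
  constructor
  · rintro ⟨y, hy⟩
    refine ⟨y, ?_⟩
    apply IsLocalization.injective (TotalQuotientRing A) (le_refl (nonZeroDivisors A))
    rw [Algebra.linearMap_apply, Algebra.smul_def] at hy
    rw [map_mul, hy]
    linear_combination (-algebraMap A (TotalQuotientRing A) r) * hu
  · rintro ⟨y, rfl⟩
    refine ⟨y, ?_⟩
    rw [Algebra.linearMap_apply, Algebra.smul_def, map_mul]
    linear_combination (-algebraMap A (TotalQuotientRing A) y) * hu

/-- Let `A` be a commutative ring with total quotient ring `K`, and
let `F = coker (φ : Aⁿ → Aⁿ)` (`n ≥ 1`) be a torsion module with few relations, i.e.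
`F ⊗[A] K = 0`.  Then the Pontryagin dual `F† = Hom_A(F, K/A)` is also a torsion module
with few relations: `F† ⊗[A] K = 0` and `F†` is (isomorphic to) the cokernel of an
`A`-linear map `Aⁿ → Aⁿ`. -/
theorem statement18 {A : Type*} [CommRing A] (n : ℕ) (hn : 1 ≤ n)
    (φ : (Fin n → A) →ₗ[A] (Fin n → A))
    (htors : Subsingleton (TensorProduct A ((Fin n → A) ⧸ LinearMap.range φ)
        (TotalQuotientRing A))) :
    Subsingleton (TensorProduct A
        ((((Fin n → A) ⧸ LinearMap.range φ)) →ₗ[A] KModA A) (TotalQuotientRing A)) ∧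
    ∃ ψ : (Fin n → A) →ₗ[A] (Fin n → A),
      Nonempty (((((Fin n → A) ⧸ LinearMap.range φ)) →ₗ[A] KModA A) ≃ₗ[A]
        ((Fin n → A) ⧸ LinearMap.range ψ)) := by
  have hd := aux_det n φ htors
  obtain ⟨M, hM⟩ : ∃ M, M = LinearMap.toMatrix' φ := ⟨_, rfl⟩
  have hφ : ∀ x, φ x = M.mulVec x := fun x => by rw [hM, LinearMap.toMatrix'_mulVec]
  rw [← hM] at hd
  obtain ⟨d, hdd⟩ : ∃ d : nonZeroDivisors A, (d : A) = M.det := ⟨⟨_, hd⟩, rfl⟩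
  have hMN : M * M.adjugate = (d : A) • 1 := by rw [hdd, Matrix.mul_adjugate]
  have hNM : M.adjugate * M = (d : A) • 1 := by rw [hdd, Matrix.adjugate_mul]
  generalize M.adjugate = N at hMN hNM
  clear hM hd hdd
  have cancel : ∀ a b : Fin n → A, (d : A) • a = (d : A) • b → a = b := by
    intro a b h
    ext i
    have := congrFun h i
    simp only [Pi.smul_apply, smul_eq_mul] at this
    exact (mul_cancel_left_mem_nonZeroDivisors d.2).1 this
  constructor
  · refine subsingleton_of_forall_eq 0 fun t => ?_
    induction t with
    | zero => rfl
    | add x y hx hy => rw [hx, hy, add_zero]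
    | tmul f k =>
      have hf : (d : A) • f = 0 := by
        apply Submodule.linearMap_qext
        refine LinearMap.ext fun x => ?_
        change (d : A) • f (Submodule.Quotient.mk x) = 0
        rw [← map_smul, ← Submodule.Quotient.mk_smul,
          (Submodule.Quotient.mk_eq_zero _).2, map_zero]
        refine ⟨N.mulVec x, ?_⟩
        rw [hφ, Matrix.mulVec_mulVec, hMN, Matrix.smul_mulVec, Matrix.one_mulVec]
      have hk : k = (d : A) • (IsLocalization.mk' (TotalQuotientRing A) (1 : A) d * k) := by
        rw [Algebra.smul_def, ← mul_assoc, IsLocalization.mul_mk'_eq_mk'_of_mul, mul_one,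
          IsLocalization.mk'_self', one_mul]
      rw [hk, ← TensorProduct.smul_tmul, hf, TensorProduct.zero_tmul]
  · let u := IsLocalization.mk' (TotalQuotientRing A) (1 : A) d
    let q : TotalQuotientRing A →ₗ[A] KModA A := Submodule.mkQ _
    let G : (Fin n → A) →ₗ[A] (Fin n → A) →ₗ[A] KModA A :=
      (Matrix.toLinearMap₂' A N).compr₂ (q ∘ₗ LinearMap.toSpanSingleton A _ u)
    have hG : ∀ a x, G a x = Submodule.Quotient.mk ((a ⬝ᵥ N.mulVec x) • u) := by
      intro a x
      simp only [G, q, LinearMap.compr₂_apply, LinearMap.comp_apply,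
        LinearMap.toSpanSingleton_apply, Matrix.toLinearMap₂'_apply', Submodule.mkQ_apply]
    have hker : ∀ a, LinearMap.range φ ≤ LinearMap.ker (G a) := by
      rintro a _ ⟨y, rfl⟩
      rw [LinearMap.mem_ker, hG, aux_mem, hφ, Matrix.mulVec_mulVec, hNM, Matrix.smul_mulVec,
        Matrix.one_mulVec, dotProduct_smul]
      exact Dvd.intro _ rfl
    let Φ : (Fin n → A) →ₗ[A] (((Fin n → A) ⧸ LinearMap.range φ) →ₗ[A] KModA A) :=
      { toFun := fun a => Submodule.liftQ _ (G a) (hker a)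
        map_add' := fun a b => by
          apply Submodule.linearMap_qext; refine LinearMap.ext fun x => ?_
          simp
        map_smul' := fun r a => by
          apply Submodule.linearMap_qext; refine LinearMap.ext fun x => ?_
          simp }
    have hΦ : ∀ a x, Φ a (Submodule.Quotient.mk x)
      = Submodule.Quotient.mk ((a ⬝ᵥ N.mulVec x) • u) := fun a x => hG a x
    have hsurj : Function.Surjective Φ := by
      intro f
      have h1 : ∀ i : Fin n, ∃ v : TotalQuotientRing A,
          (Submodule.Quotient.mk v : KModA A) = f (Submodule.Quotient.mk (Pi.single i 1)) :=
        fun i => Submodule.Quotient.mk_surjective _ _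
      choose v hv using h1
      have hfx : ∀ x, f (Submodule.Quotient.mk x) = Submodule.Quotient.mk (∑ i, x i • v i) := by
        intro x
        have hl : f ∘ₗ (LinearMap.range φ).mkQ = q ∘ₗ (Fintype.linearCombination A v) := by
          apply LinearMap.pi_ext'
          intro i
          ext1
          simp [q, hv, Fintype.linearCombination_apply_single]
        exact LinearMap.congr_fun hl x
      have h2 : ∀ y : Fin n → A, ∃ a : A, algebraMap A (TotalQuotientRing A) a
          = ∑ i, (M.mulVec y) i • v i := by
        intro y
        have h := hfx (M.mulVec y)
        rw [← hφ, (Submodule.Quotient.mk_eq_zero _).2 (LinearMap.mem_range_self φ y), map_zero] at h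
        obtain ⟨a, ha⟩ := (Submodule.Quotient.mk_eq_zero _).1 h.symm
        exact ⟨a, by rw [← hφ]; exact ha⟩
      choose a ha using fun j : Fin n => h2 (Pi.single j 1)
      have ha' : ∀ y : Fin n → A, algebraMap A (TotalQuotientRing A) (a ⬝ᵥ y)
          = ∑ i, (M.mulVec y) i • v i := by
        intro y
        have hl : (Algebra.linearMap A (TotalQuotientRing A)) ∘ₗ (Fintype.linearCombination A a)
            = (Fintype.linearCombination A v) ∘ₗ M.mulVecLin := by
          apply LinearMap.pi_ext'
          intro i
          ext1
          simpa [Fintype.linearCombination_apply, Pi.single_apply] using ha i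
        have := LinearMap.congr_fun hl y
        simpa [Fintype.linearCombination_apply, dotProduct, mul_comm] using this
      refine ⟨a, ?_⟩
      apply Submodule.linearMap_qext
      refine LinearMap.ext fun x => ?_
      change Φ a (Submodule.Quotient.mk x) = f (Submodule.Quotient.mk x)
      rw [hΦ, hfx, Algebra.smul_def, ha', Matrix.mulVec_mulVec, hMN, Matrix.smul_mulVec,
        Matrix.one_mulVec]
      congr 1
      simp only [Pi.smul_apply, smul_assoc, ← Finset.smul_sum]
      rw [Algebra.smul_def, mul_right_comm, IsLocalization.mul_mk'_eq_mk'_of_mul, mul_one,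
          IsLocalization.mk'_self', one_mul]
    have hkerΦ : LinearMap.ker Φ = LinearMap.range (M.transpose.mulVecLin) := by
      ext a
      rw [LinearMap.mem_ker, LinearMap.mem_range]
      constructor
      · intro h
        have h1 : ∀ j : Fin n, (d : A) ∣ a ⬝ᵥ N.mulVec (Pi.single j 1) := by
          intro j
          rw [← aux_mem, ← hΦ, h, LinearMap.zero_apply]
        choose b hb using h1
        refine ⟨b, ?_⟩
        have h2 : N.transpose.mulVec a = (d : A) • b := by
          ext j
          rw [Pi.smul_apply, smul_eq_mul, ← hb, Matrix.mulVec_transpose,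
            Matrix.dotProduct_mulVec, dotProduct_single, mul_one]
        apply cancel
        rw [Matrix.mulVecLin_apply, ← Matrix.mulVec_smul, ← h2, Matrix.mulVec_mulVec,
          ← Matrix.transpose_mul, hNM, Matrix.transpose_smul, Matrix.transpose_one,
          Matrix.smul_mulVec, Matrix.one_mulVec]
      · rintro ⟨b, rfl⟩
        apply Submodule.linearMap_qext
        refine LinearMap.ext fun x => ?_
        change Φ _ (Submodule.Quotient.mk x) = 0
        rw [hΦ, aux_mem, Matrix.mulVecLin_apply, Matrix.mulVec_transpose,
          ← Matrix.dotProduct_mulVec, Matrix.mulVec_mulVec, hMN, Matrix.smul_mulVec,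
          Matrix.one_mulVec, dotProduct_smul]
        exact Dvd.intro _ rfl
    refine ⟨M.transpose.mulVecLin, ⟨?_⟩⟩
    rw [← hkerΦ]
    exact (Φ.quotKerEquivOfSurjective hsurj).symm
end
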